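/- For every integer d ≥ 3 and every nonnegative u in D^{1,2}(ℝ^d), setting v = u^{(d+2)/(d−2)}, one has S_d ‖v‖_{2d/(d+2)}² − ∫ v (−Δ)^{−1} v dx ≤ C · S_d · ( ∫ v^{2d/(d+2)} dx )^{4/d} · [ S_d ‖∇u‖_2² − ‖u‖_{2^*}² ], where C = ((d+2)/d)(1 − e^{−d/2}). -/

import Mathlib

open MeasureTheory Real

noncomputable section

/-- Surface area of the unit sphere `𝕊^{d-1} ⊆ ℝ^d`. -/
def sphereArea (d : ℕ) : ℝ := 2 * Real.pi ^ ((d : ℝ) / 2) / Real.Gamma ((d : ℝ) / 2)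

/-- Green function of `-Δ` on `ℝ^d`, `d ≥ 3`: `G_d(x) = |x|^{2-d} / ((d-2)|𝕊^{d-1}|)`. -/
def greenKernel (d : ℕ) (x : EuclideanSpace ℝ (Fin d)) : ℝ :=
  ‖x‖ ^ ((2 : ℝ) - d) / (((d : ℝ) - 2) * sphereArea d)

/-- `(−Δ)⁻¹ v`, the convolution of `v` with the Green function of `-Δ` on `ℝ^d`. -/
def invLap (d : ℕ) (v : EuclideanSpace ℝ (Fin d) → ℝ) (x : EuclideanSpace ℝ (Fin d)) : ℝ :=
  ∫ y, greenKernel d (x - y) * v y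

/-- The Aubin–Talenti (optimal Sobolev) constant
`S_d = (1/(π d (d−2))) (Γ(d)/Γ(d/2))^{2/d}`. -/
def sobolevConst (d : ℕ) : ℝ :=
  1 / (Real.pi * d * ((d : ℝ) - 2)) *
    (Real.Gamma (d : ℝ) / Real.Gamma ((d : ℝ) / 2)) ^ ((2 : ℝ) / (d : ℝ))

/-- Membership in `D^{1,2}(ℝ^d)`: a (weakly) differentiable function with
`∇u ∈ L²` and `u ∈ L^{2*}`, `2* = 2d/(d-2)`. -/
def MemD12 (d : ℕ) (u : EuclideanSpace ℝ (Fin d) → ℝ) : Prop :=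
  Differentiable ℝ u ∧
  Integrable (fun x => ‖gradient u x‖ ^ 2) ∧
  Integrable (fun x => |u x| ^ (2 * (d : ℝ) / ((d : ℝ) - 2)))

/-- The `L^p` norm of `u`, written with real exponents: `(∫ |u|^p)^{1/p}`. -/
def lpNorm' {d : ℕ} (p : ℝ) (u : EuclideanSpace ℝ (Fin d) → ℝ) : ℝ :=
  (∫ x, |u x| ^ p) ^ (1 / p)

/-- The Laplacian `Δu = ∑ ∂²u/∂x_i²`. -/
def lap (d : ℕ) (u : EuclideanSpace ℝ (Fin d) → ℝ) (x : EuclideanSpace ℝ (Fin d)) : ℝ :=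
  ∑ i : Fin d, iteratedFDeriv ℝ 2 u x ![EuclideanSpace.single i 1, EuclideanSpace.single i 1]

section oneD
open Set Filter Topology

lemma iic_hasDerivAt {f : ℝ → ℝ} (hf : Continuous f) (hi : Integrable f) (t : ℝ) :
    HasDerivAt (fun t => ∫ x in Iic t, f x) (f t) t := by
  have h1 : (fun t => ∫ x in Iic t, f x) = fun t => (∫ x in Iic (0:ℝ), f x) + ∫ x in (0:ℝ)..t, f x := by
    funext t
    rw [← intervalIntegral.integral_Iic_sub_Iic hi.integrableOn hi.integrableOn]; ring
  rw [h1]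
  exact (intervalIntegral.integral_hasDerivAt_right (hf.intervalIntegrable _ _)
    (hf.stronglyMeasurableAtFilter _ _) hf.continuousAt).const_add _

lemma ii_hasDerivAt {g : ℝ → ℝ} (hg : Continuous g) (a t : ℝ) :
    HasDerivAt (fun t => ∫ x in a..t, g x) (g t) t :=
  (intervalIntegral.integral_hasDerivAt_right (hg.intervalIntegrable _ _)
    (hg.stronglyMeasurableAtFilter _ _) hg.continuousAt)

lemma ii_strictMono {g : ℝ → ℝ} (hg : Continuous g) (hp : ∀ x, 0 < g x) (a : ℝ) :
    StrictMono (fun t => ∫ x in a..t, g x) := by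
  apply strictMono_of_deriv_pos
  intro x
  rw [(ii_hasDerivAt hg a x).deriv]; exact hp x

lemma iic_strictMono {f : ℝ → ℝ} (hf : Continuous f) (hi : Integrable f) (hp : ∀ x, 0 < f x) :
    StrictMono (fun t => ∫ x in Iic t, f x) := by
  apply strictMono_of_deriv_pos
  intro x
  rw [(iic_hasDerivAt hf hi x).deriv]; exact hp x

lemma iic_pos {f : ℝ → ℝ} (hf : Continuous f) (hi : Integrable f) (hp : ∀ x, 0 < f x) (t : ℝ) :
    0 < ∫ x in Iic t, f x :=
  lt_of_le_of_lt (setIntegral_nonneg measurableSet_Iic fun x _ => (hp x).le)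
    (iic_strictMono hf hi hp (sub_one_lt t))

lemma iic_lt {f : ℝ → ℝ} (hf : Continuous f) (hi : Integrable f) (hp : ∀ x, 0 < f x) (t : ℝ) :
    ∫ x in Iic t, f x < ∫ x, f x :=
  lt_of_lt_of_le (iic_strictMono hf hi hp (lt_add_one t))
    (setIntegral_le_integral hi (ae_of_all _ fun x => (hp x).le))

lemma iic_surj {f : ℝ → ℝ} (hf : Continuous f) (hi : Integrable f)
    {m : ℝ} (h0 : 0 < m) (h1 : m < ∫ x, f x) : ∃ t, ∫ x in Iic t, f x = m := by
  have hc : Continuous (fun t => ∫ x in Iic t, f x) :=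
    continuous_iff_continuousAt.2 fun t => (iic_hasDerivAt hf hi t).continuousAt
  have htop : Tendsto (fun t => ∫ x in Iic t, f x) atTop (𝓝 (∫ x, f x)) :=
    (aecover_Iic tendsto_id).integral_tendsto_of_countably_generated hi
  have hbot : Tendsto (fun t => ∫ x in Iic t, f x) atBot (𝓝 0) := by
    have h2 : Tendsto (fun t => ∫ x in Ioi t, f x) atBot (𝓝 (∫ x, f x)) :=
      (aecover_Ioi tendsto_id).integral_tendsto_of_countably_generated hi
    have h3 : (fun t => ∫ x in Iic t, f x) = fun t => (∫ x, f x) - ∫ x in Ioi t, f x := by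
      funext t
      have := integral_add_compl (μ := volume) (measurableSet_Iic (a := t)) hi
      rw [compl_Iic] at this
      linarith
    rw [h3]
    simpa using (tendsto_const_nhds (x := ∫ x, f x)).sub h2
  obtain ⟨a, ha⟩ := (hbot.eventually (gt_mem_nhds h0)).exists
  obtain ⟨b, hb⟩ := (htop.eventually (lt_mem_nhds h1)).exists
  obtain ⟨t, ht⟩ := mem_range_of_exists_le_of_exists_ge hc ⟨a, ha.le⟩ ⟨b, hb.le⟩
  exact ⟨t, ht⟩

/-- existence of one-dimensional monotone transport -/
lemma oneD_exists {f g : ℝ → ℝ} (hf : Continuous f) (hi : Integrable f) (hp : ∀ x, 0 < f x)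
    (hg : Continuous g) {R : ℝ} (hR : 0 < R) (hgp : ∀ x, 0 < g x) (t : ℝ) :
    ∃ s ∈ Ioo (-R) R, ∫ x in (-R)..s, g x =
      (∫ x in (-R)..R, g x) / (∫ x, f x) * ∫ x in Iic t, f x := by
  have hmf : 0 < ∫ x, f x := (iic_pos hf hi hp 0).trans (iic_lt hf hi hp 0)
  have hmg : 0 < ∫ x in (-R)..R, g x := by
    have := ii_strictMono hg hgp (-R) (show -R < R by linarith)
    simpa using this
  have h1 := iic_pos hf hi hp t
  have h2 := iic_lt hf hi hp t
  have hc : ContinuousOn (fun t => ∫ x in (-R)..t, g x) (Icc (-R) R) :=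
    (continuous_iff_continuousAt.2 fun t => (ii_hasDerivAt hg (-R) t).continuousAt).continuousOn
  have := intermediate_value_Ioo (show -R ≤ R by linarith) hc
  have hm : (∫ x in (-R)..R, g x) / (∫ x, f x) * ∫ x in Iic t, f x ∈
      Ioo ((fun t => ∫ x in (-R)..t, g x) (-R)) ((fun t => ∫ x in (-R)..t, g x) R) := by
    simp only [intervalIntegral.integral_same]
    refine ⟨by positivity, ?_⟩
    rw [div_mul_eq_mul_div, div_lt_iff₀ hmf]
    exact mul_lt_mul_of_pos_left h2 hmg
  obtain ⟨s, hs, hs'⟩ := this hm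
  exact ⟨s, hs, hs'⟩

lemma oneD_hasDerivAt {f g : ℝ → ℝ} (hf : Continuous f) (hi : Integrable f)
    (hg : Continuous g) {a ρ : ℝ} (hgp : ∀ x, 0 < g x) {τ : ℝ → ℝ}
    (hτ : ∀ t, ∫ x in a..(τ t), g x = ρ * ∫ x in Iic t, f x) (t : ℝ) :
    HasDerivAt τ (ρ * f t / g (τ t)) t := by
  set H : ℝ → ℝ := fun t => ∫ x in a..t, g x with hH
  have hHm : StrictMono H := ii_strictMono hg hgp a
  have hHc : Continuous H := 
    (continuous_iff_continuousAt.2 fun t => (ii_hasDerivAt hg a t).continuousAt)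
  have hinv : ∀ s, Function.invFun H (H s) = s := Function.leftInverse_invFun hHm.injective
  have hτe : τ = fun t => Function.invFun H (ρ * ∫ x in Iic t, f x) := by
    funext t; rw [← hτ t]; exact (hinv _).symm
  have hrange : ∀ s, ∀ᶠ y in 𝓝 (H s), H (Function.invFun H y) = y := by
    intro s
    have h1 : Ioo (H (s-1)) (H (s+1)) ∈ 𝓝 (H s) :=
      Ioo_mem_nhds (hHm (by linarith)) (hHm (by linarith))
    filter_upwards [h1] with y hy
    have := intermediate_value_Icc (show s - 1 ≤ s + 1 by linarith) hHc.continuousOn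
    obtain ⟨r, _, hr⟩ := this ⟨hy.1.le, hy.2.le⟩
    rw [← hr, hinv]
  have hcont : ∀ s, ContinuousAt (Function.invFun H) (H s) := by
    intro s
    rw [ContinuousAt, hinv, tendsto_order]
    constructor
    · intro c hc
      filter_upwards [hrange s, lt_mem_nhds (hHm hc)] with y hy hy2
      rw [← hHm.lt_iff_lt, hy]; exact hy2
    · intro c hc
      filter_upwards [hrange s, gt_mem_nhds (hHm hc)] with y hy hy2
      rw [← hHm.lt_iff_lt, hy]; exact hy2
  have hd : HasDerivAt (Function.invFun H) (g (τ t))⁻¹ (H (τ t)) := by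
    refine HasDerivAt.of_local_left_inverse (f := H) (hcont _) ?_ (hgp _).ne' (hrange _)
    rw [hinv]; exact ii_hasDerivAt hg a _
  have h3 : HasDerivAt (fun t => ρ * ∫ x in Iic t, f x) (ρ * f t) t :=
    (iic_hasDerivAt hf hi t).const_mul ρ
  have h4 : H (τ t) = ρ * ∫ x in Iic t, f x := hτ t
  rw [h4] at hd
  have := HasDerivAt.comp t hd h3
  have e : ρ * f t / g (τ t) = (g (τ t))⁻¹ * (ρ * f t) := by ring
  rw [e]
  conv => arg 1; rw [hτe]
  exact this

lemma oneD_lintegral {f g : ℝ → ℝ} (hf : Continuous f) (hi : Integrable f) (hp : ∀ x, 0 < f x)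
    (hg : Continuous g) {R : ℝ} (hR : 0 < R) (hgp : ∀ x, 0 < g x) {τ : ℝ → ℝ}
    (hτR : ∀ t, τ t ∈ Ioo (-R) R)
    (hτ : ∀ t, ∫ x in (-R)..(τ t), g x = 
      (∫ x in (-R)..R, g x) / (∫ x, f x) * ∫ x in Iic t, f x) (ψ : ℝ → ENNReal) :
    ∫⁻ s in Ioo (-R) R, ENNReal.ofReal (g s) * ψ s = 
     ∫⁻ t, ENNReal.ofReal ((∫ x in (-R)..R, g x) / (∫ x, f x) * f t) * ψ (τ t) := by
  have hmf : 0 < ∫ x, f x := (iic_pos hf hi hp 0).trans (iic_lt hf hi hp 0)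
  have hmg : 0 < ∫ x in (-R)..R, g x := by
    have := ii_strictMono hg hgp (-R) (show -R < R by linarith)
    simpa using this
  have hHm := ii_strictMono hg hgp (-R)
  set ρ := (∫ x in (-R)..R, g x) / (∫ x, f x) with hρ
  have hρ0 : 0 < ρ := by positivity
  have hinj : Function.Injective τ := by
    intro t t' h
    have h1 := hτ t
    rw [h, hτ t'] at h1
    exact (iic_strictMono hf hi hp).injective (mul_left_cancel₀ hρ0.ne' h1.symm)
  have him : τ '' univ = Ioo (-R) R := by
    ext s
    constructor
    · rintro ⟨t, -, rfl⟩; exact hτR t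
    · intro hs
      have h1 : 0 < ∫ x in (-R)..s, g x := by simpa using hHm hs.1
      have h2 : ∫ x in (-R)..s, g x < ∫ x in (-R)..R, g x := hHm hs.2
      obtain ⟨t, ht⟩ := iic_surj hf hi (m := (∫ x in (-R)..s, g x) / ρ) (by positivity) (by
        rw [div_lt_iff₀ hρ0, hρ, mul_div_cancel₀ _ hmf.ne']; exact h2)
      refine ⟨t, trivial, hHm.injective ?_⟩
      show ∫ x in (-R)..(τ t), g x = ∫ x in (-R)..s, g x
      rw [hτ t, ht]; field_simp
  rw [← him, lintegral_image_eq_lintegral_abs_deriv_mul MeasurableSet.univ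
    (fun t _ => (oneD_hasDerivAt hf hi hg hgp hτ t).hasDerivWithinAt) hinj.injOn]
  rw [setLIntegral_univ]
  congr 1; funext t
  have := hp t; have := hgp (τ t)
  rw [← mul_assoc, ← ENNReal.ofReal_mul (by positivity), abs_of_pos (by positivity)]
  congr 2; field_simp

end oneD

section knothe
open Set Filter Topology

lemma lintegral_insertNth {n : ℕ} (i : Fin (n+1)) {φ : (Fin (n+1) → ℝ) → ENNReal} (hφ : Measurable φ) :
    ∫⁻ x, φ x = ∫⁻ x' : Fin n → ℝ, ∫⁻ t : ℝ, φ (i.insertNth (α := fun _ => ℝ) t x') := by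
  have h := (volume_preserving_piFinSuccAbove (fun _ : Fin (n+1) => ℝ) i).symm
  have h2 := h.lintegral_comp hφ
  rw [← h2, Measure.volume_eq_prod]
  exact lintegral_prod_symm' _ (hφ.comp h.measurable)

lemma lintegral_cons {n : ℕ} {φ : (Fin (n+1) → ℝ) → ENNReal} (hφ : Measurable φ) :
    ∫⁻ x, φ x = ∫⁻ x' : Fin n → ℝ, ∫⁻ t : ℝ, φ (Fin.cons (α := fun _ => ℝ) t x') := by
  rw [lintegral_insertNth 0 hφ]
  simp only [Fin.insertNth_zero']

/-- the open box -/
def kbox (n : ℕ) (R : ℝ) : Set (Fin n → ℝ) := Set.univ.pi fun _ => Ioo (-R) R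

lemma measurableSet_kbox (n : ℕ) (R : ℝ) : MeasurableSet (kbox n R) :=
  MeasurableSet.univ_pi fun _ => measurableSet_Ioo

lemma mem_kbox {n : ℕ} {R : ℝ} {x : Fin n → ℝ} : x ∈ kbox n R ↔ ∀ i, x i ∈ Ioo (-R) R := by
  simp [kbox, Set.mem_pi]

lemma cons_mem_kbox {n : ℕ} {R : ℝ} {t : ℝ} {x : Fin n → ℝ} :
    (Fin.cons t x : Fin (n+1) → ℝ) ∈ kbox (n+1) R ↔ t ∈ Ioo (-R) R ∧ x ∈ kbox n R := by
  simp [mem_kbox, Fin.forall_fin_succ]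

lemma lintegral_kbox_cons {n : ℕ} {R : ℝ} {φ : (Fin (n+1) → ℝ) → ENNReal} (hφ : Measurable φ) :
    ∫⁻ x in kbox (n+1) R, φ x = ∫⁻ x' in kbox n R, ∫⁻ t in Ioo (-R) R, φ (Fin.cons (α := fun _ => ℝ) t x') := by
  rw [← lintegral_indicator (measurableSet_kbox _ _), lintegral_cons (hφ.indicator (measurableSet_kbox _ _)),
    ← lintegral_indicator (measurableSet_kbox _ _)]
  congr 1; funext x'
  by_cases hx : x' ∈ kbox n R
  · rw [indicator_of_mem hx, ← lintegral_indicator measurableSet_Ioo]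
    congr 1; funext t
    by_cases ht : t ∈ Ioo (-R) R
    · rw [indicator_of_mem ht, indicator_of_mem (cons_mem_kbox.2 ⟨ht, hx⟩)]
    · rw [indicator_of_notMem ht, indicator_of_notMem (fun h => ht (cons_mem_kbox.1 h).1)]
  · rw [indicator_of_notMem hx]
    have : ∀ t : ℝ, (kbox (n+1) R).indicator φ (Fin.cons (α := fun _ => ℝ) t x') = 0 := fun t =>
      indicator_of_notMem (fun h => hx (cons_mem_kbox.1 h).2) _
    simp [this]

/-- admissible source densities -/
def SrcOK {n : ℕ} (F : (Fin n → ℝ) → ℝ) : Prop :=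
  Continuous F ∧ (∀ x, 0 < F x) ∧ ∃ C b : ℝ, 0 < b ∧ ∀ x, F x ≤ C * ∏ i, Real.exp (-b * (x i) ^ 2)

lemma continuous_cons1 {n : ℕ} (x' : Fin n → ℝ) :
    Continuous (fun t : ℝ => (Fin.cons t x' : Fin (n+1) → ℝ)) := by
  refine continuous_pi fun i => ?_
  refine Fin.cases ?_ (fun j => ?_) i
  · simp only [Fin.cons_zero]; fun_prop
  · simpa using continuous_const

lemma continuous_cons2 {n : ℕ} :
    Continuous (fun p : (Fin n → ℝ) × ℝ => (Fin.cons p.2 p.1 : Fin (n+1) → ℝ)) := by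
  refine continuous_pi fun i => ?_
  refine Fin.cases ?_ (fun j => ?_) i
  · simpa using continuous_snd
  · simp only [Fin.cons_succ]; fun_prop

lemma continuous_tail' {n : ℕ} : Continuous (fun x : Fin (n+1) → ℝ => (Fin.tail x : Fin n → ℝ)) := by
  refine continuous_pi fun i => ?_
  simp only [Fin.tail]; fun_prop

lemma SrcOK.slice_integrable {n : ℕ} {F : (Fin (n+1) → ℝ) → ℝ} (h : SrcOK F) (x' : Fin n → ℝ) :
    Integrable (fun t : ℝ => F (Fin.cons t x')) := by
  obtain ⟨hc, hp, C, b, hb, hC⟩ := h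
  have h1 : Integrable (fun t : ℝ => Real.exp (-b * t^2) * (C * ∏ i, Real.exp (-b * (x' i) ^ 2))) :=
    (integrable_exp_neg_mul_sq hb).mul_const _
  refine h1.mono' (hc.comp (continuous_cons1 x')).aestronglyMeasurable (ae_of_all _ fun t => ?_)
  rw [Real.norm_of_nonneg (hp _).le]
  refine (hC _).trans (le_of_eq ?_)
  rw [Fin.prod_univ_succ]; simp; ring

lemma SrcOK.marginal {n : ℕ} {F : (Fin (n+1) → ℝ) → ℝ} (h : SrcOK F) :
    SrcOK (fun x' : Fin n → ℝ => ∫ t : ℝ, F (Fin.cons t x')) := by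
  have hs := h.slice_integrable
  obtain ⟨hc, hp, C, b, hb, hC⟩ := h
  have hC0 : 0 ≤ C := by
    have := (hp 0).le.trans (hC 0)
    simpa using this
  have hbd : ∀ (x' : Fin n → ℝ) (t : ℝ), F (Fin.cons t x') ≤
      Real.exp (-b * t^2) * (C * ∏ i, Real.exp (-b * (x' i) ^ 2)) := by
    intro x' t
    refine (hC _).trans (le_of_eq ?_)
    rw [Fin.prod_univ_succ]; simp; ring
  refine ⟨?_, ?_, C * ∫ t : ℝ, Real.exp (-b * t^2), b, hb, ?_⟩
  · refine continuous_of_dominated (bound := fun t => Real.exp (-b * t^2) * C) ?_ ?_ ?_ ?_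
    · intro x'; exact (hc.comp (continuous_cons1 x')).aestronglyMeasurable
    · intro x'; refine ae_of_all _ fun t => ?_
      rw [Real.norm_of_nonneg (hp _).le]
      refine (hbd x' t).trans ?_
      gcongr
      have : ∏ i, Real.exp (-b * (x' i) ^ 2) ≤ 1 := by
        apply Finset.prod_le_one
        · intros; positivity
        · intro i _; rw [Real.exp_le_one_iff]; nlinarith [sq_nonneg (x' i)]
      nlinarith
    · exact (integrable_exp_neg_mul_sq hb).mul_const _
    · refine ae_of_all _ fun t => hc.comp ?_
      exact continuous_cons2.comp (by fun_prop : Continuous fun x' : Fin n → ℝ => (x', t))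
  · intro x'
    have hc1 := hc.comp (continuous_cons1 x')
    exact (iic_pos hc1 (hs x') (fun t => hp _) 0).trans (iic_lt hc1 (hs x') (fun t => hp _) 0)
  · intro x'
    calc _ ≤ ∫ t : ℝ, Real.exp (-b * t^2) * (C * ∏ i, Real.exp (-b * (x' i) ^ 2)) :=
          integral_mono (hs x') ((integrable_exp_neg_mul_sq hb).mul_const _) (hbd x')
      _ = _ := by rw [integral_mul_const]; ring

lemma tgt_marginal_cont {n : ℕ} {G : (Fin (n+1) → ℝ) → ℝ} (h : Continuous G) (R : ℝ) :
    Continuous (fun p : (Fin n → ℝ) × ℝ => ∫ s in (-R)..p.2, G (Fin.cons s p.1)) := by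
  refine intervalIntegral.continuous_parametric_intervalIntegral_of_continuous
    (f := fun (p : (Fin n → ℝ) × ℝ) s => G (Fin.cons s p.1)) ?_ continuous_snd
  exact h.comp (continuous_cons2.comp (by fun_prop : Continuous fun q : ((Fin n → ℝ) × ℝ) × ℝ => (q.1.1, q.2)))

lemma src_marginal_meas {n : ℕ} {F : (Fin (n+1) → ℝ) → ℝ} (h : Continuous F) :
    Measurable (fun x : Fin (n+1) → ℝ => ∫ t in Iic (x 0), F (Fin.cons t (Fin.tail x))) := by
  have e : (fun x : Fin (n+1) → ℝ => ∫ t in Iic (x 0), F (Fin.cons t (Fin.tail x))) =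
    fun x => ∫ t, {p : (Fin (n+1) → ℝ) × ℝ | p.2 ≤ p.1 0}.indicator
      (fun p => F (Fin.cons p.2 (Fin.tail p.1))) (x, t) := by
    funext x
    rw [← integral_indicator measurableSet_Iic]
    rfl
  rw [e]
  refine (StronglyMeasurable.integral_prod_right ?_).measurable
  refine Measurable.stronglyMeasurable ?_
  refine Measurable.indicator ?_ ?_
  · refine (h.comp (continuous_cons2.comp (Continuous.prodMk (continuous_tail'.comp continuous_fst) continuous_snd))).measurable
  · exact measurableSet_le measurable_snd (by fun_prop)

/-- Knothe map. -/
theorem knothe (R : ℝ) (hR : 0 < R) : ∀ (n : ℕ) (F G : (Fin n → ℝ) → ℝ), SrcOK F → Continuous G →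
    (∀ x, 0 < G x) → (∫⁻ x, ENNReal.ofReal (F x) = ∫⁻ x in kbox n R, ENNReal.ofReal (G x)) →
    ∃ T D : (Fin n → ℝ) → (Fin n → ℝ), Measurable T ∧ Measurable D ∧ (∀ x, T x ∈ kbox n R) ∧
      (∀ x i, HasDerivAt (fun t => T (Function.update x i t) i) (D x i) (x i)) ∧
      (∀ x i, 0 < D x i) ∧ (∀ x, (∏ i, D x i) * G (T x) = F x) ∧
      ∀ ψ : (Fin n → ℝ) → ENNReal, Measurable ψ →
        ∫⁻ x, ENNReal.ofReal (F x) * ψ (T x) = ∫⁻ x in kbox n R, ENNReal.ofReal (G x) * ψ x := by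
  intro n
  induction n with
  | zero =>
    intro F G hF hG hGp hm
    have hb : kbox 0 R = univ := by ext x; simp [mem_kbox]
    rw [hb, setLIntegral_univ] at hm
    have hFG : ∀ x, F x = G x := by
      intro x
      have e1 : F = fun _ => F x := by funext y; rw [Subsingleton.elim y x]
      have e2 : G = fun _ => G x := by funext y; rw [Subsingleton.elim y x]
      rw [e1, e2] at hm
      simp only [lintegral_const] at hm
      have hv : (volume : Measure (Fin 0 → ℝ)) univ = 1 := by
        rw [volume_pi, Measure.pi_of_empty]; simp
      rw [hv, mul_one, mul_one, ENNReal.ofReal_eq_ofReal_iff (hF.2.1 _).le (hGp _).le] at hm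
      exact hm
    refine ⟨id, id, measurable_id, measurable_id, ?_, fun x i => i.elim0, fun x i => i.elim0, ?_, ?_⟩
    · intro x; simp [hb]
    · intro x; simp [hFG]
    · intro ψ _; simp [hb, hFG]
  | succ n ih =>
    intro F G hF hG hGp hm
    set F' : (Fin n → ℝ) → ℝ := fun x' => ∫ t : ℝ, F (Fin.cons t x') with hF'
    set G' : (Fin n → ℝ) → ℝ := fun y' => ∫ s in (-R)..R, G (Fin.cons s y') with hG'
    have hF'ok : SrcOK F' := hF.marginal
    have hFc := hF.1
    have hFp := hF.2.1
    have hFs := hF.slice_integrable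
    have hFc1 : ∀ x' : Fin n → ℝ, Continuous (fun t : ℝ => F (Fin.cons t x')) :=
      fun x' => hFc.comp (continuous_cons1 x')
    have hGc1 : ∀ x' : Fin n → ℝ, Continuous (fun t : ℝ => G (Fin.cons t x')) :=
      fun x' => hG.comp (continuous_cons1 x')
    have hG'c : Continuous G' := (tgt_marginal_cont hG R).comp (by fun_prop : Continuous fun y' : Fin n → ℝ => (y', R))
    have hG'p : ∀ y', 0 < G' y' := fun y' => by
      simpa using ii_strictMono (hGc1 y') (fun x => hGp _) (-R) (show -R < R by linarith)
    have hF'p := hF'ok.2.1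
    have hFl : ∀ x', ENNReal.ofReal (F' x') = ∫⁻ t : ℝ, ENNReal.ofReal (F (Fin.cons t x')) := fun x' =>
      ofReal_integral_eq_lintegral_ofReal (hFs x') (ae_of_all _ fun t => (hFp _).le)
    have hGl : ∀ x', ENNReal.ofReal (G' x') = ∫⁻ t in Ioo (-R) R, ENNReal.ofReal (G (Fin.cons t x')) := by
      intro x'
      rw [hG']
      simp only
      rw [intervalIntegral.integral_of_le (by linarith), integral_Ioc_eq_integral_Ioo]
      refine ofReal_integral_eq_lintegral_ofReal ?_ (ae_of_all _ fun t => (hGp _).le)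
      exact ((hGc1 x').integrableOn_Icc (a := -R) (b := R)).mono_set Ioo_subset_Icc_self
    have hm' : ∫⁻ x, ENNReal.ofReal (F' x) = ∫⁻ x in kbox n R, ENNReal.ofReal (G' x) := by
      simp_rw [hFl, hGl]
      rw [← lintegral_cons hFc.measurable.ennreal_ofReal, ← lintegral_kbox_cons hG.measurable.ennreal_ofReal]
      exact hm
    obtain ⟨T', D', hT'm, hD'm, hT'b, hT'd, hD'p, hprod, hpush⟩ := ih F' G' hF'ok hG'c hG'p hm'
    have hex : ∀ x : Fin (n+1) → ℝ, ∃ s ∈ Ioo (-R) R,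
        ∫ r in (-R)..s, G (Fin.cons r (T' (Fin.tail x))) =
          G' (T' (Fin.tail x)) / F' (Fin.tail x) * ∫ r in Iic (x 0), F (Fin.cons r (Fin.tail x)) := by
      intro x
      exact oneD_exists (hFc1 (Fin.tail x)) (hFs _) (fun _ => hFp _) (hGc1 (T' (Fin.tail x))) hR (fun _ => hGp _) (x 0)
    choose τ hτR hτ using hex
    have hτm : Measurable τ := by
      refine measurable_of_Iio fun c => ?_
      have : τ ⁻¹' Iio c = {x | G' (T' (Fin.tail x)) / F' (Fin.tail x) * ∫ r in Iic (x 0), F (Fin.cons r (Fin.tail x))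
          < ∫ r in (-R)..c, G (Fin.cons r (T' (Fin.tail x)))} := by
        ext x
        rw [mem_ofPred_eq, ← hτ x]
        exact ((ii_strictMono (hGc1 (T' (Fin.tail x))) (fun _ => hGp _) (-R)).lt_iff_lt).symm
      rw [this]
      have ht : Measurable (fun x : Fin (n+1) → ℝ => (Fin.tail x : Fin n → ℝ)) := continuous_tail'.measurable
      refine measurableSet_lt ?_ ?_
      · exact ((hG'c.measurable.comp (hT'm.comp ht)).div (hF'ok.1.measurable.comp ht)).mul (src_marginal_meas hFc)
      · exact (tgt_marginal_cont hG R).measurable.comp ((hT'm.comp ht).prodMk measurable_const)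
    have ht : Measurable (fun x : Fin (n+1) → ℝ => (Fin.tail x : Fin n → ℝ)) := continuous_tail'.measurable
    have hTm : Measurable (fun x : Fin (n+1) → ℝ => (Fin.cons (τ x) (T' (Fin.tail x)) : Fin (n+1) → ℝ)) := by
      have := continuous_cons2.measurable.comp ((hT'm.comp ht).prodMk hτm)
      exact this
    refine ⟨fun x => Fin.cons (τ x) (T' (Fin.tail x)), fun x => Fin.cons
      (G' (T' (Fin.tail x)) / F' (Fin.tail x) * F x / G (Fin.cons (τ x) (T' (Fin.tail x)))) (D' (Fin.tail x)), hTm, ?_, ?_, ?_, ?_, ?_, ?_⟩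
    · have h1 : Measurable (fun x : Fin (n+1) → ℝ => G' (T' (Fin.tail x)) / F' (Fin.tail x) * F x / G (Fin.cons (τ x) (T' (Fin.tail x)))) :=
        (((hG'c.measurable.comp (hT'm.comp ht)).div (hF'ok.1.measurable.comp ht)).mul hFc.measurable).div
          (hG.measurable.comp hTm)
      have := continuous_cons2.measurable.comp ((hD'm.comp ht).prodMk h1)
      exact this
    · intro x; exact cons_mem_kbox.2 ⟨hτR x, hT'b _⟩
    · intro x i
      refine Fin.cases ?_ (fun j => ?_) i
      · simp only [Fin.cons_zero, Fin.tail_update_zero]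
        have key := oneD_hasDerivAt (hFc1 (Fin.tail x)) (hFs _) (hGc1 (T' (Fin.tail x))) 
          (a := -R) (ρ := G' (T' (Fin.tail x)) / F' (Fin.tail x)) (fun _ => hGp _)
          (τ := fun t => τ (Function.update x 0 t)) (fun t => by
            have := hτ (Function.update x 0 t)
            rw [Fin.tail_update_zero] at this
            simpa using this) (x 0)
        simpa using key
      · simp only [Fin.cons_succ, Fin.tail_update_succ]
        exact hT'd (Fin.tail x) j
    · intro x i
      refine Fin.cases ?_ (fun j => ?_) i
      · simp only [Fin.cons_zero]
        have := hG'p (T' (Fin.tail x)); have := hF'p (Fin.tail x); have := hFp x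
        have := hGp (Fin.cons (τ x) (T' (Fin.tail x)))
        positivity
      · simp only [Fin.cons_succ]; exact hD'p _ _
    · intro x
      rw [Fin.prod_univ_succ]
      simp only [Fin.cons_zero, Fin.cons_succ]
      have h1 := hprod (Fin.tail x)
      have h2 := (hG'p (T' (Fin.tail x))).ne'; have h3 := (hF'p (Fin.tail x)).ne'
      have h4 := (hGp (Fin.cons (τ x) (T' (Fin.tail x)))).ne'
      rw [← h1] at h3 ⊢
      have h5 : ∏ i, D' (Fin.tail x) i ≠ 0 := left_ne_zero_of_mul h3
      field_simp
    · intro ψ hψ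
      have hFψ : Measurable (fun x : Fin (n+1) → ℝ => ENNReal.ofReal (F x) * ψ (Fin.cons (τ x) (T' (Fin.tail x)))) :=
        hFc.measurable.ennreal_ofReal.mul (hψ.comp hTm)
      have hGψ : Measurable (fun x : Fin (n+1) → ℝ => ENNReal.ofReal (G x) * ψ x) :=
        hG.measurable.ennreal_ofReal.mul hψ
      rw [lintegral_cons hFψ, lintegral_kbox_cons hGψ]
      simp only [Fin.tail_cons]
      set ψ' : (Fin n → ℝ) → ENNReal := fun y' => (ENNReal.ofReal (G' y'))⁻¹ *
        ∫⁻ t in Ioo (-R) R, ENNReal.ofReal (G (Fin.cons t y')) * ψ (Fin.cons t y') with hψ'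
      have hinner : Measurable (fun y' : Fin n → ℝ => ∫⁻ t in Ioo (-R) R, ENNReal.ofReal (G (Fin.cons t y')) * ψ (Fin.cons t y')) := by
        exact Measurable.lintegral_prod_right' (ν := volume.restrict (Ioo (-R) R)) 
          (f := fun p : (Fin n → ℝ) × ℝ => ENNReal.ofReal (G (Fin.cons p.2 p.1)) * ψ (Fin.cons p.2 p.1))
          (hGψ.comp continuous_cons2.measurable)
      have hψ'm : Measurable ψ' := hG'c.measurable.ennreal_ofReal.inv.mul hinner
      have := hpush ψ' hψ'm
      have e1 : ∀ x' : Fin n → ℝ, ∫⁻ t : ℝ, ENNReal.ofReal (F (Fin.cons t x')) * ψ (Fin.cons (τ (Fin.cons t x')) (T' x')) =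
          ENNReal.ofReal (F' x') * ψ' (T' x') := by
        intro x'
        have h1 := oneD_lintegral (hFc1 x') (hFs _) (fun _ => hFp _) (hGc1 (T' x')) hR (fun _ => hGp _)
          (τ := fun t => τ (Fin.cons t x')) (fun t => hτR _) (fun t => by
            have := hτ (Fin.cons t x')
            simpa using this) (fun s => ψ (Fin.cons s (T' x')))
        have h1' := h1
        simp only [hψ']
        rw [h1]
        have hFx := hF'p x'; have hGx := hG'p (T' x')
        have e2 : ∀ t : ℝ, ENNReal.ofReal ((∫ s in (-R)..R, G (Fin.cons s (T' x'))) / (∫ t, F (Fin.cons t x')) * F (Fin.cons t x')) 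
            * ψ (Fin.cons (τ (Fin.cons t x')) (T' x')) =
            ENNReal.ofReal (G' (T' x') / F' x') * (ENNReal.ofReal (F (Fin.cons t x')) * ψ (Fin.cons (τ (Fin.cons t x')) (T' x'))) := by
          intro t
          rw [ENNReal.ofReal_mul (by have := hFx.le; have := hGx.le; exact div_nonneg hGx.le hFx.le), mul_assoc]
        simp_rw [e2]
        rw [lintegral_const_mul' _ _ ENNReal.ofReal_ne_top, ← mul_assoc, ← mul_assoc,
          ← ENNReal.ofReal_inv_of_pos hGx, ← ENNReal.ofReal_mul hFx.le, ← ENNReal.ofReal_mul (by positivity)]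
        have : F' x' * (G' (T' x'))⁻¹ * (G' (T' x') / F' x') = 1 := by field_simp
        rw [this]; simp
      simp_rw [e1]
      rw [this]
      congr 1; funext y'
      simp only [hψ']
      rw [← mul_assoc, ENNReal.mul_inv_cancel (by simpa using hG'p y') ENNReal.ofReal_ne_top, one_mul]

end knothe

section sobcore
open Set Filter Topology

/-- Gaussian bound -/
def GB {n : ℕ} (f : (Fin n → ℝ) → ℝ) : Prop :=
  ∃ C b : ℝ, 0 < b ∧ ∀ x, f x ≤ C * ∏ i, Real.exp (-b * (x i) ^ 2)

lemma GB.rpow {n : ℕ} {f : (Fin n → ℝ) → ℝ} (h : GB f) (h0 : ∀ x, 0 < f x) {p : ℝ} (hp : 0 < p) :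
    GB (fun x => f x ^ p) := by
  obtain ⟨C, b, hb, hC⟩ := h
  have hC0 : 0 ≤ C := by
    have := (h0 0).le.trans (hC 0)
    simpa using this
  refine ⟨C ^ p, b * p, by positivity, fun x => ?_⟩
  refine (Real.rpow_le_rpow (h0 x).le (hC x) hp.le).trans (le_of_eq ?_)
  rw [Real.mul_rpow hC0 (by positivity), ← Real.finsetProd_rpow _ _ (fun i _ => by positivity)]
  congr 1
  refine Finset.prod_congr rfl fun i _ => ?_
  rw [← Real.exp_mul]; congr 1; ring

lemma integrable_prodexp {n : ℕ} {b : ℝ} (hb : 0 < b) :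
    Integrable (fun x : Fin n → ℝ => ∏ i, Real.exp (-b * (x i) ^ 2)) :=
  Integrable.fintype_prod (f := fun _ t => Real.exp (-b * t ^ 2)) (μ := fun _ => volume)
    (fun _ => integrable_exp_neg_mul_sq hb)

lemma GB.integrable {n : ℕ} {f : (Fin n → ℝ) → ℝ} (h : GB f) (h0 : ∀ x, 0 < f x) (hc : Continuous f) :
    Integrable f := by
  obtain ⟨C, b, hb, hC⟩ := h
  refine ((integrable_prodexp hb).const_mul C).mono' hc.aestronglyMeasurable (ae_of_all _ fun x => ?_)
  rw [Real.norm_of_nonneg (h0 x).le]; exact hC x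

lemma lineDeriv_of_update {n : ℕ} {T : (Fin n → ℝ) → ℝ} {i : Fin n} {x : Fin n → ℝ} {D : ℝ}
    (h : HasDerivAt (fun t => T (Function.update x i t)) D (x i)) :
    HasLineDerivAt ℝ T D x (Pi.single i 1) := by
  unfold HasLineDerivAt
  have e : (fun t : ℝ => T (x + t • (Pi.single i 1 : Fin n → ℝ))) =
      fun t => (fun t => T (Function.update x i t)) (x i + t) := by
    funext t
    simp only
    congr 1
    ext j
    by_cases hj : j = i
    · subst hj; simp
    · simp [hj]
  rw [e]
  exact HasDerivAt.comp_const_add (f := fun t => T (Function.update x i t)) (x i) 0 (by simpa using h)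

lemma integrable_mul_D {n : ℕ} {R : ℝ} {g : (Fin n → ℝ) → ℝ} (hg : GB g) (hg0 : ∀ x, 0 < g x)
    (hgc : Continuous g) {T D : (Fin n → ℝ) → ℝ} (hDm : Measurable D)
    (hT : ∀ x, T x ∈ Ioo (-R) R) (i : Fin n)
    (hd : ∀ x, HasDerivAt (fun t => T (Function.update x i t)) (D x) (x i)) (hD : ∀ x, 0 < D x) :
    Integrable (fun x => g x * D x) := by
  obtain _ | m := n
  · exact i.elim0
  obtain ⟨C, b, hb, hC⟩ := hg
  have hC0 : 0 ≤ C := by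
    have := (hg0 0).le.trans (hC 0)
    simpa using this
  have hmeas : Measurable (fun x => g x * D x) := hgc.measurable.mul hDm
  refine ⟨hmeas.aestronglyMeasurable, ?_⟩
  rw [hasFiniteIntegral_iff_ofReal (ae_of_all _ fun x => (mul_pos (hg0 x) (hD x)).le),
    lintegral_insertNth i hmeas.ennreal_ofReal]
  have key : ∀ x' : Fin m → ℝ, ∫⁻ t : ℝ, ENNReal.ofReal (g (i.insertNth (α := fun _ => ℝ) t x') * D (i.insertNth (α := fun _ => ℝ) t x'))
      ≤ ENNReal.ofReal (C * ∏ j, Real.exp (-b * (x' j) ^ 2)) * ENNReal.ofReal (R - (-R)) := by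
    intro x'
    have hder : ∀ t : ℝ, HasDerivAt (fun t : ℝ => T (i.insertNth (α := fun _ => ℝ) t x')) (D (i.insertNth (α := fun _ => ℝ) t x')) t := by
      intro t
      have := hd (i.insertNth (α := fun _ => ℝ) t x')
      simp only [Fin.update_insertNth, Fin.insertNth_apply_same] at this
      exact this
    calc _ ≤ ∫⁻ t : ℝ, ENNReal.ofReal (C * ∏ j, Real.exp (-b * (x' j) ^ 2)) * ENNReal.ofReal (D (i.insertNth (α := fun _ => ℝ) t x')) := by
          refine lintegral_mono fun t => ?_
          rw [← ENNReal.ofReal_mul (by positivity)]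
          refine ENNReal.ofReal_le_ofReal (mul_le_mul_of_nonneg_right ?_ (hD _).le)
          refine (hC _).trans ?_
          rw [Fin.prod_univ_succAbove _ i]
          simp only [Fin.insertNth_apply_same, Fin.insertNth_apply_succAbove]
          refine mul_le_mul_of_nonneg_left ?_ hC0
          have : Real.exp (-b * t ^ 2) ≤ 1 := by
            rw [Real.exp_le_one_iff]; nlinarith [sq_nonneg t]
          have h2 : 0 ≤ ∏ j, Real.exp (-b * (x' j) ^ 2) := by positivity
          nlinarith
      _ = ENNReal.ofReal (C * ∏ j, Real.exp (-b * (x' j) ^ 2)) * ∫⁻ t : ℝ, ENNReal.ofReal (D (i.insertNth (α := fun _ => ℝ) t x')) := by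
          rw [lintegral_const_mul' _ _ ENNReal.ofReal_ne_top]
      _ ≤ _ := by
          gcongr
          have hmono : Monotone (fun t : ℝ => T (i.insertNth (α := fun _ => ℝ) t x')) :=
            monotone_of_deriv_nonneg (fun t => (hder t).differentiableAt) (fun t => by
              rw [(hder t).deriv]; exact (hD _).le)
          have := lintegral_deriv_eq_volume_image_of_monotoneOn MeasurableSet.univ
            (fun t _ => (hder t).hasDerivWithinAt) (hmono.monotoneOn _)
          rw [setLIntegral_univ] at this
          rw [this, ← Real.volume_Ioo]
          apply measure_mono
          rintro _ ⟨t, -, rfl⟩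
          exact hT _
  refine (lintegral_mono key).trans_lt ?_
  rw [lintegral_mul_const' _ _ ENNReal.ofReal_ne_top]
  refine ENNReal.mul_lt_top ?_ ENNReal.ofReal_lt_top
  have := ((integrable_prodexp (n := m) hb).const_mul C).2
  rwa [hasFiniteIntegral_iff_ofReal (ae_of_all _ fun x => by positivity)] at this

lemma kbox_integrable {n : ℕ} {R : ℝ} {g : (Fin n → ℝ) → ℝ} (hg : Continuous g) :
    IntegrableOn g (kbox n R) := by
  have : IntegrableOn g (Set.univ.pi fun _ : Fin n => Icc (-R) R) :=
    hg.continuousOn.integrableOn_compact (isCompact_univ_pi fun _ => isCompact_Icc)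
  exact this.mono_set (Set.pi_mono fun i _ => Ioo_subset_Icc_self)

theorem sob_core {n : ℕ} (hn : 3 ≤ n) {R : ℝ} (hR : 0 < R) {f : (Fin n → ℝ) → ℝ}
    (hfd : Differentiable ℝ f) (hf0 : ∀ x, 0 < f x) (hfb : GB f)
    (hN : ∀ i, Integrable (fun x => (fderiv ℝ f x (Pi.single i 1)) ^ 2))
    {G : (Fin n → ℝ) → ℝ} (hG : Continuous G) (hGp : ∀ x, 0 < G x)
    (hm : ∫ x, f x ^ (2 * (n:ℝ) / (n - 2)) = ∫ x in kbox n R, G x) {l : ℝ} (hl : 0 < l) :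
    ∫ x in kbox n R, G x ^ (1 - 1 / (n:ℝ)) ≤ 
     (2 * ((n:ℝ) - 1) / (n - 2)) / n * (l / 2 * ∫ x, ∑ i, (fderiv ℝ f x (Pi.single i 1)) ^ 2)
      + (2 * ((n:ℝ) - 1) / (n - 2)) / n * (1 / (2 * l) * ∫ x in kbox n R, G x * ∑ i, x i ^ 2) := by
  have hn' : (3:ℝ) ≤ n := by exact_mod_cast hn
  have hn2 : (0:ℝ) < n - 2 := by linarith
  set γ : ℝ := 2 * ((n:ℝ) - 1) / (n - 2) with hγ
  have hγ1 : 1 < γ := by rw [hγ, lt_div_iff₀ hn2]; linarith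
  have hγ0 : 0 < γ := by linarith
  set q : ℝ := 2 * (n:ℝ) / (n - 2) with hq
  have hq0 : 0 < q := by positivity
  have hfc := hfd.continuous
  have hqc : ∀ p : ℝ, Continuous (fun x => f x ^ p) := fun p =>
    hfc.rpow_const fun x => Or.inl (hf0 x).ne'
  have hFint : Integrable (fun x => f x ^ q) :=
    (hfb.rpow hf0 hq0).integrable (fun x => Real.rpow_pos_of_pos (hf0 x) _) (hqc q)
  have hGint : IntegrableOn G (kbox n R) := kbox_integrable hG
  have hF : SrcOK (fun x => f x ^ q) := ⟨hqc q, fun x => Real.rpow_pos_of_pos (hf0 x) _, hfb.rpow hf0 hq0⟩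
  obtain ⟨T, D, hTm, hDm, hTb, hTd, hDp, hprod, hpush⟩ := knothe R hR n _ G hF hG hGp (by
    rw [← ofReal_integral_eq_lintegral_ofReal hFint (ae_of_all _ fun x => (hF.2.1 x).le),
      ← ofReal_integral_eq_lintegral_ofReal hGint (ae_of_all _ fun x => (hGp x).le), hm])
  have hTb' : ∀ x i, T x i ∈ Ioo (-R) R := fun x => mem_kbox.1 (hTb x)
  have hTi : ∀ i, Measurable (fun x => T x i) := fun i => (measurable_pi_apply i).comp hTm
  have hDi : ∀ i, Measurable (fun x => D x i) := fun i => (measurable_pi_apply i).comp hDm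
  have hpm : ∀ i, Measurable (fun x => fderiv ℝ f x (Pi.single i 1)) := fun i =>
    measurable_fderiv_apply_const ℝ f _
  have hγint : Integrable (fun x => f x ^ γ) :=
    (hfb.rpow hf0 hγ0).integrable (fun x => Real.rpow_pos_of_pos (hf0 x) _) (hqc γ)
  have hI1 : ∀ i, Integrable (fun x => f x ^ γ * D x i) := fun i =>
    integrable_mul_D (hfb.rpow hf0 hγ0) (fun x => Real.rpow_pos_of_pos (hf0 x) _) (hqc γ) (T := fun x => T x i)
      (hDi i) (fun x => hTb' x i) i (fun x => hTd x i) (fun x => hDp x i)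
  have hsq : ∀ x, f x ^ (γ - 1) * f x ^ (γ - 1) = f x ^ q := by
    intro x
    rw [← Real.rpow_add (hf0 x)]
    congr 1
    rw [hγ, hq]; field_simp; ring
  have hTsq : ∀ x i, T x i ^ 2 ≤ R ^ 2 := fun x i => sq_le_sq' (hTb' x i).1.le (hTb' x i).2.le
  have hI3 : ∀ i, Integrable (fun x => f x ^ q * T x i ^ 2) := by
    intro i
    refine (hFint.mul_const (R^2)).mono' ((hqc q).measurable.mul ((hTi i).pow_const 2)).aestronglyMeasurable (ae_of_all _ fun x => ?_)
    have := (hF.2.1 x).le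
    simp only at this
    rw [Real.norm_of_nonneg (by positivity)]
    exact mul_le_mul_of_nonneg_left (hTsq x i) this
  have hI2 : ∀ i, Integrable (fun x => (fderiv ℝ f x (Pi.single i 1) * γ * f x ^ (γ - 1)) * T x i) := by
    intro i
    have hb := (((hN i).add (hI3 i)).const_mul γ)
    refine hb.mono' ((((hpm i).mul_const γ).mul (hqc _).measurable).mul (hTi i)).aestronglyMeasurable (ae_of_all _ fun x => ?_)
    simp only [Pi.add_apply]
    rw [← hsq x, Real.norm_eq_abs, abs_le]
    have := sq_nonneg (fderiv ℝ f x (Pi.single i 1) - f x ^ (γ - 1) * T x i)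
    have := sq_nonneg (fderiv ℝ f x (Pi.single i 1) + f x ^ (γ - 1) * T x i)
    constructor <;> nlinarith
  have hI4 : ∀ i, Integrable (fun x => f x ^ γ * T x i) := by
    intro i
    refine (hγint.mul_const R).mono' ((hqc γ).measurable.mul (hTi i)).aestronglyMeasurable (ae_of_all _ fun x => ?_)
    have := Real.rpow_pos_of_pos (hf0 x) γ
    rw [norm_mul, Real.norm_of_nonneg this.le]
    gcongr
    exact abs_le.2 ⟨(hTb' x i).1.le, (hTb' x i).2.le⟩
  have hIBP : ∀ i, ∫ x, f x ^ γ * D x i = - ∫ x, (fderiv ℝ f x (Pi.single i 1) * γ * f x ^ (γ - 1)) * T x i := by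
    intro i
    have := integral_bilinear_hasLineDerivAt_right_eq_neg_left_of_integrable (μ := volume)
      (f := fun x => f x ^ γ) (f' := fun x => fderiv ℝ f x (Pi.single i 1) * γ * f x ^ (γ - 1))
      (g := fun x => T x i) (g' := fun x => D x i) (v := (Pi.single i 1 : Fin n → ℝ))
      (B := ContinuousLinearMap.mul ℝ ℝ) (hI2 i) (hI1 i) (hI4 i)
      (fun x _ => by
        have h1 := (hfd x).hasFDerivAt.hasLineDerivAt (Pi.single i 1)
        unfold HasLineDerivAt at h1 ⊢
        have h2 := h1.rpow_const (p := γ) (Or.inl (by simpa using (hf0 x).ne'))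
        simpa using h2)
      (fun x _ => lineDeriv_of_update (hTd x i))
    simpa using this
  -- AM-GM
  have hamgm : ∀ x, f x ^ q * G (T x) ^ (-(1 / (n:ℝ))) ≤ ∑ i, (1 / (n:ℝ)) * (f x ^ γ * D x i) := by
    intro x
    have h1 := Real.geom_mean_le_arith_mean_weighted Finset.univ (fun _ : Fin n => 1 / (n:ℝ)) (fun i => D x i)
      (fun _ _ => by positivity) (by simp; field_simp) (fun i _ => (hDp x i).le)
    rw [Real.finsetProd_rpow _ _ (fun i _ => (hDp x i).le)] at h1
    have hP : 0 < ∏ i, D x i := Finset.prod_pos fun i _ => hDp x i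
    have hGT : (∏ i, D x i) = f x ^ q * (G (T x))⁻¹ := by
      rw [← hprod x]; field_simp [(hGp (T x)).ne']
    rw [hGT, Real.mul_rpow (hF.2.1 x).le (inv_nonneg.2 (hGp _).le), Real.inv_rpow (hGp _).le, ← Real.rpow_neg (hGp _).le,
      ← Real.rpow_mul (hf0 x).le] at h1
    have h2 : f x ^ q = f x ^ γ * f x ^ (q * (1 / (n:ℝ))) := by
      rw [← Real.rpow_add (hf0 x)]
      congr 1
      rw [hγ, hq]; field_simp; ring
    rw [h2, mul_assoc]
    refine (mul_le_mul_of_nonneg_left h1 (Real.rpow_nonneg (hf0 x).le _)).trans (le_of_eq ?_)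
    rw [Finset.mul_sum]
    exact Finset.sum_congr rfl fun i _ => by ring
  have hstep1 : ∫ x in kbox n R, G x ^ (1 - 1 / (n:ℝ)) ≤ ∫ x, ∑ i, (1 / (n:ℝ)) * (f x ^ γ * D x i) := by
    have hIs : Integrable (fun x => ∑ i, (1 / (n:ℝ)) * (f x ^ γ * D x i)) :=
      integrable_finsetSum _ fun i _ => (hI1 i).const_mul _
    have hpos : ∀ x, 0 ≤ ∑ i, (1 / (n:ℝ)) * (f x ^ γ * D x i) := fun x =>
      Finset.sum_nonneg fun i _ => by
        have := Real.rpow_pos_of_pos (hf0 x) γ; have := hDp x i; positivity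
    have hGc : Continuous fun x => G x ^ (1 - 1 / (n:ℝ)) := hG.rpow_const fun x => Or.inl (hGp x).ne'
    rw [← ENNReal.ofReal_le_ofReal_iff (integral_nonneg hpos),
      ofReal_integral_eq_lintegral_ofReal (kbox_integrable hGc) (ae_of_all _ fun x => Real.rpow_nonneg (hGp x).le _),
      ofReal_integral_eq_lintegral_ofReal hIs (ae_of_all _ hpos)]
    have h1 := hpush (fun y => ENNReal.ofReal (G y ^ (-(1 / (n:ℝ)))))
      (hG.rpow_const fun x => Or.inl (hGp x).ne').measurable.ennreal_ofReal
    calc _ = ∫⁻ x in kbox n R, ENNReal.ofReal (G x) * ENNReal.ofReal (G x ^ (-(1 / (n:ℝ)))) := by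
          congr 1; funext x
          rw [← ENNReal.ofReal_mul (hGp x).le, sub_eq_add_neg, Real.rpow_add (hGp x), Real.rpow_one]
      _ = _ := h1.symm
      _ ≤ _ := by
          refine lintegral_mono fun x => ?_
          simp only
          rw [← ENNReal.ofReal_mul (hF.2.1 x).le]
          exact ENNReal.ofReal_le_ofReal (hamgm x)
  have hpushB : ∫ x, f x ^ q * ∑ i, T x i ^ 2 = ∫ x in kbox n R, G x * ∑ i, x i ^ 2 := by
    have hsm : Measurable (fun y : Fin n → ℝ => ∑ i, y i ^ 2) := by fun_prop
    have h1 := hpush (fun y => ENNReal.ofReal (∑ i, y i ^ 2)) hsm.ennreal_ofReal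
    have hms : AEStronglyMeasurable (fun x => f x ^ q * ∑ i, T x i ^ 2) volume :=
      ((hqc q).measurable.mul (hsm.comp hTm)).aestronglyMeasurable
    rw [integral_eq_lintegral_of_nonneg_ae (ae_of_all _ fun x => mul_nonneg (hF.2.1 x).le (Finset.sum_nonneg fun i _ => sq_nonneg _))
      hms,
      integral_eq_lintegral_of_nonneg_ae (ae_of_all _ fun x => mul_nonneg (hGp x).le (Finset.sum_nonneg fun i _ => sq_nonneg _))
      (hG.measurable.mul hsm).aestronglyMeasurable]
    congr 1
    simp_rw [ENNReal.ofReal_mul (hGp _).le, ENNReal.ofReal_mul (hF.2.1 _).le]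
    exact h1
  refine hstep1.trans ?_
  rw [integral_finsetSum _ fun i _ => (hI1 i).const_mul _]
  simp_rw [integral_const_mul, hIBP, ← integral_neg]
  have hI2n : ∀ i, Integrable (fun x => -(fderiv ℝ f x (Pi.single i 1) * γ * f x ^ (γ - 1) * T x i)) :=
    fun i => (hI2 i).neg
  rw [← Finset.mul_sum, ← integral_finsetSum _ fun i _ => hI2n i, ← hpushB]
  have hNs : Integrable (fun x => ∑ i, (fderiv ℝ f x (Pi.single i 1)) ^ 2) :=
    integrable_finsetSum _ fun i _ => hN i
  have hTs : Integrable (fun x => f x ^ q * ∑ i, T x i ^ 2) := by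
    simp_rw [Finset.mul_sum]
    exact integrable_finsetSum _ fun i _ => hI3 i
  have hmain : ∫ x, ∑ i, -(fderiv ℝ f x (Pi.single i 1) * γ * f x ^ (γ - 1) * T x i) ≤
      γ * ((l / 2 * ∫ x, ∑ i, (fderiv ℝ f x (Pi.single i 1)) ^ 2) +
        (1 / (2 * l) * ∫ x, f x ^ q * ∑ i, T x i ^ 2)) := by
    rw [← integral_const_mul (l / 2), ← integral_const_mul (1 / (2*l)),
      ← integral_add (hNs.const_mul _) (hTs.const_mul _), ← integral_const_mul γ]
    refine integral_mono (integrable_finsetSum _ fun i _ => hI2n i) (((hNs.const_mul _).add (hTs.const_mul _)).const_mul _) fun x => ?_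
    simp only [← hsq x, Finset.mul_sum, Pi.add_apply]
    rw [← Finset.sum_add_distrib, Finset.mul_sum]
    refine Finset.sum_le_sum fun i _ => ?_
    have key := sq_nonneg (l * fderiv ℝ f x (Pi.single i 1) + f x ^ (γ - 1) * T x i)
    have : γ * (l / 2 * (fderiv ℝ f x (Pi.single i 1)) ^ 2 + 1 / (2 * l) * (f x ^ (γ - 1) * f x ^ (γ - 1) * T x i ^ 2))
       - (-(fderiv ℝ f x (Pi.single i 1) * γ * f x ^ (γ - 1) * T x i)) = γ / (2 * l) * (l * fderiv ℝ f x (Pi.single i 1) + f x ^ (γ - 1) * T x i)^2 := by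
      field_simp; ring
    have h3 : 0 ≤ γ / (2 * l) * (l * fderiv ℝ f x (Pi.single i 1) + f x ^ (γ - 1) * T x i)^2 := by positivity
    linarith
  refine (mul_le_mul_of_nonneg_left hmain (by positivity)).trans (le_of_eq ?_)
  ring

end sobcore

section consts
open Set Filter Topology

/-- the weight `1 + |y|^2` -/
def WW {n : ℕ} (y : Fin n → ℝ) : ℝ := 1 + ∑ i, y i ^ 2

lemma WW_pos {n : ℕ} (y : Fin n → ℝ) : 0 < WW y := by
  unfold WW; have := Finset.sum_nonneg fun (i : Fin n) (_ : i ∈ Finset.univ) => sq_nonneg (y i); linarith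

lemma WW_cont {n : ℕ} : Continuous (WW (n := n)) := by unfold WW; fun_prop

lemma WW_rpow_cont {n : ℕ} (s : ℝ) : Continuous (fun y : Fin n → ℝ => WW y ^ s) :=
  WW_cont.rpow_const fun x => Or.inl (WW_pos x).ne'

lemma lintegral_gauss_pi (n : ℕ) {t : ℝ} (ht : 0 < t) :
    ∫⁻ y : Fin n → ℝ, ENNReal.ofReal (Real.exp (-t * ∑ i, y i ^ 2)) = ENNReal.ofReal ((π / t) ^ ((n:ℝ) / 2)) := by
  have h : (fun y : Fin n → ℝ => Real.exp (-t * ∑ i, y i ^ 2)) = fun y => ∏ i, Real.exp (-t * (y i) ^ 2) := by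
    funext y; rw [Finset.mul_sum, Real.exp_sum]
  have h2 : ∫ y : Fin n → ℝ, ∏ i, Real.exp (-t * (y i) ^ 2) = (π / t) ^ ((n:ℝ) / 2) := by
    rw [integral_fintype_prod_volume_eq_pow (fun z : ℝ => Real.exp (-t * z ^ 2)), integral_gaussian, Real.sqrt_eq_rpow, ← Real.rpow_natCast,
      ← Real.rpow_mul (by positivity)]
    congr 1
    simp; ring
  rw [← h2, ← h, ofReal_integral_eq_lintegral_ofReal (h ▸ integrable_prodexp ht) (ae_of_all _ fun y => (Real.exp_pos _).le)]

lemma lintegral_gamma {s r : ℝ} (hs : 0 < s) (hr : 0 < r) :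
    ∫⁻ t in Ioi (0:ℝ), ENNReal.ofReal (t ^ (s - 1) * Real.exp (-(r * t))) = ENNReal.ofReal ((1 / r) ^ s * Real.Gamma s) := by
  rw [← Real.integral_rpow_mul_exp_neg_mul_Ioi hs hr, ofReal_integral_eq_lintegral_ofReal]
  · have := integrableOn_rpow_mul_exp_neg_mul_rpow (p := 1) (s := s - 1) (b := r) (by linarith) one_pos hr
    simpa [IntegrableOn] using this
  · exact (ae_restrict_mem measurableSet_Ioi).mono fun t ht => mul_nonneg (Real.rpow_nonneg (le_of_lt ht) _) (Real.exp_pos _).le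

lemma lintegral_WW (n : ℕ) {s : ℝ} (hs : (n:ℝ) / 2 < s) :
    ∫⁻ y : Fin n → ℝ, ENNReal.ofReal (WW y ^ (-s)) =
      ENNReal.ofReal (π ^ ((n:ℝ) / 2) * Real.Gamma (s - n / 2) / Real.Gamma s) := by
  have hn0 : (0:ℝ) ≤ (n:ℝ) / 2 := by positivity
  have hs0 : 0 < s := by linarith
  have hG := Real.Gamma_pos_of_pos hs0
  have key : ENNReal.ofReal (Real.Gamma s) * ∫⁻ y : Fin n → ℝ, ENNReal.ofReal (WW y ^ (-s)) =
      ENNReal.ofReal (π ^ ((n:ℝ) / 2) * Real.Gamma (s - n / 2)) := by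
    rw [← lintegral_const_mul' _ _ ENNReal.ofReal_ne_top]
    have h1 : ∀ y : Fin n → ℝ, ENNReal.ofReal (Real.Gamma s) * ENNReal.ofReal (WW y ^ (-s)) =
        ∫⁻ t in Ioi (0:ℝ), ENNReal.ofReal (t ^ (s - 1) * Real.exp (-(WW y * t))) := by
      intro y
      rw [lintegral_gamma hs0 (WW_pos y), ← ENNReal.ofReal_mul hG.le, one_div, Real.inv_rpow (WW_pos y).le, Real.rpow_neg (WW_pos y).le, mul_comm]
    simp_rw [h1]
    rw [lintegral_lintegral_swap]
    · have h2 : ∀ t ∈ Ioi (0:ℝ), ∫⁻ y : Fin n → ℝ, ENNReal.ofReal (t ^ (s - 1) * Real.exp (-(WW y * t))) =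
          ENNReal.ofReal (π ^ ((n:ℝ) / 2)) * ENNReal.ofReal (t ^ ((s - n / 2) - 1) * Real.exp (-(1 * t))) := by
        intro t ht
        have ht : 0 < t := ht
        have h3 : ∀ y : Fin n → ℝ, ENNReal.ofReal (t ^ (s - 1) * Real.exp (-(WW y * t))) =
            ENNReal.ofReal (t ^ (s - 1) * Real.exp (-t)) * ENNReal.ofReal (Real.exp (-t * ∑ i, y i ^ 2)) := by
          intro y
          rw [← ENNReal.ofReal_mul (by positivity), mul_assoc, ← Real.exp_add]
          congr 3
          unfold WW; ring
        simp_rw [h3]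
        rw [lintegral_const_mul' _ _ ENNReal.ofReal_ne_top, lintegral_gauss_pi n ht, ← ENNReal.ofReal_mul (by positivity),
          ← ENNReal.ofReal_mul (by positivity)]
        congr 1
        rw [Real.div_rpow pi_pos.le ht.le, show s - (n:ℝ)/2 - 1 = (s - 1) - n/2 by ring, Real.rpow_sub ht (s-1) ((n:ℝ)/2), one_mul]
        ring
      rw [setLIntegral_congr_fun measurableSet_Ioi h2, lintegral_const_mul' _ _ ENNReal.ofReal_ne_top, lintegral_gamma (by linarith) one_pos,
        ← ENNReal.ofReal_mul (by positivity)]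
      simp
    · refine Measurable.aemeasurable ?_
      have : Measurable (WW (n := n)) := WW_cont.measurable
      simp only [Function.uncurry_def]
      fun_prop
  rw [ENNReal.ofReal_div_of_pos hG, ← key, mul_comm, ENNReal.mul_div_cancel_right]
  · simpa using hG
  · exact ENNReal.ofReal_ne_top

lemma integrable_WW (n : ℕ) {s : ℝ} (hs : (n:ℝ) / 2 < s) :
    Integrable (fun y : Fin n → ℝ => WW y ^ (-s)) := by
  refine ⟨(WW_rpow_cont _).aestronglyMeasurable, ?_⟩
  rw [hasFiniteIntegral_iff_ofReal (ae_of_all _ fun y => Real.rpow_nonneg (WW_pos y).le _), lintegral_WW n hs]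
  exact ENNReal.ofReal_lt_top

lemma integral_WW (n : ℕ) {s : ℝ} (hs : (n:ℝ) / 2 < s) :
    ∫ y : Fin n → ℝ, WW y ^ (-s) = π ^ ((n:ℝ) / 2) * Real.Gamma (s - n / 2) / Real.Gamma s := by
  have hn0 : (0:ℝ) ≤ (n:ℝ) / 2 := by positivity
  rw [integral_eq_lintegral_of_nonneg_ae (ae_of_all _ fun y => Real.rpow_nonneg (WW_pos y).le _)
    (WW_rpow_cont _).aestronglyMeasurable, lintegral_WW n hs, ENNReal.toReal_ofReal]
  have := Real.Gamma_pos_of_pos (show 0 < s by linarith)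
  have := Real.Gamma_pos_of_pos (show 0 < s - n/2 by linarith)
  positivity

lemma kbox_tendsto {n : ℕ} {g : (Fin n → ℝ) → ℝ} (hg : Integrable g) :
    Tendsto (fun k : ℕ => ∫ x in kbox n (k + 1), g x) atTop (𝓝 (∫ x, g x)) := by
  have hU : (⋃ k : ℕ, kbox n (k + 1)) = univ := by
    refine eq_univ_of_forall fun x => ?_
    obtain ⟨k, hk⟩ := exists_nat_gt ‖x‖
    refine mem_iUnion.2 ⟨k, mem_kbox.2 fun i => ?_⟩
    have := (abs_le.1 ((Real.norm_eq_abs (x i)) ▸ (norm_le_pi_norm x i)))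
    constructor <;> linarith [this.1, this.2]
  have := tendsto_setIntegral_of_monotone (μ := volume) (f := g) (s := fun k : ℕ => kbox n (k + 1)) (fun k => measurableSet_kbox _ _)
    (fun a b hab x hx => by
      rw [mem_kbox] at hx ⊢
      intro i
      have h := hx i
      have : (a:ℝ) ≤ b := by exact_mod_cast hab
      constructor <;> linarith [h.1, h.2]) hg.integrableOn
  rwa [hU, setIntegral_univ] at this

theorem sob_pi {n : ℕ} (hn : 3 ≤ n) {f : (Fin n → ℝ) → ℝ}
    (hfd : Differentiable ℝ f) (hf0 : ∀ x, 0 < f x) (hfb : GB f)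
    (hN : ∀ i, Integrable (fun x => (fderiv ℝ f x (Pi.single i 1)) ^ 2)) :
    (∫ x, f x ^ (2 * (n:ℝ) / (n - 2))) ^ (((n:ℝ) - 2) / n) ≤
      sobolevConst n * ∫ x, ∑ i, (fderiv ℝ f x (Pi.single i 1)) ^ 2 := by
  have hn' : (3:ℝ) ≤ n := by exact_mod_cast hn
  have hn2 : (0:ℝ) < n - 2 := by linarith
  have hn0 : (0:ℝ) < n := by linarith
  set q : ℝ := 2 * (n:ℝ) / (n - 2) with hq
  have hq0 : 0 < q := by positivity
  set M := ∫ x, f x ^ q with hM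
  set N := ∫ x, ∑ i, (fderiv ℝ f x (Pi.single i 1)) ^ 2 with hNd
  have hqc : Continuous (fun x => f x ^ q) := hfd.continuous.rpow_const fun x => Or.inl (hf0 x).ne'
  have hFint : Integrable (fun x => f x ^ q) :=
    (hfb.rpow hf0 hq0).integrable (fun x => Real.rpow_pos_of_pos (hf0 x) _) hqc
  have hMpos : 0 < M := by
    rw [hM, integral_pos_iff_support_of_nonneg (fun x => Real.rpow_nonneg (hf0 x).le _) hFint]
    have : Function.support (fun x => f x ^ q) = univ := by
      ext x; simp [(Real.rpow_pos_of_pos (hf0 x) q).ne']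
    rw [this]; exact isOpen_univ.measure_pos _ univ_nonempty
  have hZi := integrable_WW n (s := n) (by linarith)
  have hAi := integrable_WW n (s := n - 1) (by linarith)
  set Z := ∫ y : Fin n → ℝ, WW y ^ (-(n:ℝ)) with hZ
  set A := ∫ y : Fin n → ℝ, WW y ^ (-((n:ℝ) - 1)) with hA
  have hZv : Z = π ^ ((n:ℝ) / 2) * Real.Gamma (n / 2) / Real.Gamma n := by
    rw [hZ, integral_WW n (by linarith)]; congr 3; ring
  have hG1 := Real.Gamma_pos_of_pos hn0
  have hG2 := Real.Gamma_pos_of_pos (show 0 < (n:ℝ) / 2 by linarith)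
  have hZp : 0 < Z := by rw [hZv]; positivity
  have hAZ : A = 2 * ((n:ℝ) - 1) / (n - 2) * Z := by
    rw [hA, integral_WW n (by linarith), hZv]
    have e1 : Real.Gamma (n:ℝ) = (n - 1) * Real.Gamma (n - 1) := by
      have := Real.Gamma_add_one (show (n:ℝ) - 1 ≠ 0 by linarith)
      rwa [sub_add_cancel] at this
    have e2 : Real.Gamma ((n:ℝ)/2) = (n / 2 - 1) * Real.Gamma (n / 2 - 1) := by
      have := Real.Gamma_add_one (show (n:ℝ)/2 - 1 ≠ 0 by linarith)
      rwa [sub_add_cancel] at this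
    rw [e1, e2, show (n:ℝ) - 1 - n / 2 = n / 2 - 1 by ring]
    have h3 := Real.Gamma_pos_of_pos (show 0 < (n:ℝ) - 1 by linarith)
    have h4 : (n:ℝ) - 1 ≠ 0 := by linarith
    field_simp
  have hstep : ∀ l : ℝ, 0 < l → (M / Z) ^ (1 - 1 / (n:ℝ)) * A ≤
      (2 * ((n:ℝ) - 1) / (n - 2)) / n * (l / 2 * N)
      + (2 * ((n:ℝ) - 1) / (n - 2)) / n * (1 / (2 * l) * (M / Z * (A - Z))) := by
    intro l hl
    have tZ := kbox_tendsto hZi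
    have tA := kbox_tendsto hAi
    have tc : Tendsto (fun k : ℕ => M / ∫ y in kbox n (k + 1), WW y ^ (-(n:ℝ))) atTop (𝓝 (M / Z)) :=
      tendsto_const_nhds.div tZ hZp.ne'
    refine le_of_tendsto_of_tendsto ((tc.rpow_const (Or.inl (by positivity))).mul tA)
      (tendsto_const_nhds.add (((tc.mul (tA.sub tZ)).const_mul (1 / (2*l))).const_mul _)) ?_
    refine (tZ.eventually (lt_mem_nhds hZp)).mono fun k hk => ?_
    have hk : 0 < ∫ y in kbox n (k + 1), WW y ^ (-(n:ℝ)) := hk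
    set c := M / ∫ y in kbox n (k + 1), WW y ^ (-(n:ℝ)) with hc
    have hcp : 0 < c := by positivity
    have := sob_core hn (R := k + 1) (by positivity) hfd hf0 hfb hN (G := fun y => c * WW y ^ (-(n:ℝ)))
      (continuous_const.mul (WW_rpow_cont _)) (fun x => mul_pos hcp (Real.rpow_pos_of_pos (WW_pos x) _))
      (by rw [integral_const_mul, hc, div_mul_cancel₀ _ hk.ne']) hl
    have e1 : ∀ y : Fin n → ℝ, (c * WW y ^ (-(n:ℝ))) ^ (1 - 1 / (n:ℝ)) = c ^ (1 - 1 / (n:ℝ)) * WW y ^ (-((n:ℝ) - 1)) := by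
      intro y
      rw [Real.mul_rpow hcp.le (Real.rpow_nonneg (WW_pos y).le _), ← Real.rpow_mul (WW_pos y).le]
      congr 2; field_simp
    have e2 : ∀ y : Fin n → ℝ, c * WW y ^ (-(n:ℝ)) * ∑ i, y i ^ 2 = c * (WW y ^ (-((n:ℝ) - 1)) - WW y ^ (-(n:ℝ))) := by
      intro y
      rw [show -((n:ℝ) - 1) = -(n:ℝ) + 1 by ring, Real.rpow_add (WW_pos y), Real.rpow_one]
      rw [show ∑ i, y i ^ 2 = WW y - 1 by unfold WW; ring]; ring
    simp_rw [e1, e2] at this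
    rw [integral_const_mul, integral_const_mul, integral_sub hAi.integrableOn hZi.integrableOn] at this
    exact this
  set c := M / Z with hc
  have hcp : 0 < c := by positivity
  have hcn : 0 < c ^ (1 / (n:ℝ)) := Real.rpow_pos_of_pos hcp _
  have h1 := hstep (c ^ (1 / (n:ℝ)) / (n - 2)) (by positivity)
  rw [Real.rpow_sub hcp, Real.rpow_one, hAZ] at h1
  have hM' : M = c * Z := by rw [hc]; field_simp
  have hSv : sobolevConst n = Z ^ (-(2 / (n:ℝ))) / (n * (n - 2)) := by
    have : Z = π ^ ((n:ℝ) / 2) * (Real.Gamma n / Real.Gamma (n / 2))⁻¹ := by rw [hZv]; field_simp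
    rw [this, Real.mul_rpow (by positivity) (by positivity), ← Real.rpow_mul pi_pos.le, Real.rpow_neg (by positivity), Real.inv_rpow (by positivity),
      inv_inv, show (n:ℝ) / 2 * -(2 / n) = -1 by field_simp, Real.rpow_neg_one]
    unfold sobolevConst
    field_simp
  set w := c ^ (1 / (n:ℝ)) with hw
  have h2 : c * Z * n * (n - 2) ≤ w ^ 2 * N := by
    have h4 : (n:ℝ) - 1 > 0 := by linarith
    have e3 : (2 * ((n:ℝ) - 1) / (n - 2)) / n * (w / (n - 2) / 2 * N)
      + (2 * ((n:ℝ) - 1) / (n - 2)) / n * (1 / (2 * (w / (n - 2))) * (c * (2 * ((n:ℝ) - 1) / (n - 2) * Z - Z)))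
       - c / w * (2 * ((n:ℝ) - 1) / (n - 2) * Z) = ((n - 1) / ((n-2)^2 * n * w)) * (w ^ 2 * N - c * Z * n * (n - 2)) := by
      field_simp; ring
    have h5 : 0 < ((n - 1) / ((n-2)^2 * n * w)) := by positivity
    have h6 : 0 ≤ ((n - 1) / ((n-2)^2 * n * w)) * (w ^ 2 * N - c * Z * n * (n - 2)) := by rw [← e3]; linarith
    have := (mul_nonneg_iff_of_pos_left h5).1 h6
    linarith
  have hw2 : w ^ 2 = M ^ (2 / (n:ℝ)) * Z ^ (-(2 / (n:ℝ))) := by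
    rw [hw, hc, ← Real.rpow_natCast, ← Real.rpow_mul hcp.le, Real.div_rpow hMpos.le hZp.le, Real.rpow_neg hZp.le, div_eq_mul_inv]
    congr 2 <;> push_cast <;> ring_nf
  have e5 : ((n:ℝ) - 2) / n = 1 - 2 / n := by field_simp
  rw [e5, Real.rpow_sub hMpos, Real.rpow_one, hSv, div_le_iff₀ (by positivity), div_mul_eq_mul_div, div_mul_eq_mul_div, le_div_iff₀ (by positivity)]
  rw [← hM', hw2] at h2
  linarith

end consts

section transfer
open Set Filter Topology

lemma norm_gradient_eq {n : ℕ} (w : EuclideanSpace ℝ (Fin n) → ℝ) (x : EuclideanSpace ℝ (Fin n)) :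
    ‖gradient w x‖ = ‖fderiv ℝ w x‖ := by
  unfold gradient; exact LinearIsometryEquiv.norm_map _ _

lemma norm_gradient_sq {n : ℕ} (w : EuclideanSpace ℝ (Fin n) → ℝ) (x : EuclideanSpace ℝ (Fin n)) :
    ‖gradient w x‖ ^ 2 = ∑ i, (fderiv ℝ w x (EuclideanSpace.single i 1)) ^ 2 := by
  rw [EuclideanSpace.norm_sq_eq]
  refine Finset.sum_congr rfl fun i _ => ?_
  have : fderiv ℝ w x (EuclideanSpace.single i 1) = inner ℝ (gradient w x) (EuclideanSpace.single i 1) := by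
    unfold gradient; rw [InnerProductSpace.toDual_symm_apply]
  rw [this, EuclideanSpace.inner_single_right]
  simp

lemma meas_norm_gradient {n : ℕ} (w : EuclideanSpace ℝ (Fin n) → ℝ) :
    Measurable (fun x => ‖gradient w x‖ ^ 2) := by
  simp_rw [norm_gradient_eq]
  exact ((measurable_fderiv ℝ w).norm).pow_const 2

theorem sob_euclid {n : ℕ} (hn : 3 ≤ n) {w : EuclideanSpace ℝ (Fin n) → ℝ}
    (hwd : Differentiable ℝ w) (hw0 : ∀ x, 0 < w x) {C b : ℝ} (hb : 0 < b)
    (hwb : ∀ x, w x ≤ C * Real.exp (-b * ‖x‖ ^ 2))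
    (hN : Integrable (fun x => ‖gradient w x‖ ^ 2)) :
    (∫ x, w x ^ (2 * (n:ℝ) / (n - 2))) ^ (((n:ℝ) - 2) / n) ≤
      sobolevConst n * ∫ x, ‖gradient w x‖ ^ 2 := by
  have hv := (EuclideanSpace.volume_preserving_symm_measurableEquiv_toLp (Fin n))
  set L := (EuclideanSpace.equiv (Fin n) ℝ).symm with hL
  have hLv : MeasurePreserving (fun x : Fin n → ℝ => L x) volume volume := by
    exact hv.symm
  have hLe : MeasurableEmbedding (fun x : Fin n → ℝ => L x) := L.toHomeomorph.measurableEmbedding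
  set f : (Fin n → ℝ) → ℝ := fun x => w (L x) with hf
  have hfd : Differentiable ℝ f := hwd.comp L.differentiable
  have hder : ∀ x i, fderiv ℝ f x (Pi.single i 1) = fderiv ℝ w (L x) (EuclideanSpace.single i 1) := by
    intro x i
    have : HasFDerivAt f ((fderiv ℝ w (L x)).comp (L : (Fin n → ℝ) →L[ℝ] EuclideanSpace ℝ (Fin n))) x :=
      (hwd (L x)).hasFDerivAt.comp x L.hasFDerivAt
    rw [this.fderiv]
    rfl
  have hsum : ∀ x, ∑ i, (fderiv ℝ f x (Pi.single i 1)) ^ 2 = ‖gradient w (L x)‖ ^ 2 := by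
    intro x; simp_rw [norm_gradient_sq, hder]
  have hfN : Integrable (fun x => ‖gradient w (L x)‖ ^ 2) := (hLv.integrable_comp_emb hLe).2 hN
  have := sob_pi hn (f := f) hfd (fun x => hw0 _) ⟨C, b, hb, fun x => by
      refine (hwb _).trans (le_of_eq ?_)
      rw [← Real.exp_sum, EuclideanSpace.norm_sq_eq, Finset.mul_sum]
      simp [L]⟩ (fun i => by
      refine hfN.mono' ((measurable_fderiv_apply_const ℝ f _).pow_const 2).aestronglyMeasurable (ae_of_all _ fun x => ?_)
      rw [← hsum x, Real.norm_of_nonneg (sq_nonneg _)]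
      exact Finset.single_le_sum (f := fun i => (fderiv ℝ f x (Pi.single i 1)) ^ 2) (fun j _ => sq_nonneg _) (Finset.mem_univ i))
  simp_rw [hsum] at this
  rw [hLv.integral_comp hLe (fun y => ‖gradient w y‖ ^ 2)] at this
  have h2 := hLv.integral_comp hLe (fun y => w y ^ (2 * (n:ℝ) / (n - 2)))
  rw [← h2]; exact this

lemma exists_cutoff (n : ℕ) : ∃ (χ : ℕ → EuclideanSpace ℝ (Fin n) → ℝ) (C : ℝ), 0 ≤ C ∧
    (∀ k : ℕ, ContDiff ℝ 1 (χ k)) ∧ (∀ (k : ℕ) x, 0 ≤ χ k x) ∧ (∀ (k : ℕ) x, χ k x ≤ 1) ∧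
    (∀ (k : ℕ) x, ‖x‖ ≤ k + 1 → χ k x = 1) ∧ (∀ (k : ℕ) x, 2 * ((k:ℝ) + 1) ≤ ‖x‖ → χ k x = 0) ∧
    (∀ k : ℕ, HasCompactSupport (χ k)) ∧
    (∀ (k : ℕ) x, ‖fderiv ℝ (χ k) x‖ ≤ C / (k + 1)) ∧
    (∀ (k : ℕ) x, ‖x‖ < k + 1 → fderiv ℝ (χ k) x = 0) ∧ 
    (∀ (k : ℕ) x, 2 * ((k:ℝ) + 1) < ‖x‖ → fderiv ℝ (χ k) x = 0) := by
  let φ : ContDiffBump (0 : EuclideanSpace ℝ (Fin n)) := ⟨1, 2, one_pos, one_lt_two⟩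
  have hφ : ContDiff ℝ 1 (φ : EuclideanSpace ℝ (Fin n) → ℝ) := φ.contDiff
  have hcs : HasCompactSupport (fderiv ℝ (φ : EuclideanSpace ℝ (Fin n) → ℝ)) := φ.hasCompactSupport.fderiv ℝ
  obtain ⟨C, hC⟩ := hcs.exists_bound_of_continuous (hφ.continuous_fderiv one_ne_zero)
  have hk : ∀ k : ℕ, (0:ℝ) < (k:ℝ) + 1 := fun k => by positivity
  have hn : ∀ (k : ℕ) (x : EuclideanSpace ℝ (Fin n)), ‖((k:ℝ) + 1)⁻¹ • x‖ = ‖x‖ / (k + 1) := by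
    intro k x; rw [norm_smul, Real.norm_of_nonneg (by positivity)]; ring
  have h1 : ∀ (k : ℕ) (x : EuclideanSpace ℝ (Fin n)), ‖x‖ ≤ k + 1 → φ (((k:ℝ) + 1)⁻¹ • x) = 1 := by
    intro k x hx
    apply φ.one_of_mem_closedBall
    rw [mem_closedBall_zero_iff, hn]
    exact (div_le_one (hk k)).2 hx
  have h0 : ∀ (k : ℕ) (x : EuclideanSpace ℝ (Fin n)), 2 * ((k:ℝ) + 1) ≤ ‖x‖ → φ (((k:ℝ) + 1)⁻¹ • x) = 0 := by
    intro k x hx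
    apply φ.zero_of_le_dist
    rw [dist_zero_right, hn, le_div_iff₀ (hk k)]
    exact hx
  refine ⟨fun k x => φ (((k:ℝ) + 1)⁻¹ • x), C, (norm_nonneg _).trans (hC 0), fun k => hφ.comp (contDiff_const_smul _), fun k x => φ.nonneg, fun k x => φ.le_one,
    h1, h0, fun k => ?_, fun k x => ?_, fun k x hx => ?_, fun k x hx => ?_⟩
  · exact φ.hasCompactSupport.comp_smul (by positivity)
  · have : HasFDerivAt (fun x => φ (((k:ℝ) + 1)⁻¹ • x)) (((k:ℝ) + 1)⁻¹ • fderiv ℝ φ (((k:ℝ) + 1)⁻¹ • x)) x := by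
      have h := ((hφ.differentiable one_ne_zero) (((k:ℝ) + 1)⁻¹ • x)).hasFDerivAt.comp x ((hasFDerivAt_id x).const_smul ((k:ℝ) + 1)⁻¹)
      have e : (fderiv ℝ (φ : EuclideanSpace ℝ (Fin n) → ℝ) (((k:ℝ) + 1)⁻¹ • x)).comp (((k:ℝ) + 1)⁻¹ • ContinuousLinearMap.id ℝ (EuclideanSpace ℝ (Fin n)))
          = ((k:ℝ) + 1)⁻¹ • fderiv ℝ φ (((k:ℝ) + 1)⁻¹ • x) := by
        ext y; simp
      rw [← e]; exact h
    rw [this.fderiv, norm_smul, Real.norm_of_nonneg (by positivity)]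
    rw [div_eq_inv_mul]
    exact mul_le_mul_of_nonneg_left (hC _) (by positivity)
  · have : (fun x => φ (((k:ℝ) + 1)⁻¹ • x)) =ᶠ[𝓝 x] fun _ => 1 := by
      filter_upwards [(continuous_norm.tendsto x).eventually (gt_mem_nhds hx)] with y hy
      exact h1 k y (le_of_lt hy)
    rw [this.fderiv_eq]; simp
  · have : (fun x => φ (((k:ℝ) + 1)⁻¹ • x)) =ᶠ[𝓝 x] fun _ => 0 := by
      filter_upwards [(continuous_norm.tendsto x).eventually (lt_mem_nhds hx)] with y hy
      exact h0 k y (le_of_lt hy)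
    rw [this.fderiv_eq]; simp

end transfer

section cutoff
open Set Filter Topology

lemma sq_add_le_delta {a b c δ : ℝ} (hδ : 0 < δ) (hc : 0 ≤ c) (h : c ≤ a + b) :
    c ^ 2 ≤ (1 + δ) * a ^ 2 + (1 + 1 / δ) * b ^ 2 := by
  have h1 : c ^ 2 ≤ (a + b) ^ 2 := pow_le_pow_left₀ hc h 2
  have h2 : (1 + δ) * a ^ 2 + (1 + 1 / δ) * b ^ 2 - (a + b) ^ 2 = (δ * a - b) ^ 2 / δ := by
    field_simp; ring
  have : 0 ≤ (δ * a - b) ^ 2 / δ := by positivity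
  linarith

lemma holder_sq {d : ℕ} (hd : 3 ≤ d) {u : EuclideanSpace ℝ (Fin d) → ℝ} (hu0 : ∀ x, 0 ≤ u x) (hc : Continuous u)
    (hX : Integrable (fun x => u x ^ (2 * (d:ℝ) / (d - 2)))) {A : Set (EuclideanSpace ℝ (Fin d))} (hA : MeasurableSet A)
    (hAf : volume A < ⊤) :
    ∫ x in A, u x ^ 2 ≤ (∫ x in A, u x ^ (2 * (d:ℝ) / (d - 2))) ^ (((d:ℝ) - 2) / d) * (volume.real A) ^ (2 / (d:ℝ)) := by
  have hd' : (3:ℝ) ≤ d := by exact_mod_cast hd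
  have hd2 : (0:ℝ) < d - 2 := by linarith
  have hpq : ((d:ℝ) / (d - 2)).HolderConjugate ((d:ℝ) / 2) := by
    rw [Real.holderConjugate_iff]
    constructor
    · rw [lt_div_iff₀ hd2]; linarith
    · field_simp; ring
  have : IsFiniteMeasure (volume.restrict A) := ⟨by simpa using hAf⟩
  have e : ∀ x, (u x ^ 2) ^ ((d:ℝ) / (d - 2)) = u x ^ (2 * (d:ℝ) / (d - 2)) := by
    intro x
    rw [← Real.rpow_natCast, ← Real.rpow_mul (hu0 x)]; congr 1; push_cast; ring
  have := integral_mul_le_Lp_mul_Lq_of_nonneg (μ := volume.restrict A) hpq (f := fun x => u x ^ 2) (g := fun _ => (1:ℝ))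
    (ae_of_all _ fun x => sq_nonneg _) (ae_of_all _ fun x => zero_le_one) (by
      have hsm : AEStronglyMeasurable (fun x => u x ^ 2) (volume.restrict A) := (hc.pow 2).aestronglyMeasurable
      rw [← integrable_norm_rpow_iff hsm]
      · rw [ENNReal.toReal_ofReal (by positivity)]
        simp_rw [Real.norm_of_nonneg (sq_nonneg _), e]
        exact hX.restrict
      · simpa using (by positivity)
      · exact ENNReal.ofReal_ne_top) (memLp_const 1)
  simp only [mul_one, Real.one_rpow, integral_const, e, smul_eq_mul, one_div_div] at this
  simpa using this

theorem cutoff_seq {d : ℕ} (hd : 3 ≤ d) {u : EuclideanSpace ℝ (Fin d) → ℝ} (hu0 : ∀ x, 0 ≤ u x) (hud : Differentiable ℝ u)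
    (hN : Integrable (fun x => ‖gradient u x‖ ^ 2))
    (hX : Integrable (fun x => u x ^ (2 * (d:ℝ) / (d - 2)))) :
    ∃ (χ : ℕ → EuclideanSpace ℝ (Fin d) → ℝ) (a : ℕ → ℝ),
    (∀ k, ContDiff ℝ 1 (χ k)) ∧ (∀ k x, 0 ≤ χ k x) ∧ (∀ k x, χ k x ≤ 1) ∧
    (∀ (k : ℕ) x, ‖x‖ ≤ k + 1 → χ k x = 1) ∧ 
    (∀ k, HasCompactSupport (χ k)) ∧ Tendsto a atTop (𝓝 (∫ x, ‖gradient u x‖ ^ 2)) ∧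
    (∀ k, Integrable (fun x => ‖gradient (fun y => χ k y * u y) x‖ ^ 2)) ∧
    (∀ k, ∫ x, ‖gradient (fun y => χ k y * u y) x‖ ^ 2 ≤ a k) := by
  have hd' : (3:ℝ) ≤ d := by exact_mod_cast hd
  have hd2 : (0:ℝ) < d - 2 := by linarith
  obtain ⟨χ, C, hC0, hχc, hχ0, hχ1, hχe, hχz, hχs, hχd, hχd0, hχd2⟩ := exists_cutoff d
  set A : ℕ → Set (EuclideanSpace ℝ (Fin d)) := fun k => {x | (k:ℝ) + 1 ≤ ‖x‖} ∩ Metric.closedBall 0 (2 * ((k:ℝ) + 1)) with hAdef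
  have hAm : ∀ k, MeasurableSet (A k) := fun k =>
    (measurableSet_le measurable_const measurable_norm).inter measurableSet_closedBall
  have hAc : ∀ k, A k ⊆ Metric.closedBall 0 (2 * ((k:ℝ) + 1)) := fun k => inter_subset_right
  have hAf : ∀ k, volume (A k) < ⊤ := fun k => (measure_mono (hAc k)).trans_lt measure_closedBall_lt_top
  set q := 2 * (d:ℝ) / (d - 2) with hq
  set T : ℕ → ℝ := fun k => ∫ x in {x : EuclideanSpace ℝ (Fin d) | (k:ℝ) + 1 ≤ ‖x‖}, u x ^ q with hT
  have hTlim : Tendsto T atTop (𝓝 0) := by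
    have := tendsto_setIntegral_of_antitone (μ := volume) (f := fun x => u x ^ q) (s := fun k : ℕ => {x : EuclideanSpace ℝ (Fin d) | (k:ℝ) + 1 ≤ ‖x‖})
      (fun k => (measurableSet_le measurable_const measurable_norm)) (fun a b hab x hx => by
        have h1 : (b:ℝ) + 1 ≤ ‖x‖ := hx
        have : (a:ℝ) ≤ b := by exact_mod_cast hab
        show (a:ℝ) + 1 ≤ ‖x‖
        linarith) ⟨0, hX.integrableOn⟩
    have he : (⋂ k : ℕ, {x : EuclideanSpace ℝ (Fin d) | (k:ℝ) + 1 ≤ ‖x‖}) = ∅ := by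
      refine eq_empty_of_forall_notMem fun x hx => ?_
      obtain ⟨k, hk⟩ := exists_nat_gt ‖x‖
      have : (k:ℝ) + 1 ≤ ‖x‖ := mem_iInter.1 hx k
      linarith
    rw [he] at this
    simpa using this
  have hT0 : ∀ k, 0 ≤ T k := fun k => integral_nonneg fun x => Real.rpow_nonneg (hu0 x) _
  set V := volume.real (Metric.closedBall (0 : EuclideanSpace ℝ (Fin d)) 1) with hV
  have hV0 : 0 ≤ V := measureReal_nonneg
  set K := C ^ 2 * (4 * V ^ (2 / (d:ℝ))) with hK
  have hK0 : 0 ≤ K := by positivity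
  set e : ℕ → ℝ := fun k => K * T k ^ (((d:ℝ) - 2) / d) with he
  have he0 : ∀ k, 0 ≤ e k := fun k => mul_nonneg hK0 (Real.rpow_nonneg (hT0 k) _)
  have helim : Tendsto e atTop (𝓝 0) := by
    have h := (hTlim.rpow_const (p := ((d:ℝ) - 2) / d) (Or.inr (by positivity))).const_mul K
    rw [Real.zero_rpow (by positivity), mul_zero] at h
    exact h
  -- w_k
  set w : ℕ → EuclideanSpace ℝ (Fin d) → ℝ := fun k x => u x * ‖fderiv ℝ (χ k) x‖ with hw
  have hwle : ∀ k x, w k x ^ 2 ≤ (A k).indicator (fun x => (C / (k + 1)) ^ 2 * u x ^ 2) x := by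
    intro k x
    by_cases hx : x ∈ A k
    · rw [indicator_of_mem hx, mul_comm, ← mul_pow]
      refine pow_le_pow_left₀ (mul_nonneg (hu0 x) (norm_nonneg _)) ?_ 2
      exact mul_le_mul_of_nonneg_left (hχd k x) (hu0 x)
    · rw [indicator_of_notMem hx]
      have : fderiv ℝ (χ k) x = 0 := by
        by_cases h1 : ‖x‖ < k + 1
        · exact hχd0 k x h1
        · apply hχd2 k x
          by_contra h2
          exact hx ⟨not_lt.1 h1, by simpa using h2⟩
      simp [hw, this]
  have hind : ∀ k, Integrable ((A k).indicator (fun x => (C / (k + 1)) ^ 2 * u x ^ 2)) := by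
    intro k
    rw [integrable_indicator_iff (hAm k)]
    exact ((continuous_const.mul (hud.continuous.pow 2)).continuousOn.integrableOn_compact (isCompact_closedBall _ _)).mono_set (hAc k)
  have hwi : ∀ k, Integrable (fun x => w k x ^ 2) := fun k => by
    refine (hind k).mono' ?_ (ae_of_all _ fun x => ?_)
    · exact ((hud.continuous.measurable.mul (measurable_fderiv ℝ _).norm).pow_const 2).aestronglyMeasurable
    · rw [Real.norm_of_nonneg (sq_nonneg _)]; exact hwle k x
  have hwe : ∀ k, ∫ x, w k x ^ 2 ≤ e k := by
    intro k
    have hk : (0:ℝ) < k + 1 := by positivity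
    refine (integral_mono (hwi k) (hind k) (hwle k)).trans ?_
    rw [integral_indicator (hAm k), integral_const_mul]
    have h1 := holder_sq hd hu0 hud.continuous hX (hAm k) (hAf k)
    have h2 : ∫ x in A k, u x ^ q ≤ T k :=
      setIntegral_mono_set hX.integrableOn (ae_of_all _ fun x => Real.rpow_nonneg (hu0 x) _) (LE.le.eventuallyLE inter_subset_left)
    have h3 : volume.real (A k) ≤ (2 * ((k:ℝ) + 1)) ^ d * V := by
      have : volume.real (A k) ≤ volume.real (Metric.closedBall (0 : EuclideanSpace ℝ (Fin d)) (2 * ((k:ℝ) + 1))) :=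
        measureReal_mono (hAc k) measure_closedBall_lt_top.ne
      refine this.trans (le_of_eq ?_)
      rw [hV, measureReal_def, measureReal_def, Measure.addHaar_closedBall' volume _ (by positivity), ENNReal.toReal_mul, ENNReal.toReal_ofReal (by positivity)]
      simp
    have h4 : (volume.real (A k)) ^ (2 / (d:ℝ)) ≤ (2 * ((k:ℝ) + 1)) ^ 2 * V ^ (2 / (d:ℝ)) := by
      refine (Real.rpow_le_rpow measureReal_nonneg h3 (by positivity)).trans (le_of_eq ?_)
      rw [Real.mul_rpow (by positivity) hV0, ← Real.rpow_natCast, ← Real.rpow_mul (by positivity), show (d:ℝ) * (2 / d) = (2:ℕ) by push_cast; field_simp,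
        Real.rpow_natCast]
    have h5 : ∫ x in A k, u x ^ 2 ≤ T k ^ (((d:ℝ) - 2) / d) * ((2 * ((k:ℝ) + 1)) ^ 2 * V ^ (2 / (d:ℝ))) := by
      refine h1.trans (mul_le_mul ?_ h4 (by positivity) (Real.rpow_nonneg (hT0 k) _))
      exact Real.rpow_le_rpow (integral_nonneg fun x => Real.rpow_nonneg (hu0 x) _) h2 (by positivity)
    refine (mul_le_mul_of_nonneg_left h5 (sq_nonneg _)).trans (le_of_eq ?_)
    rw [he, hK]; field_simp; ring
  set N := ∫ x, ‖gradient u x‖ ^ 2 with hNd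
  have hN0 : 0 ≤ N := integral_nonneg fun x => sq_nonneg _
  have hgle : ∀ k x, ‖gradient (fun y => χ k y * u y) x‖ ≤ ‖gradient u x‖ + w k x := by
    intro k x
    rw [norm_gradient_eq, norm_gradient_eq]
    have := ((hχc k).differentiable one_ne_zero x).hasFDerivAt.mul (hud x).hasFDerivAt
    have h2 : fderiv ℝ (fun y => χ k y * u y) x = χ k x • fderiv ℝ u x + u x • fderiv ℝ (χ k) x := this.fderiv
    rw [h2]
    refine (norm_add_le _ _).trans ?_
    rw [norm_smul, norm_smul, Real.norm_of_nonneg (hχ0 k x), Real.norm_of_nonneg (hu0 x)]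
    have := mul_le_mul_of_nonneg_right (hχ1 k x) (norm_nonneg (fderiv ℝ u x))
    simp only [hw]
    linarith
  have hgi : ∀ k, Integrable (fun x => ‖gradient (fun y => χ k y * u y) x‖ ^ 2) := by
    intro k
    refine ((hN.const_mul (1 + 1)).add ((hwi k).const_mul (1 + 1 / 1))).mono' (meas_norm_gradient _).aestronglyMeasurable (ae_of_all _ fun x => ?_)
    rw [Real.norm_of_nonneg (sq_nonneg _)]
    exact sq_add_le_delta one_pos (norm_nonneg _) (hgle k x)
  refine ⟨χ, fun k => (1 + (√(e k) + 1 / (k + 1))) * N + (e k + √(e k)), hχc, hχ0, hχ1, hχe, hχs, ?_, hgi, fun k => ?_⟩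
  · have h1 : Tendsto (fun k => √(e k)) atTop (𝓝 0) := by
      simpa [Function.comp_def] using (Real.continuous_sqrt.tendsto 0).comp helim
    have h2 := tendsto_one_div_add_atTop_nhds_zero_nat (𝕜 := ℝ)
    have := (((h1.add h2).const_add 1).mul_const N).add (helim.add h1)
    simpa using this
  · have hk : (0:ℝ) < 1 / ((k:ℝ) + 1) := by positivity
    set δ := √(e k) + 1 / ((k:ℝ) + 1) with hδ
    have hs0 := Real.sqrt_nonneg (e k)
    have hδ0 : 0 < δ := by positivity
    have h1 : ∫ x, ‖gradient (fun y => χ k y * u y) x‖ ^ 2 ≤ (1 + δ) * N + (1 + 1 / δ) * ∫ x, w k x ^ 2 := by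
      rw [← integral_const_mul, ← integral_const_mul, ← integral_add (hN.const_mul _) ((hwi k).const_mul _)]
      exact integral_mono (hgi k) ((hN.const_mul _).add ((hwi k).const_mul _)) fun x => sq_add_le_delta hδ0 (norm_nonneg _) (hgle k x)
    have h2 : (1 + 1 / δ) * ∫ x, w k x ^ 2 ≤ (1 + 1 / δ) * e k := mul_le_mul_of_nonneg_left (hwe k) (by positivity)
    have h3 : 1 / δ * e k ≤ √(e k) := by
      rw [one_div, inv_mul_le_iff₀ hδ0]
      nlinarith [Real.mul_self_sqrt (he0 k), mul_nonneg hs0 hk.le]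
    linarith

lemma norm_fderiv_gauss {d : ℕ} (x : EuclideanSpace ℝ (Fin d)) :
    DifferentiableAt ℝ (fun y : EuclideanSpace ℝ (Fin d) => Real.exp (-1 * ‖y‖ ^ 2)) x ∧
    ‖fderiv ℝ (fun y : EuclideanSpace ℝ (Fin d) => Real.exp (-1 * ‖y‖ ^ 2)) x‖ ^ 2 ≤ 4 * Real.exp (-1 * ‖x‖ ^ 2) := by
  have h1 : HasFDerivAt (fun y : EuclideanSpace ℝ (Fin d) => ‖y‖ ^ 2) (2 • innerSL ℝ x) x := (hasStrictFDerivAt_norm_sq x).hasFDerivAt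
  have h2 := (h1.const_mul (-1)).exp
  refine ⟨h2.differentiableAt, ?_⟩
  rw [h2.fderiv, norm_smul, norm_smul, Real.norm_of_nonneg (Real.exp_pos _).le]
  have e1 : ‖(2 • innerSL ℝ x : EuclideanSpace ℝ (Fin d) →L[ℝ] ℝ)‖ ≤ 2 * ‖x‖ := by
    rw [two_smul]; refine (norm_add_le _ _).trans ?_; rw [innerSL_apply_norm]; linarith
  have e2 : ‖(-1:ℝ)‖ = 1 := by simp
  rw [e2, one_mul, mul_pow, ← Real.exp_nat_mul]
  have e3 : ‖(2 • innerSL ℝ x : EuclideanSpace ℝ (Fin d) →L[ℝ] ℝ)‖ ^ 2 ≤ 4 * ‖x‖ ^ 2 := by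
    have := pow_le_pow_left₀ (norm_nonneg _) e1 2
    linarith
  have e4 : ‖x‖ ^ 2 ≤ Real.exp (‖x‖ ^ 2) := by linarith [Real.add_one_le_exp (‖x‖ ^ 2)]
  calc _ ≤ Real.exp (((2:ℕ):ℝ) * (-1 * ‖x‖ ^ 2)) * (4 * Real.exp (‖x‖ ^ 2)) := by
        refine mul_le_mul_of_nonneg_left ?_ (Real.exp_pos _).le
        linarith
    _ = _ := by
      rw [mul_left_comm, ← Real.exp_add]; congr 2; push_cast; ring

lemma integrable_gauss_E {d : ℕ} {b : ℝ} (hb : 0 < b) :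
    Integrable (fun x : EuclideanSpace ℝ (Fin d) => Real.exp (-b * ‖x‖ ^ 2)) := by
  have := GaussianFourier.integrable_cexp_neg_mul_sq_norm_add (V := EuclideanSpace ℝ (Fin d)) (b := (b:ℂ)) (by simpa using hb) 0 0
  have h := this.norm
  refine h.congr (ae_of_all _ fun x => ?_)
  simp [Complex.norm_exp, ← Complex.ofReal_pow, ← Complex.ofReal_mul]

lemma cutoff_tendsto {d : ℕ} {χ : ℕ → EuclideanSpace ℝ (Fin d) → ℝ} (hχc : ∀ k, Continuous (χ k))
    (hχ0 : ∀ k x, 0 ≤ χ k x) (hχ1 : ∀ k x, χ k x ≤ 1)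
    (hχe : ∀ (k : ℕ) x, ‖x‖ ≤ k + 1 → χ k x = 1) {p : ℝ} (hp : 0 ≤ p) {g : EuclideanSpace ℝ (Fin d) → ℝ} (hg : Integrable g) :
    Tendsto (fun k => ∫ x, χ k x ^ p * g x) atTop (𝓝 (∫ x, g x)) := by
  refine tendsto_integral_of_dominated_convergence (fun x => ‖g x‖) (fun k => ?_) hg.norm (fun k => ae_of_all _ fun x => ?_) (ae_of_all _ fun x => ?_)
  · exact ((hχc k).rpow_const fun x => Or.inr hp).aestronglyMeasurable.mul hg.1
  · rw [norm_mul, Real.norm_of_nonneg (Real.rpow_nonneg (hχ0 k x) _)]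
    exact mul_le_of_le_one_left (norm_nonneg _) (Real.rpow_le_one (hχ0 k x) (hχ1 k x) hp)
  · refine tendsto_const_nhds.congr' ?_
    obtain ⟨k0, hk0⟩ := exists_nat_gt ‖x‖
    filter_upwards [eventually_ge_atTop k0] with k hk
    have : (k0:ℝ) ≤ k := by exact_mod_cast hk
    rw [hχe k x (by linarith), Real.one_rpow, one_mul]

theorem sobolev_u {d : ℕ} (hd : 3 ≤ d) {u : EuclideanSpace ℝ (Fin d) → ℝ} (hu0 : ∀ x, 0 ≤ u x) (hud : Differentiable ℝ u)
    (hN : Integrable (fun x => ‖gradient u x‖ ^ 2))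
    (hX : Integrable (fun x => u x ^ (2 * (d:ℝ) / (d - 2)))) :
    (∫ x, u x ^ (2 * (d:ℝ) / (d - 2))) ^ (((d:ℝ) - 2) / d) ≤ sobolevConst d * ∫ x, ‖gradient u x‖ ^ 2 := by
  have hd' : (3:ℝ) ≤ d := by exact_mod_cast hd
  have hd2 : (0:ℝ) < d - 2 := by linarith
  have hS0 : 0 ≤ sobolevConst d := by
    unfold sobolevConst
    have := Real.Gamma_pos_of_pos (show 0 < (d:ℝ) by linarith)
    have := Real.Gamma_pos_of_pos (show 0 < (d:ℝ)/2 by linarith)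
    positivity
  obtain ⟨χ, a, hχc, hχ0, hχ1, hχe, hχs, ha, hgi, hga⟩ := cutoff_seq hd hu0 hud hN hX
  set q := 2 * (d:ℝ) / (d - 2) with hq
  have hq0 : 0 < q := by positivity
  set g : EuclideanSpace ℝ (Fin d) → ℝ := fun y => Real.exp (-1 * ‖y‖ ^ 2) with hg
  have hgint : Integrable g := integrable_gauss_E one_pos
  have hgpos : ∀ x, 0 < g x := fun x => Real.exp_pos _
  have hgdi : Integrable (fun x => ‖fderiv ℝ g x‖ ^ 2) := by
    refine (hgint.const_mul 4).mono' ((measurable_fderiv ℝ g).norm.pow_const 2).aestronglyMeasurable (ae_of_all _ fun x => ?_)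
    rw [Real.norm_of_nonneg (sq_nonneg _)]
    exact (norm_fderiv_gauss x).2
  set K := ∫ x, ‖fderiv ℝ g x‖ ^ 2 with hK
  have hmain : ∀ k : ℕ, (∫ x, χ k x ^ q * u x ^ q) ^ (((d:ℝ) - 2) / d) ≤
      sobolevConst d * ((1 + 1 / ((k:ℝ) + 1)) * a k + ((1 / ((k:ℝ) + 1)) ^ 2 + 1 / ((k:ℝ) + 1)) * K) := by
    intro k
    set ε : ℝ := 1 / ((k:ℝ) + 1) with hε
    have hε0 : 0 < ε := by positivity
    set uk : EuclideanSpace ℝ (Fin d) → ℝ := fun y => χ k y * u y with huk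
    have hukd : Differentiable ℝ uk := ((hχc k).differentiable one_ne_zero).mul hud
    have huk0 : ∀ x, 0 ≤ uk x := fun x => mul_nonneg (hχ0 k x) (hu0 x)
    have huks : HasCompactSupport uk := (hχs k).mul_right
    obtain ⟨B, hB⟩ := (huks.mul_right (f' := fun x => Real.exp (‖x‖ ^ 2))).exists_bound_of_continuous
      (hukd.continuous.mul (by fun_prop))
    have hBg : ∀ x, uk x ≤ B * g x := by
      intro x
      have := (le_abs_self _).trans (hB x)
      simp only [Pi.mul_apply] at this
      calc uk x = (uk x * Real.exp (‖x‖ ^ 2)) * g x := by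
            rw [mul_assoc, hg, ← Real.exp_add]; simp
        _ ≤ _ := mul_le_mul_of_nonneg_right this (hgpos x).le
    set w : EuclideanSpace ℝ (Fin d) → ℝ := fun x => uk x + ε * g x with hw
    have hgd : Differentiable ℝ g := fun x => (norm_fderiv_gauss x).1
    have hwd : Differentiable ℝ w := hukd.add (hgd.const_mul ε)
    have hw0 : ∀ x, 0 < w x := fun x => add_pos_of_nonneg_of_pos (huk0 x) (mul_pos hε0 (hgpos x))
    have hwb : ∀ x, w x ≤ (B + ε) * Real.exp (-1 * ‖x‖ ^ 2) := fun x => by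
      have := hBg x; simp only [hw]; rw [add_mul]; exact add_le_add_left this _
    have hwn : ∀ x, ‖gradient w x‖ ≤ ‖gradient uk x‖ + ε * ‖fderiv ℝ g x‖ := by
      intro x
      rw [norm_gradient_eq, norm_gradient_eq]
      have : HasFDerivAt w (fderiv ℝ uk x + ε • fderiv ℝ g x) x := (hukd x).hasFDerivAt.add ((hgd x).hasFDerivAt.const_mul ε)
      rw [this.fderiv]
      refine (norm_add_le _ _).trans ?_
      rw [norm_smul, Real.norm_of_nonneg hε0.le]
    have hwn2 : ∀ x, ‖gradient w x‖ ^ 2 ≤ (1 + ε) * ‖gradient uk x‖ ^ 2 + (ε ^ 2 + ε) * ‖fderiv ℝ g x‖ ^ 2 := by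
      intro x
      refine (sq_add_le_delta hε0 (norm_nonneg _) (hwn x)).trans (le_of_eq ?_)
      field_simp
    have hi := ((hgi k).const_mul (1 + ε)).add (hgdi.const_mul (ε ^ 2 + ε))
    have hwi : Integrable (fun x => ‖gradient w x‖ ^ 2) := by
      refine hi.mono' (meas_norm_gradient _).aestronglyMeasurable (ae_of_all _ fun x => ?_)
      rw [Real.norm_of_nonneg (sq_nonneg _)]; exact hwn2 x
    have h1 := sob_euclid hd hwd hw0 one_pos hwb hwi
    have h2 : ∫ x, ‖gradient w x‖ ^ 2 ≤ (1 + ε) * a k + (ε ^ 2 + ε) * K := by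
      refine (integral_mono hwi hi hwn2).trans ?_
      rw [integral_add' ((hgi k).const_mul (1 + ε)) (hgdi.const_mul (ε ^ 2 + ε)), integral_const_mul, integral_const_mul]
      have := mul_le_mul_of_nonneg_left (hga k) (show 0 ≤ 1 + ε by positivity)
      linarith
    refine le_trans ?_ (h1.trans (mul_le_mul_of_nonneg_left h2 hS0))
    refine Real.rpow_le_rpow (integral_nonneg fun x => mul_nonneg (Real.rpow_nonneg (hχ0 k x) _) (Real.rpow_nonneg (hu0 x) _)) ?_ (by positivity)
    have hwq : Integrable (fun x => w x ^ q) := by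
      refine ((integrable_gauss_E (d := d) hq0).const_mul ((B + ε) ^ q)).mono' (hwd.continuous.rpow_const fun x => Or.inr hq0.le).aestronglyMeasurable (ae_of_all _ fun x => ?_)
      rw [Real.norm_of_nonneg (Real.rpow_nonneg (hw0 x).le _)]
      have hBe : 0 ≤ B + ε := by
        have := (hw0 x).le.trans (hwb x)
        exact nonneg_of_mul_nonneg_left this (Real.exp_pos _)
      refine (Real.rpow_le_rpow (hw0 x).le (hwb x) hq0.le).trans (le_of_eq ?_)
      rw [Real.mul_rpow hBe (Real.exp_pos _).le, ← Real.exp_mul]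
      congr 2; ring
    have hle : ∀ x, χ k x ^ q * u x ^ q ≤ w x ^ q := fun x => by
      rw [← Real.mul_rpow (hχ0 k x) (hu0 x)]
      exact Real.rpow_le_rpow (huk0 x) (le_add_of_nonneg_right (mul_pos hε0 (hgpos x)).le) hq0.le
    refine integral_mono_of_nonneg (ae_of_all _ fun x => mul_nonneg (Real.rpow_nonneg (hχ0 k x) _) (Real.rpow_nonneg (hu0 x) _)) hwq (ae_of_all _ hle)
  have t1 := (cutoff_tendsto (fun k => (hχc k).continuous) hχ0 hχ1 hχe hq0.le hX).rpow_const (p := ((d:ℝ) - 2) / d) (Or.inr (by positivity))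
  have t0 := tendsto_one_div_add_atTop_nhds_zero_nat (𝕜 := ℝ)
  have t2 := (((t0.const_add 1).mul ha).add (((t0.pow 2).add t0).mul_const K)).const_mul (sobolevConst d)
  have := le_of_tendsto_of_tendsto' t1 t2 hmain
  simpa using this

end cutoff

section convo
open Set Filter Topology

/-- convolution -/
def cv {d : ℕ} (k v : EuclideanSpace ℝ (Fin d) → ℝ) (x : EuclideanSpace ℝ (Fin d)) : ℝ := ∫ y, k (x - y) * v y

variable {d : ℕ} {k k' v : EuclideanSpace ℝ (Fin d) → ℝ}

lemma cv_integrable_integrand (hk : Continuous k) {B : ℝ} (hB : ∀ x, |k x| ≤ B) (hv : Integrable v) (x : EuclideanSpace ℝ (Fin d)) :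
    Integrable (fun y => k (x - y) * v y) :=
  hv.bdd_mul (c := B) (by fun_prop) (ae_of_all _ fun y => hB _)

lemma cv_bound {B : ℝ} (hB : ∀ x, |k x| ≤ B) (hv : Integrable v) (x : EuclideanSpace ℝ (Fin d)) :
    |cv k v x| ≤ B * ∫ y, |v y| := by
  unfold cv
  rw [← integral_const_mul]
  refine (norm_integral_le_integral_norm (fun y => k (x - y) * v y)).trans ?_
  refine integral_mono_of_nonneg (ae_of_all _ fun y => norm_nonneg _) (hv.abs.const_mul B) (ae_of_all _ fun y => ?_)
  simp only [norm_mul, Real.norm_eq_abs]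
  exact mul_le_mul_of_nonneg_right (hB _) (abs_nonneg _)

lemma cv_continuous (hk : Continuous k) {B : ℝ} (hB : ∀ x, |k x| ≤ B) (hv : Integrable v) : Continuous (cv k v) := by
  unfold cv
  refine continuous_of_dominated (bound := fun y => B * ‖v y‖) (fun x => (cv_integrable_integrand hk hB hv x).1) (fun x => ae_of_all _ fun y => ?_) (hv.norm.const_mul B) (ae_of_all _ fun y => by fun_prop)
  rw [norm_mul]
  exact mul_le_mul_of_nonneg_right (hB _) (norm_nonneg _)

lemma cv_integrable (hk : Integrable k) (hv : Integrable v) : Integrable (cv k v) := by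
  have := hv.integrable_convolution (ContinuousLinearMap.mul ℝ ℝ) hk
  refine this.congr (ae_of_all _ fun x => ?_)
  simp only [MeasureTheory.convolution, cv, ContinuousLinearMap.mul_apply']
  congr 1; funext y; ring

lemma cv_hasLineDerivAt (hk : Continuous k) (hk' : Continuous k') {B B' : ℝ} (hB : ∀ x, |k x| ≤ B) (hB' : ∀ x, |k' x| ≤ B')
    (hv : Integrable v) {e : EuclideanSpace ℝ (Fin d)} (hd : ∀ x, HasLineDerivAt ℝ k (k' x) x e) (x : EuclideanSpace ℝ (Fin d)) :
    HasLineDerivAt ℝ (cv k v) (cv k' v x) x e := by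
  unfold HasLineDerivAt cv
  have hder : ∀ (z : EuclideanSpace ℝ (Fin d)) (t : ℝ), HasDerivAt (fun t : ℝ => k (z + t • e)) (k' (z + t • e)) t := by
    intro z t
    have h := hd (z + t • e)
    unfold HasLineDerivAt at h
    have h2 := HasDerivAt.comp_sub_const (f := fun s : ℝ => k (z + t • e + s • e)) t t (by simpa using h)
    refine h2.congr_of_eventuallyEq (Eventually.of_forall fun s => ?_)
    simp only
    congr 1
    rw [sub_smul]; abel
  have := hasDerivAt_integral_of_dominated_loc_of_deriv_le (𝕜 := ℝ) (μ := volume) (s := univ) (x₀ := (0:ℝ))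
    (F := fun t y => k (x + t • e - y) * v y) (F' := fun t y => k' (x + t • e - y) * v y) (bound := fun y => B' * ‖v y‖)
    univ_mem (Eventually.of_forall fun t => (cv_integrable_integrand hk hB hv _).1) (cv_integrable_integrand hk hB hv _)
    (cv_integrable_integrand hk' hB' hv _).1 (ae_of_all _ fun y t _ => by
      rw [norm_mul]
      exact mul_le_mul_of_nonneg_right (hB' _) (norm_nonneg _)) (hv.norm.const_mul B')
    (ae_of_all _ fun y t _ => by
      have h := (hder (x - y) t).mul_const (v y)
      have e1 : ∀ t : ℝ, x + t • e - y = x - y + t • e := fun t => by abel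
      simp_rw [e1]
      exact h)
  have h2 := this.2
  simpa using h2

lemma ibp_line {f f' g g' : EuclideanSpace ℝ (Fin d) → ℝ} {e : EuclideanSpace ℝ (Fin d)}
    (h1 : Integrable (fun x => f' x * g x)) (h2 : Integrable (fun x => f x * g' x)) (h3 : Integrable (fun x => f x * g x))
    (hf : ∀ x, HasLineDerivAt ℝ f (f' x) x e) (hg : ∀ x, HasLineDerivAt ℝ g (g' x) x e) :
    ∫ x, f x * g' x = - ∫ x, f' x * g x := by
  have := integral_bilinear_hasLineDerivAt_right_eq_neg_left_of_integrable (μ := volume)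
      (f := f) (f' := f') (g := g) (g' := g') (v := e)
      (B := ContinuousLinearMap.mul ℝ ℝ) h1 h2 h3 (fun x _ => hf x) (fun x _ => hg x)
  simpa using this

/-- abstract duality step -/
lemma dual_abstract {K : EuclideanSpace ℝ (Fin d) → ℝ} {Ki Kii : Fin d → EuclideanSpace ℝ (Fin d) → ℝ}
    (hKc : Continuous K) (hKic : ∀ i, Continuous (Ki i)) (hKiic : ∀ i, Continuous (Kii i))
    {B : ℝ} (hKb : ∀ x, |K x| ≤ B) (hKib : ∀ i x, |Ki i x| ≤ B) (hKiib : ∀ i x, |Kii i x| ≤ B)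
    (hKii : ∀ i, Integrable (Ki i)) (hKiii : ∀ i, Integrable (Kii i))
    (hd1 : ∀ i x, HasLineDerivAt ℝ K (Ki i x) x (EuclideanSpace.single i 1))
    (hd2 : ∀ i x, HasLineDerivAt ℝ (Ki i) (Kii i x) x (EuclideanSpace.single i 1))
    {f : EuclideanSpace ℝ (Fin d) → ℝ} (hfd : Differentiable ℝ f) (hfi : Integrable f)
    (hN : Integrable (fun x => ‖gradient f x‖ ^ 2)) (hv : Integrable v) :
    2 * ∫ x, f x * -(∑ i, cv (Kii i) v x) ≤ (∫ x, ‖gradient f x‖ ^ 2) + ∫ x, cv K v x * -(∑ i, cv (Kii i) v x) := by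
  have w0c := cv_continuous hKc hKb hv
  have w1c := fun i => cv_continuous (hKic i) (hKib i) hv
  have w2c := fun i => cv_continuous (hKiic i) (hKiib i) hv
  have w0b := cv_bound hKb hv
  have w1b := fun i => cv_bound (hKib i) hv
  have w2b := fun i => cv_bound (hKiib i) hv
  have w1i := fun i => cv_integrable (hKii i) hv
  have w2i := fun i => cv_integrable (hKiii i) hv
  have d1 := fun i => cv_hasLineDerivAt hKc (hKic i) hKb (hKib i) hv (hd1 i)
  have d2 := fun i => cv_hasLineDerivAt (hKic i) (hKiic i) (hKib i) (hKiib i) hv (hd2 i)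
  have hpi : ∀ i, Integrable (fun x => (fderiv ℝ f x (EuclideanSpace.single i 1)) ^ 2) := by
    intro i
    refine hN.mono' ((measurable_fderiv_apply_const ℝ f _).pow_const 2).aestronglyMeasurable (ae_of_all _ fun x => ?_)
    rw [norm_gradient_sq, Real.norm_of_nonneg (sq_nonneg _)]
    exact Finset.single_le_sum (f := fun i => (fderiv ℝ f x (EuclideanSpace.single i 1)) ^ 2) (fun j _ => sq_nonneg _) (Finset.mem_univ i)
  have w1sq : ∀ i, Integrable (fun x => cv (Ki i) v x * cv (Ki i) v x) := fun i =>
    (w1i i).bdd_mul (w1c i).aestronglyMeasurable (ae_of_all _ (w1b i))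
  have hpw : ∀ i, Integrable (fun x => fderiv ℝ f x (EuclideanSpace.single i 1) * cv (Ki i) v x) := by
    intro i
    refine ((hpi i).add (w1sq i)).mono' ((measurable_fderiv_apply_const ℝ f _).mul (w1c i).measurable).aestronglyMeasurable (ae_of_all _ fun x => ?_)
    simp only [Pi.add_apply]
    rw [Real.norm_eq_abs, abs_le]
    constructor
    · nlinarith [sq_nonneg (fderiv ℝ f x (EuclideanSpace.single i 1) + cv (Ki i) v x), sq_nonneg (fderiv ℝ f x (EuclideanSpace.single i 1)), sq_nonneg (cv (Ki i) v x)]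
    · nlinarith [sq_nonneg (fderiv ℝ f x (EuclideanSpace.single i 1) - cv (Ki i) v x), sq_nonneg (fderiv ℝ f x (EuclideanSpace.single i 1)), sq_nonneg (cv (Ki i) v x)]
  have hf2 : ∀ i, Integrable (fun x => f x * cv (Kii i) v x) := fun i =>
    hfi.mul_bdd (w2c i).aestronglyMeasurable (ae_of_all _ (w2b i))
  have hf1 : ∀ i, Integrable (fun x => f x * cv (Ki i) v x) := fun i =>
    hfi.mul_bdd (w1c i).aestronglyMeasurable (ae_of_all _ (w1b i))
  have hw2 : ∀ i, Integrable (fun x => cv K v x * cv (Kii i) v x) := fun i =>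
    (w2i i).bdd_mul w0c.aestronglyMeasurable (ae_of_all _ w0b)
  have hw1 : ∀ i, Integrable (fun x => cv K v x * cv (Ki i) v x) := fun i =>
    (w1i i).bdd_mul w0c.aestronglyMeasurable (ae_of_all _ w0b)
  have i1 : ∀ i, ∫ x, f x * cv (Kii i) v x = - ∫ x, fderiv ℝ f x (EuclideanSpace.single i 1) * cv (Ki i) v x := fun i =>
    ibp_line (hpw i) (hf2 i) (hf1 i) (fun x => (hfd x).hasFDerivAt.hasLineDerivAt _) (d2 i)
  have i2 : ∀ i, ∫ x, cv K v x * cv (Kii i) v x = - ∫ x, cv (Ki i) v x * cv (Ki i) v x := fun i =>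
    ibp_line (w1sq i) (hw2 i) (hw1 i) (d1 i) (d2 i)
  have s1 : ∫ x, f x * -(∑ i, cv (Kii i) v x) = ∑ i, ∫ x, fderiv ℝ f x (EuclideanSpace.single i 1) * cv (Ki i) v x := by
    simp_rw [mul_neg, Finset.mul_sum]
    rw [integral_neg, integral_finsetSum _ fun i _ => hf2 i]
    simp_rw [i1]; simp
  have s2 : ∫ x, cv K v x * -(∑ i, cv (Kii i) v x) = ∑ i, ∫ x, cv (Ki i) v x * cv (Ki i) v x := by
    simp_rw [mul_neg, Finset.mul_sum]
    rw [integral_neg, integral_finsetSum _ fun i _ => hw2 i]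
    simp_rw [i2]; simp
  have s3 : ∫ x, ‖gradient f x‖ ^ 2 = ∑ i, ∫ x, (fderiv ℝ f x (EuclideanSpace.single i 1)) ^ 2 := by
    simp_rw [norm_gradient_sq]
    rw [integral_finsetSum _ fun i _ => hpi i]
  rw [s1, s2, s3, Finset.mul_sum, ← Finset.sum_add_distrib]
  refine Finset.sum_le_sum fun i _ => ?_
  rw [← integral_const_mul, ← integral_add (hpi i) (w1sq i)]
  refine integral_mono ((hpw i).const_mul 2) ((hpi i).add (w1sq i)) fun x => ?_
  simp only [Pi.add_apply]
  nlinarith [sq_nonneg (fderiv ℝ f x (EuclideanSpace.single i 1) - cv (Ki i) v x)]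

end convo

section kern
open Set Filter Topology

/-- regularised power kernel -/
def kP {d : ℕ} (a p : ℝ) (x : EuclideanSpace ℝ (Fin d)) : ℝ := (‖x‖ ^ 2 + a) ^ (-p)

variable {d : ℕ}

lemma kP_base_pos {a : ℝ} (ha : 0 < a) (x : EuclideanSpace ℝ (Fin d)) : 0 < ‖x‖ ^ 2 + a := by positivity

lemma kP_pos {a : ℝ} (ha : 0 < a) (p : ℝ) (x : EuclideanSpace ℝ (Fin d)) : 0 < kP a p x :=
  Real.rpow_pos_of_pos (kP_base_pos ha x) _

lemma kP_cont {a : ℝ} (ha : 0 < a) (p : ℝ) : Continuous (kP (d := d) a p) := by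
  unfold kP
  exact Continuous.rpow_const (by fun_prop) fun x => Or.inl (kP_base_pos ha x).ne'

lemma kP_succ {a : ℝ} (ha : 0 < a) (p : ℝ) (x : EuclideanSpace ℝ (Fin d)) : kP a p x = (‖x‖ ^ 2 + a) * kP a (p + 1) x := by
  unfold kP
  rw [show -p = 1 + -(p+1) by ring, Real.rpow_add (kP_base_pos ha x), Real.rpow_one]

lemma kP_le {a p : ℝ} (ha : 0 < a) (hp : 0 ≤ p) (x : EuclideanSpace ℝ (Fin d)) : kP a p x ≤ a ^ (-p) :=
  Real.rpow_le_rpow_of_nonpos ha (by nlinarith [sq_nonneg ‖x‖]) (by linarith)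

lemma kP_integrable {a p : ℝ} (ha : 0 < a) (hp : (d:ℝ) / 2 < p) : Integrable (kP (d := d) a p) := by
  have h := integrable_rpow_neg_one_add_norm_sq (E := EuclideanSpace ℝ (Fin d)) (μ := volume) (r := 2 * p) (by simp; linarith)
  have hp0 : 0 < p := lt_of_le_of_lt (by positivity) hp
  set m := min 1 a with hm
  have hm0 : 0 < m := lt_min one_pos ha
  refine (h.const_mul (m ^ (-p))).mono' (kP_cont ha p).aestronglyMeasurable (ae_of_all _ fun x => ?_)
  rw [Real.norm_of_nonneg (kP_pos ha p x).le, show -(2 * p) / 2 = -p by ring, ← Real.mul_rpow hm0.le (by positivity)]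
  refine Real.rpow_le_rpow_of_nonpos (by positivity) ?_ (by linarith)
  nlinarith [min_le_left 1 a, min_le_right 1 a, sq_nonneg ‖x‖]

lemma kP_line {a : ℝ} (ha : 0 < a) (p : ℝ) (i : Fin d) (x : EuclideanSpace ℝ (Fin d)) :
    HasLineDerivAt ℝ (kP a p) (-2 * p * (x i * kP a (p + 1) x)) x (EuclideanSpace.single i 1) := by
  have h1 : HasFDerivAt (fun y : EuclideanSpace ℝ (Fin d) => ‖y‖ ^ 2 + a) (2 • innerSL ℝ x) x :=
    (hasStrictFDerivAt_norm_sq x).hasFDerivAt.add_const a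
  have h2 := h1.rpow_const (p := -p) (Or.inl (kP_base_pos ha x).ne')
  have h3 := h2.hasLineDerivAt (EuclideanSpace.single i 1)
  have e : -2 * p * (x i * kP a (p + 1) x) = ((-p * (‖x‖ ^ 2 + a) ^ (-p - 1)) • (2 • innerSL ℝ x)) (EuclideanSpace.single i (1:ℝ)) := by
    simp [kP]
    rw [EuclideanSpace.inner_single_right]
    simp
    rw [show -1 + -p = -p - 1 by ring]; ring
  rw [e]; exact h3

lemma coord_line (i : Fin d) (x : EuclideanSpace ℝ (Fin d)) :
    HasLineDerivAt ℝ (fun y : EuclideanSpace ℝ (Fin d) => y i) 1 x (EuclideanSpace.single i 1) := by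
  have h := (EuclideanSpace.proj i : EuclideanSpace ℝ (Fin d) →L[ℝ] ℝ).hasFDerivAt (x := x)
  have h3 := h.hasLineDerivAt (EuclideanSpace.single i 1)
  have e : (EuclideanSpace.proj i : EuclideanSpace ℝ (Fin d) →L[ℝ] ℝ) (EuclideanSpace.single i (1:ℝ)) = 1 := by simp
  rw [e] at h3; exact h3

lemma kP_diff_le {a b p : ℝ} (ha : 0 < a) (hab : a ≤ b) (hp : 0 ≤ p) (x : EuclideanSpace ℝ (Fin d)) :
    |kP a p x - kP b p x| ≤ p * (b - a) * kP a (p + 1) x := by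
  have hb : 0 < b := ha.trans_le hab
  have hta := kP_base_pos ha x
  have htb := kP_base_pos hb x
  have h1 : kP b p x ≤ kP a p x := Real.rpow_le_rpow_of_nonpos hta (by linarith) (by linarith)
  rw [abs_of_nonneg (by linarith)]
  set t := ‖x‖ ^ 2 + a with ht
  set s := ‖x‖ ^ 2 + b with hs
  have e1 : kP b p x = kP a p x * (s / t) ^ (-p) := by
    unfold kP; rw [← ht, ← hs, ← Real.mul_rpow hta.le (by positivity), mul_div_cancel₀ s hta.ne']
  have hst : 0 < s / t := by positivity
  have e2 : 1 - p * (s / t - 1) ≤ (s / t) ^ (-p) := by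
    rw [Real.rpow_def_of_pos hst]
    have := Real.add_one_le_exp (Real.log (s / t) * -p)
    have h3 := Real.log_le_sub_one_of_pos hst
    nlinarith
  have e3 : kP a p x = t * kP a (p + 1) x := kP_succ ha p x
  rw [e1]
  have h4 := mul_le_mul_of_nonneg_left e2 (kP_pos ha p x).le
  have h5 : kP a p x * (p * (s / t - 1)) = p * (b - a) * kP a (p + 1) x := by
    rw [e3]; field_simp; rw [ht, hs]; ring
  nlinarith

lemma coord_sq_le {a : ℝ} (ha : 0 < a) (i : Fin d) (x : EuclideanSpace ℝ (Fin d)) : x i ^ 2 ≤ ‖x‖ ^ 2 + a := by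
  have := EuclideanSpace.norm_sq_eq x
  have h2 := Finset.single_le_sum (f := fun i => ‖x i‖ ^ 2) (fun j _ => sq_nonneg _) (Finset.mem_univ i)
  simp only [Real.norm_eq_abs, sq_abs] at h2 this
  linarith

/-- normalising constant of the Green function -/
def cG (d : ℕ) : ℝ := 1 / (((d : ℝ) - 2) * sphereArea d)

lemma sphereArea_pos (hd : 3 ≤ d) : 0 < sphereArea d := by
  have hd' : (3:ℝ) ≤ d := by exact_mod_cast hd
  unfold sphereArea
  have := Real.Gamma_pos_of_pos (show 0 < (d:ℝ)/2 by linarith)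
  positivity

lemma cG_pos (hd : 3 ≤ d) : 0 < cG d := by
  have hd' : (3:ℝ) ≤ d := by exact_mod_cast hd
  have := sphereArea_pos hd
  unfold cG
  have : (0:ℝ) < d - 2 := by linarith
  positivity

/-- approximate identity `-Δ G_a` -/
def eta (d : ℕ) (a : ℝ) (x : EuclideanSpace ℝ (Fin d)) : ℝ :=
  cG d * ((d:ℝ) - 2) * d * (a * kP a (((d:ℝ) + 2) / 2) x)

lemma dual_step (hd : 3 ≤ d) {a b : ℝ} (ha : 0 < a) (hab : a ≤ b)
    {f v : EuclideanSpace ℝ (Fin d) → ℝ} (hfd : Differentiable ℝ f) (hfi : Integrable f)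
    (hN : Integrable (fun x => ‖gradient f x‖ ^ 2)) (hv : Integrable v) :
    2 * ∫ x, f x * (cv (eta d a) v x - cv (eta d b) v x) ≤ (∫ x, ‖gradient f x‖ ^ 2) +
      ∫ x, cv (fun x => cG d * (kP a (((d:ℝ) - 2) / 2) x - kP b (((d:ℝ) - 2) / 2) x)) v x * (cv (eta d a) v x - cv (eta d b) v x) := by
  have hd' : (3:ℝ) ≤ d := by exact_mod_cast hd
  have hb : 0 < b := ha.trans_le hab
  have hc := cG_pos hd
  set c := cG d
  set m := ((d:ℝ) - 2) / 2 with hm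
  have hm0 : 0 < m := by rw [hm]; linarith
  set Ki : Fin d → EuclideanSpace ℝ (Fin d) → ℝ := fun i x => c * (-2 * m) * (x i * (kP a (m + 1) x - kP b (m + 1) x)) with hKi
  set Kii : Fin d → EuclideanSpace ℝ (Fin d) → ℝ := fun i x => c * (-2 * m) * ((kP a (m + 1) x - kP b (m + 1) x)
    + x i * (-2 * (m + 1) * (x i * (kP a (m + 2) x - kP b (m + 2) x)))) with hKii
  have hcoord : ∀ i : Fin d, Continuous (fun x : EuclideanSpace ℝ (Fin d) => x i) := fun i => by fun_prop
  have hdc : ∀ p, Continuous (fun x : EuclideanSpace ℝ (Fin d) => kP a p x - kP b p x) := fun p => (kP_cont ha p).sub (kP_cont hb p)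
  have hKic : ∀ i, Continuous (Ki i) := fun i => continuous_const.mul ((hcoord i).mul (hdc _))
  have hKiic : ∀ i, Continuous (Kii i) := fun i => continuous_const.mul ((hdc _).add ((hcoord i).mul (continuous_const.mul ((hcoord i).mul (hdc _)))))
  have hba : 0 ≤ b - a := by linarith
  have hcm : |c * (-2 * m)| = c * 2 * m := by
    rw [show c * (-2 * m) = -(c * 2 * m) by ring, abs_neg, abs_of_pos (by positivity)]
  -- bounds
  have bi : ∀ i x, |Ki i x| ≤ c * 2 * m * ((m + 1) * (b - a)) * kP a (m + 3/2) x := by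
    intro i x
    simp only [hKi]
    rw [abs_mul, hcm, mul_assoc (c * 2 * m), abs_mul]
    refine mul_le_mul_of_nonneg_left ?_ (by positivity)
    have h1 := kP_diff_le ha hab (show 0 ≤ m + 1 by positivity) x
    have h2 : |x i| ≤ (‖x‖ ^ 2 + a) ^ ((1:ℝ)/2) := by
      rw [← Real.sqrt_eq_rpow]; exact Real.abs_le_sqrt (coord_sq_le ha i x)
    refine (mul_le_mul h2 h1 (abs_nonneg _) (Real.rpow_nonneg (kP_base_pos ha x).le _)).trans (le_of_eq ?_)
    rw [mul_left_comm]
    congr 1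
    unfold kP
    rw [← Real.rpow_add (kP_base_pos ha x)]; congr 1; ring
  have bii : ∀ i x, |Kii i x| ≤ c * 2 * m * ((m + 1) * (b - a) + 2 * (m + 1) * ((m + 2) * (b - a))) * kP a (m + 2) x := by
    intro i x
    simp only [hKii]
    rw [abs_mul, hcm, mul_assoc (c * 2 * m)]
    refine mul_le_mul_of_nonneg_left ?_ (by positivity)
    have h1 := kP_diff_le ha hab (show 0 ≤ m + 1 by positivity) x
    have h2 := kP_diff_le ha hab (show 0 ≤ m + 2 by positivity) x
    rw [show m + 1 + 1 = m + 2 by ring] at h1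
    refine (abs_add_le _ _).trans ?_
    rw [add_mul]
    refine add_le_add h1 ?_
    rw [show x i * (-2 * (m + 1) * (x i * (kP a (m + 2) x - kP b (m + 2) x))) = -(2 * (m + 1) * (x i ^ 2 * (kP a (m + 2) x - kP b (m + 2) x))) by ring,
      abs_neg, abs_mul, abs_of_nonneg (show 0 ≤ 2 * (m + 1) by positivity), abs_mul, abs_of_nonneg (sq_nonneg _), mul_assoc (2 * (m + 1))]
    refine mul_le_mul_of_nonneg_left ?_ (by positivity)
    refine (mul_le_mul (coord_sq_le ha i x) h2 (abs_nonneg _) (kP_base_pos ha x).le).trans (le_of_eq ?_)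
    rw [kP_succ ha (m + 2)]; ring
  set B0 := c * (a ^ (-m) + b ^ (-m)) with hB0
  set B1 := c * 2 * m * ((m + 1) * (b - a)) * a ^ (-(m + 3/2)) with hB1
  set B2 := c * 2 * m * ((m + 1) * (b - a) + 2 * (m + 1) * ((m + 2) * (b - a))) * a ^ (-(m + 2)) with hB2
  have hB00 : 0 ≤ B0 := by positivity
  have hB10 : 0 ≤ B1 := by positivity
  have hB20 : 0 ≤ B2 := by positivity
  have key := dual_abstract (K := fun x => c * (kP a m x - kP b m x)) (Ki := Ki) (Kii := Kii) (B := B0 + B1 + B2)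
    (continuous_const.mul (hdc _)) hKic hKiic (fun x => by
      rw [abs_mul, abs_of_pos hc]
      have h1 := kP_le ha hm0.le x
      have h2 := kP_le hb hm0.le x
      have h3 := kP_pos ha m x
      have h4 := kP_pos hb m x
      have : |kP a m x - kP b m x| ≤ a ^ (-m) + b ^ (-m) := by rw [abs_le]; constructor <;> linarith
      have := mul_le_mul_of_nonneg_left this hc.le
      linarith) (fun i x => by
      refine (bi i x).trans ?_
      have := mul_le_mul_of_nonneg_left (kP_le ha (show 0 ≤ m + 3/2 by positivity) x) (show 0 ≤ c * 2 * m * ((m + 1) * (b - a)) by positivity)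
      linarith) (fun i x => by
      refine (bii i x).trans ?_
      have := mul_le_mul_of_nonneg_left (kP_le ha (show 0 ≤ m + 2 by positivity) x) (show 0 ≤ c * 2 * m * ((m + 1) * (b - a) + 2 * (m + 1) * ((m + 2) * (b - a))) by positivity)
      linarith)
    (fun i => ((kP_integrable (p := m + 3/2) ha (by rw [hm]; linarith)).const_mul _).mono' (hKic i).aestronglyMeasurable (ae_of_all _ (bi i)))
    (fun i => ((kP_integrable (p := m + 2) ha (by rw [hm]; linarith)).const_mul _).mono' (hKiic i).aestronglyMeasurable (ae_of_all _ (bii i)))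
    (fun i x => by
      have h : HasLineDerivAt ℝ (fun x => c * (kP a m x - kP b m x)) (c * (-2 * m * (x i * kP a (m + 1) x) - -2 * m * (x i * kP b (m + 1) x))) x (EuclideanSpace.single i 1) :=
        HasDerivAt.const_mul c (HasDerivAt.sub (kP_line ha m i x) (kP_line hb m i x))
      rw [show Ki i x = _ by rfl]
      convert h using 1
      ring)
    (fun i x => by
      have h : HasLineDerivAt ℝ (fun x => kP a (m+1) x - kP b (m+1) x) (-2 * (m+1) * (x i * kP a (m + 1 + 1) x) - -2 * (m+1) * (x i * kP b (m + 1 + 1) x)) x (EuclideanSpace.single i 1) :=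
        HasDerivAt.sub (kP_line ha (m+1) i x) (kP_line hb (m+1) i x)
      have h2 := HasDerivAt.const_mul (c * (-2 * m)) (HasDerivAt.mul (coord_line i x) h)
      unfold HasLineDerivAt
      refine HasDerivAt.congr_deriv h2 ?_
      have e0 : x + (0:ℝ) • EuclideanSpace.single i (1:ℝ) = x := by simp
      beta_reduce
      rw [e0, show Kii i x = c * (-2 * m) * ((kP a (m + 1) x - kP b (m + 1) x) + x i * (-2 * (m + 1) * (x i * (kP a (m + 2) x - kP b (m + 2) x)))) from rfl, show m + 1 + 1 = m + 2 by ring]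
      ring) hfd hfi hN hv
  have hs : ∀ x, -(∑ i, Kii i x) = eta d a x - eta d b x := by
    intro x
    simp only [hKii, eta]
    have hx : ‖x‖ ^ 2 = ∑ i, x i ^ 2 := by rw [EuclideanSpace.norm_sq_eq]; simp
    have e1 : ∀ i, c * (-2 * m) * ((kP a (m + 1) x - kP b (m + 1) x) + x i * (-2 * (m + 1) * (x i * (kP a (m + 2) x - kP b (m + 2) x))))
       = c * (-2 * m) * (kP a (m + 1) x - kP b (m + 1) x) + (c * (-2 * m) * (-2 * (m + 1)) * (kP a (m + 2) x - kP b (m + 2) x)) * x i ^ 2 := fun i => by ring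
    simp_rw [e1]
    rw [Finset.sum_add_distrib, Finset.sum_const, ← Finset.mul_sum, ← hx, Finset.card_univ, Fintype.card_fin, nsmul_eq_mul,
      kP_succ ha (m + 1), kP_succ hb (m + 1), show m + 1 + 1 = m + 2 by ring, show ((d:ℝ) + 2) / 2 = m + 2 by rw [hm]; ring]
    have : (d:ℝ) = 2 * (m + 1) := by rw [hm]; ring
    rw [this]; ring
  have hetab : ∀ a, 0 < a → ∀ x, Integrable (fun y => eta d a (x - y) * v y) := fun a ha x => by
    have hec : Continuous (eta d a) := by unfold eta; exact continuous_const.mul (continuous_const.mul (kP_cont ha _))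
    refine cv_integrable_integrand (k := eta d a) (B := c * ((d:ℝ) - 2) * d * (a * a ^ (-(((d:ℝ) + 2) / 2)))) hec (fun y => ?_) hv x
    have hd2 : (0:ℝ) < d - 2 := by linarith
    have h0 := kP_pos ha (((d:ℝ) + 2) / 2) y
    unfold eta
    rw [abs_of_nonneg (by positivity)]
    gcongr
    exact kP_le ha (by positivity) y
  have hs2 : ∀ x, -(∑ i, cv (Kii i) v x) = cv (eta d a) v x - cv (eta d b) v x := by
    intro x
    unfold cv
    rw [← integral_finsetSum, ← integral_neg, ← integral_sub (hetab a ha x) (hetab b hb x)]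
    · congr 1; funext y
      rw [← sub_mul, ← hs, neg_mul, Finset.sum_mul]
    · intro i _
      exact cv_integrable_integrand (hKiic i) (B := B2) (fun x => by
        refine (bii i x).trans ?_
        exact mul_le_mul_of_nonneg_left (kP_le ha (show 0 ≤ m + 2 by positivity) x) (by positivity)) hv x
  simp_rw [hs2] at key
  exact key

end kern

section radial
open Set Filter Topology
variable {d : ℕ}

lemma green_eq (x : EuclideanSpace ℝ (Fin d)) : greenKernel d x = cG d * ‖x‖ ^ ((2:ℝ) - d) := by
  unfold greenKernel cG; ring

lemma green_nonneg (hd : 3 ≤ d) (x : EuclideanSpace ℝ (Fin d)) : 0 ≤ greenKernel d x := by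
  rw [green_eq]; exact mul_nonneg (cG_pos hd).le (Real.rpow_nonneg (norm_nonneg _) _)

lemma green_meas : Measurable (greenKernel d) := by
  unfold greenKernel; fun_prop

lemma radial_lintegral (hd : 3 ≤ d) {f : ℝ → ℝ} (hf0 : ∀ y, 0 ≤ y → 0 ≤ f y)
    (hi : IntegrableOn (fun y : ℝ => y ^ (d - 1) * f y) (Ioi 0)) :
    ∫⁻ x : EuclideanSpace ℝ (Fin d), ENNReal.ofReal (f ‖x‖) =
      ENNReal.ofReal (d * (volume.real (Metric.ball (0 : EuclideanSpace ℝ (Fin d)) 1) * ∫ y in Ioi (0:ℝ), y ^ (d - 1) * f y)) := by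
  have : NeZero d := ⟨by omega⟩
  have : Nonempty (Fin d) := ⟨0⟩
  have h1 := (integrable_fun_norm_addHaar (volume : Measure (EuclideanSpace ℝ (Fin d))) (f := f)).2 (by simpa using hi)
  have h2 := integral_fun_norm_addHaar (volume : Measure (EuclideanSpace ℝ (Fin d))) f
  rw [← ofReal_integral_eq_lintegral_ofReal h1 (ae_of_all _ fun x => hf0 _ (norm_nonneg _)), h2]
  simp

/-- near-diagonal mass of the Green function -/
lemma green_near (hd : 3 ≤ d) : ∃ A : ℝ, 0 ≤ A ∧ ∀ r : ℝ, 0 < r →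
    ∫⁻ z in Metric.ball (0 : EuclideanSpace ℝ (Fin d)) r, ENNReal.ofReal (greenKernel d z) = ENNReal.ofReal (A * r ^ 2) := by
  refine ⟨cG d * (d * (volume.real (Metric.ball (0 : EuclideanSpace ℝ (Fin d)) 1) * (1 / 2))), ?_, fun r hr => ?_⟩
  · have := cG_pos hd; positivity
  have hc := cG_pos hd
  have hd' : (3:ℝ) ≤ d := by exact_mod_cast hd
  set f : ℝ → ℝ := (Iio r).indicator (fun y => cG d * y ^ ((2:ℝ) - d)) with hf
  have e1 : ∀ y ∈ Ioi (0:ℝ), y ^ (d - 1) * f y = (Ioo 0 r).indicator (fun y => cG d * y) y := by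
    intro y hy
    by_cases h : y < r
    · rw [hf, indicator_of_mem (show y ∈ Iio r from h), indicator_of_mem (show y ∈ Ioo 0 r from ⟨hy, h⟩)]
      rw [mul_left_comm]; congr 1
      rw [← Real.rpow_natCast, ← Real.rpow_add hy, Nat.cast_sub (by omega)]
      conv_rhs => rw [← Real.rpow_one y]
      congr 1; push_cast; ring
    · rw [hf, indicator_of_notMem (show y ∉ Iio r from h), indicator_of_notMem (show y ∉ Ioo 0 r from fun h' => h h'.2), mul_zero]
  have hfm : Measurable f := by
    refine Measurable.indicator (by fun_prop) measurableSet_Iio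
  have hci : IntegrableOn (fun y : ℝ => cG d * y) (Ioo 0 r) :=
    ((continuous_const.mul continuous_id).integrableOn_Icc (a := 0) (b := r)).mono_set Ioo_subset_Icc_self
  have hi : IntegrableOn (fun y : ℝ => y ^ (d - 1) * f y) (Ioi 0) := by
    refine IntegrableOn.congr_fun ?_ (fun y hy => (e1 y hy).symm) measurableSet_Ioi
    exact ((integrable_indicator_iff measurableSet_Ioo).2 hci).integrableOn
  have h := radial_lintegral hd (f := f) (fun y hy => indicator_apply_nonneg (fun _ => mul_nonneg hc.le (Real.rpow_nonneg hy _)) ) hi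
  rw [← lintegral_indicator measurableSet_ball]
  have e2 : ∀ x : EuclideanSpace ℝ (Fin d), (Metric.ball (0 : EuclideanSpace ℝ (Fin d)) r).indicator (fun z => ENNReal.ofReal (greenKernel d z)) x = ENNReal.ofReal (f ‖x‖) := by
    intro x
    by_cases h : ‖x‖ < r
    · rw [hf, indicator_of_mem (by simpa using h), indicator_of_mem (show ‖x‖ ∈ Iio r from h), green_eq]
    · rw [hf, indicator_of_notMem (by simpa using h), indicator_of_notMem (show ‖x‖ ∉ Iio r from h), ENNReal.ofReal_zero]
  simp_rw [e2]
  rw [h]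
  congr 1
  rw [setIntegral_congr_fun measurableSet_Ioi e1, integral_indicator measurableSet_Ioo, Measure.restrict_restrict measurableSet_Ioo,
    inter_eq_left.2 (fun y hy => hy.1), ← integral_Ioc_eq_integral_Ioo, ← intervalIntegral.integral_of_le hr.le,
    intervalIntegral.integral_const_mul, integral_id]
  ring

/-- far mass of the critical power of the Green function -/
lemma green_far (hd : 3 ≤ d) : ∃ B : ℝ, 0 ≤ B ∧ ∀ r : ℝ, 0 < r →
    ∫⁻ z in (Metric.ball (0 : EuclideanSpace ℝ (Fin d)) r)ᶜ, ENNReal.ofReal (greenKernel d z ^ (2 * (d:ℝ) / ((d:ℝ) - 2))) = ENNReal.ofReal (B * r ^ (-(d:ℝ))) := by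
  have hd' : (3:ℝ) ≤ d := by exact_mod_cast hd
  have hc := cG_pos hd
  have hcq : 0 ≤ cG d ^ (2 * (d:ℝ) / ((d:ℝ) - 2)) := Real.rpow_nonneg hc.le _
  refine ⟨cG d ^ (2 * (d:ℝ) / ((d:ℝ) - 2)) * (d * (volume.real (Metric.ball (0 : EuclideanSpace ℝ (Fin d)) 1) * (1 / d))), by positivity, fun r hr => ?_⟩
  set q := 2 * (d:ℝ) / ((d:ℝ) - 2) with hq
  set f : ℝ → ℝ := (Ici r).indicator (fun y => (cG d * y ^ ((2:ℝ) - d)) ^ q) with hf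
  have e1 : ∀ y ∈ Ioi (0:ℝ), y ^ (d - 1) * f y = (Ici r).indicator (fun y => cG d ^ q * y ^ (-(d:ℝ) - 1)) y := by
    intro y hy
    have hy0 : 0 < y := hy
    by_cases h : r ≤ y
    · rw [hf, indicator_of_mem (show y ∈ Ici r from h), indicator_of_mem (show y ∈ Ici r from h)]
      rw [Real.mul_rpow hc.le (Real.rpow_nonneg hy0.le _), mul_left_comm]; congr 1
      rw [← Real.rpow_mul hy0.le, ← Real.rpow_natCast, ← Real.rpow_add hy, Nat.cast_sub (by omega)]
      congr 1
      have : (d:ℝ) - 2 ≠ 0 := by linarith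
      rw [hq]; field_simp; push_cast; ring
    · rw [hf, indicator_of_notMem (show y ∉ Ici r from h), indicator_of_notMem (show y ∉ Ici r from h), mul_zero]
  have hfm : Measurable f := by
    refine Measurable.indicator (by fun_prop) measurableSet_Ici
  have hci : IntegrableOn (fun y : ℝ => cG d ^ q * y ^ (-(d:ℝ) - 1)) (Ici r) := by
    rw [integrableOn_Ici_iff_integrableOn_Ioi]
    exact (integrableOn_Ioi_rpow_of_lt (by linarith) hr).const_mul _
  have hi : IntegrableOn (fun y : ℝ => y ^ (d - 1) * f y) (Ioi 0) := by
    refine IntegrableOn.congr_fun ?_ (fun y hy => (e1 y hy).symm) measurableSet_Ioi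
    exact ((integrable_indicator_iff measurableSet_Ici).2 hci).integrableOn
  have h := radial_lintegral hd (f := f) (fun y hy => indicator_apply_nonneg (fun _ => Real.rpow_nonneg (mul_nonneg hc.le (Real.rpow_nonneg hy _)) _) ) hi
  rw [← lintegral_indicator measurableSet_ball.compl]
  have e2 : ∀ x : EuclideanSpace ℝ (Fin d), (Metric.ball (0 : EuclideanSpace ℝ (Fin d)) r)ᶜ.indicator (fun z => ENNReal.ofReal (greenKernel d z ^ q)) x = ENNReal.ofReal (f ‖x‖) := by
    intro x
    by_cases h : r ≤ ‖x‖
    · rw [hf, indicator_of_mem (by simpa using h), indicator_of_mem (show ‖x‖ ∈ Ici r from h), green_eq]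
    · rw [hf, indicator_of_notMem (by simpa using h), indicator_of_notMem (show ‖x‖ ∉ Ici r from h), ENNReal.ofReal_zero]
  simp_rw [e2]
  rw [h]
  congr 1
  rw [setIntegral_congr_fun measurableSet_Ioi e1, integral_indicator measurableSet_Ici, Measure.restrict_restrict measurableSet_Ici,
    inter_eq_left.2 (show Ici r ⊆ Ioi 0 from fun y hy => hr.trans_le hy), integral_Ici_eq_integral_Ioi, integral_const_mul, integral_Ioi_rpow_of_lt (by linarith) hr]
  rw [show -(d:ℝ) - 1 + 1 = -d by ring]
  field_simp
end radial

section etaS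
open Set Filter Topology
variable {d : ℕ}

lemma kP_integral {p : ℝ} (hp : (d:ℝ) / 2 < p) :
    ∫ x : EuclideanSpace ℝ (Fin d), kP 1 p x = π ^ ((d:ℝ) / 2) * Real.Gamma (p - d / 2) / Real.Gamma p := by
  rw [← integral_WW d hp, ← (EuclideanSpace.volume_preserving_symm_measurableEquiv_toLp (Fin d)).integral_comp (MeasurableEquiv.measurableEmbedding _)]
  congr 1; funext x
  unfold kP WW
  rw [EuclideanSpace.norm_sq_eq, add_comm]
  simp

lemma eta_nonneg (hd : 3 ≤ d) {a : ℝ} (ha : 0 < a) (x : EuclideanSpace ℝ (Fin d)) : 0 ≤ eta d a x := by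
  have hd' : (3:ℝ) ≤ d := by exact_mod_cast hd
  have hc := cG_pos hd
  have : (0:ℝ) < d - 2 := by linarith
  have h0 := kP_pos ha (((d:ℝ) + 2) / 2) x
  unfold eta; positivity

lemma eta_cont {a : ℝ} (ha : 0 < a) : Continuous (eta d a) := by
  unfold eta; exact continuous_const.mul (continuous_const.mul (kP_cont ha _))

lemma eta_int {a : ℝ} (ha : 0 < a) : Integrable (eta d a) := by
  unfold eta; exact ((kP_integrable ha (by linarith)).const_mul _).const_mul _

/-- constant of eta -/
def cE (d : ℕ) : ℝ := cG d * ((d:ℝ) - 2) * d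

lemma cE_pos (hd : 3 ≤ d) : 0 < cE d := by
  have hd' : (3:ℝ) ≤ d := by exact_mod_cast hd
  have hc := cG_pos hd
  have : (0:ℝ) < d - 2 := by linarith
  unfold cE; positivity

lemma eta_bd (hd : 3 ≤ d) {a : ℝ} (ha : 0 < a) (x : EuclideanSpace ℝ (Fin d)) :
    |eta d a x| ≤ cE d * a ^ (-((d:ℝ) / 2)) := by
  rw [abs_of_nonneg (eta_nonneg hd ha x)]
  unfold eta
  refine mul_le_mul_of_nonneg_left ?_ (cE_pos hd).le
  rw [show -((d:ℝ)/2) = 1 + -(((d:ℝ) + 2)/2) by ring, Real.rpow_add ha, Real.rpow_one]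
  exact mul_le_mul_of_nonneg_left (kP_le ha (by positivity) x) ha.le

lemma eta_one (hd : 3 ≤ d) : ∫ x, eta d 1 x = 1 := by
  have hd' : (3:ℝ) ≤ d := by exact_mod_cast hd
  have h2 : (d:ℝ) - 2 ≠ 0 := by linarith
  have hG := Real.Gamma_pos_of_pos (show 0 < (d:ℝ)/2 by linarith)
  unfold eta
  rw [integral_const_mul, integral_const_mul, kP_integral (by linarith), show ((d:ℝ)+2)/2 - d/2 = 1 by ring, Real.Gamma_one,
    show ((d:ℝ)+2)/2 = d/2 + 1 by ring, Real.Gamma_add_one (by positivity)]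
  unfold cG sphereArea
  have : π ^ ((d:ℝ)/2) ≠ 0 := by positivity
  field_simp

lemma eta_scale {R : ℝ} (hR : 0 < R) (z : EuclideanSpace ℝ (Fin d)) : eta d (R ^ 2) (R • z) = (R ^ d)⁻¹ * eta d 1 z := by
  unfold eta kP
  rw [norm_smul, mul_pow, Real.norm_of_nonneg hR.le, show R ^ 2 * ‖z‖ ^ 2 + R ^ 2 = R ^ 2 * (‖z‖ ^ 2 + 1) by ring,
    Real.mul_rpow (by positivity) (by positivity)]
  have : R ^ 2 * (R ^ 2) ^ (-(((d:ℝ)+2)/2)) = (R ^ d)⁻¹ := by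
    rw [← Real.rpow_natCast R 2, ← Real.rpow_mul hR.le, ← Real.rpow_add hR, ← Real.rpow_natCast, ← Real.rpow_neg hR.le]
    congr 1; push_cast; ring
  rw [← this]; ring

lemma cv_eta_eq {v : EuclideanSpace ℝ (Fin d) → ℝ} {R : ℝ} (hR : 0 < R) (x : EuclideanSpace ℝ (Fin d)) :
    cv (eta d (R ^ 2)) v x = ∫ z, eta d 1 z * v (x - R • z) := by
  unfold cv
  rw [← integral_sub_left_eq_self (fun y => eta d (R ^ 2) (x - y) * v y) volume x]
  simp only [sub_sub_cancel]
  have h := Measure.integral_comp_smul (volume : Measure (EuclideanSpace ℝ (Fin d))) (fun y => eta d (R ^ 2) y * v (x - y)) R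
  have hp : 0 < R ^ d := by positivity
  rw [finrank_euclideanSpace_fin, abs_of_pos (by positivity), smul_eq_mul, eq_comm, inv_mul_eq_iff_eq_mul₀ hp.ne'] at h
  rw [h, ← integral_const_mul]
  congr 1; funext z
  rw [eta_scale hR]; field_simp

variable {v : EuclideanSpace ℝ (Fin d) → ℝ}

lemma cv_eta_tendsto (hd : 3 ≤ d) (hv : Continuous v) {M : ℝ} (hM : ∀ x, |v x| ≤ M) {R : ℕ → ℝ} (hR : ∀ k, 0 < R k)
    (hRt : Tendsto R atTop (𝓝 0)) (x : EuclideanSpace ℝ (Fin d)) :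
    Tendsto (fun k => cv (eta d (R k ^ 2)) v x) atTop (𝓝 (v x)) := by
  simp_rw [cv_eta_eq (hR _)]
  have e : v x = ∫ z, eta d 1 z * v x := by rw [integral_mul_const, eta_one hd, one_mul]
  rw [e]
  refine tendsto_integral_of_dominated_convergence (fun z => eta d 1 z * M) (fun k => ?_) ((eta_int one_pos).mul_const M) (fun k => ae_of_all _ fun z => ?_) (ae_of_all _ fun z => ?_)
  · exact ((eta_cont one_pos).mul (hv.comp (by fun_prop))).aestronglyMeasurable
  · rw [norm_mul, Real.norm_of_nonneg (eta_nonneg hd one_pos z)]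
    exact mul_le_mul_of_nonneg_left (hM _) (eta_nonneg hd one_pos z)
  · have : Tendsto (fun k => x - R k • z) atTop (𝓝 (x - (0:ℝ) • z)) := tendsto_const_nhds.sub (hRt.smul_const z)
    rw [zero_smul, sub_zero] at this
    exact ((hv.tendsto x).comp this).const_mul _

lemma cv_eta_le (hd : 3 ≤ d) (hv : Continuous v) {M : ℝ} (hM : ∀ x, |v x| ≤ M) {R : ℝ} (hR : 0 < R) (x : EuclideanSpace ℝ (Fin d)) :
    |cv (eta d (R ^ 2)) v x| ≤ M := by
  rw [cv_eta_eq hR]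
  refine (norm_integral_le_integral_norm (fun z => eta d 1 z * v (x - R • z))).trans ?_
  calc ∫ z, ‖eta d 1 z * v (x - R • z)‖ ≤ ∫ z, eta d 1 z * M := by
        refine integral_mono_of_nonneg (ae_of_all _ fun z => norm_nonneg _) ((eta_int one_pos).mul_const M) (ae_of_all _ fun z => ?_)
        simp only
        rw [norm_mul, Real.norm_of_nonneg (eta_nonneg hd one_pos z)]
        exact mul_le_mul_of_nonneg_left (hM _) (eta_nonneg hd one_pos z)
    _ = M := by rw [integral_mul_const, eta_one hd, one_mul]

lemma cv_eta_decay (hd : 3 ≤ d) (hv : Continuous v) (hvs : HasCompactSupport v) : ∃ D : ℝ, ∀ R : ℝ, 0 < R → R ≤ 1 → ∀ x,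
    |cv (eta d (R ^ 2)) v x| ≤ D * kP 1 (((d:ℝ) + 2) / 2) x := by
  obtain ⟨M, hM⟩ := hv.bounded_above_of_compact_support hvs
  obtain ⟨ρ0, hρ0⟩ := hvs.isCompact.isBounded.exists_norm_le
  set ρ := max ρ0 1
  have hρ1 : 1 ≤ ρ := le_max_right _ _
  have hρ : ∀ y, ρ < ‖y‖ → v y = 0 := fun y hy => by
    by_contra h
    exact absurd ((hρ0 y (subset_tsupport _ h)).trans (le_max_left _ _)) (not_le.2 hy)
  have hvi : Integrable v := hv.integrable_of_hasCompactSupport hvs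
  have hM0 : 0 ≤ M := (norm_nonneg _).trans (hM 0)
  set p := ((d:ℝ) + 2) / 2 with hp
  have hp0 : 0 < p := by positivity
  set V := ∫ y, |v y| with hV
  have hV0 : 0 ≤ V := integral_nonneg fun y => abs_nonneg _
  have hcE := cE_pos hd
  refine ⟨M * (1 + 4 * ρ ^ 2) ^ p + cE d * 5 ^ p * V, fun R hR hR1 x => ?_⟩
  have hk := kP_pos one_pos p x
  rw [add_mul]
  by_cases hx : ‖x‖ ≤ 2 * ρ
  · refine (cv_eta_le hd hv hM hR x).trans ?_
    have : 1 ≤ (1 + 4 * ρ ^ 2) ^ p * kP 1 p x := by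
      unfold kP
      rw [Real.rpow_neg (by positivity), ← div_eq_mul_inv, one_le_div (by positivity)]
      refine Real.rpow_le_rpow (by positivity) ?_ hp0.le
      nlinarith [norm_nonneg x]
    have h2 : 0 ≤ cE d * 5 ^ p * V * kP 1 p x := by positivity
    nlinarith
  · push Not at hx
    have h1 : |cv (eta d (R ^ 2)) v x| ≤ (cE d * 5 ^ p * kP 1 p x) * V := by
      unfold cv
      refine (norm_integral_le_integral_norm (fun y => eta d (R ^ 2) (x - y) * v y)).trans ?_
      rw [hV, ← integral_const_mul]
      refine integral_mono_of_nonneg (ae_of_all _ fun z => norm_nonneg _) (hvi.abs.const_mul _) (ae_of_all _ fun y => ?_)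
      simp only
      rw [norm_mul, Real.norm_of_nonneg (eta_nonneg hd (by positivity) _), Real.norm_eq_abs]
      by_cases hy : ρ < ‖y‖
      · rw [hρ y hy]; simp
      · refine mul_le_mul_of_nonneg_right ?_ (abs_nonneg _)
        push Not at hy
        have hn : ‖x‖ / 2 ≤ ‖x - y‖ := by have := norm_sub_norm_le x y; linarith
        unfold eta
        rw [← hp, mul_assoc (cE d)]
        refine mul_le_mul_of_nonneg_left ?_ hcE.le
        have hR2 : R ^ 2 ≤ 1 := by nlinarith
        have hkk : kP (R ^ 2) p (x - y) ≤ 5 ^ p * kP 1 p x := by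
          unfold kP
          have e5 : (5:ℝ) ^ p = (1/5 : ℝ) ^ (-p) := by
            rw [one_div, Real.inv_rpow (by norm_num), Real.rpow_neg (by norm_num), inv_inv]
          rw [e5, ← Real.mul_rpow (by norm_num) (by positivity)]
          refine Real.rpow_le_rpow_of_nonpos (by positivity) ?_ (by linarith)
          have : ‖x‖ ^ 2 / 4 ≤ ‖x - y‖ ^ 2 := by nlinarith [norm_nonneg x, norm_nonneg (x - y)]
          nlinarith [norm_nonneg x, sq_nonneg R]
        have := (kP_pos (show 0 < R ^ 2 by positivity) p (x - y)).le
        nlinarith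
    have h2 : 0 ≤ M * (1 + 4 * ρ ^ 2) ^ p * kP 1 p x := by positivity
    nlinarith
end etaS

section dualF
open Set Filter Topology
variable {d : ℕ} {v : EuclideanSpace ℝ (Fin d) → ℝ}

lemma green_near_int (hd : 3 ≤ d) : IntegrableOn (greenKernel d) (Metric.ball 0 1) := by
  obtain ⟨A, hA0, hA⟩ := green_near hd
  refine ⟨green_meas.aestronglyMeasurable, ?_⟩
  rw [hasFiniteIntegral_iff_ofReal (ae_of_all _ fun y => green_nonneg hd y), hA 1 one_pos]
  exact ENNReal.ofReal_lt_top

lemma green_far_le (hd : 3 ≤ d) {z : EuclideanSpace ℝ (Fin d)} (hz : 1 ≤ ‖z‖) : greenKernel d z ≤ cG d := by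
  have hd' : (3:ℝ) ≤ d := by exact_mod_cast hd
  rw [green_eq]
  have : ‖z‖ ^ ((2:ℝ) - d) ≤ 1 := Real.rpow_le_one_of_one_le_of_nonpos hz (by linarith)
  have := cG_pos hd
  nlinarith

lemma invLap_comp (x : EuclideanSpace ℝ (Fin d)) : invLap d v x = ∫ z, greenKernel d z * v (x - z) := by
  unfold invLap
  rw [← integral_sub_left_eq_self (fun y => greenKernel d (x - y) * v y) volume x]
  simp only [sub_sub_cancel]

lemma green_conv_bound (hd : 3 ≤ d) {M : ℝ} (hM : ∀ x, |v x| ≤ M) (x z : EuclideanSpace ℝ (Fin d)) :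
    |greenKernel d z * v (x - z)| ≤ (Metric.ball 0 1).indicator (greenKernel d) z * M + cG d * |v (x - z)| := by
  have hg := green_nonneg hd z
  have hc := cG_pos hd
  have h0 := abs_nonneg (v (x - z))
  rw [abs_mul, abs_of_nonneg hg]
  by_cases h : ‖z‖ < 1
  · rw [indicator_of_mem (by simpa using h)]
    nlinarith [hM (x - z), mul_le_mul_of_nonneg_left (hM (x - z)) hg]
  · rw [indicator_of_notMem (by simpa using h)]
    nlinarith [green_far_le hd (not_lt.1 h)]

lemma green_conv_dom_int (hd : 3 ≤ d) (hvi : Integrable v) (M : ℝ) (x : EuclideanSpace ℝ (Fin d)) :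
    Integrable (fun z => (Metric.ball 0 1).indicator (greenKernel d) z * M + cG d * |v (x - z)|) :=
  ((green_near_int hd).integrable_indicator measurableSet_ball |>.mul_const M).add ((hvi.comp_sub_left x).abs.const_mul _)

lemma green_conv_int (hd : 3 ≤ d) (hv : Continuous v) (hvi : Integrable v) {M : ℝ} (hM : ∀ x, |v x| ≤ M) (x : EuclideanSpace ℝ (Fin d)) :
    Integrable (fun z => greenKernel d (x - z) * v z) := by
  have h : Integrable (fun z => greenKernel d z * v (x - z)) :=
    (green_conv_dom_int hd hvi M x).mono' (green_meas.mul (by fun_prop)).aestronglyMeasurable (ae_of_all _ fun z => green_conv_bound hd hM x z)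
  have := h.comp_sub_left x
  simpa using this

lemma invLap_bdd (hd : 3 ≤ d) (hvi : Integrable v) {M : ℝ} (hM : ∀ x, |v x| ≤ M) : ∃ C, ∀ x, |invLap d v x| ≤ C := by
  refine ⟨(∫ z, (Metric.ball 0 1).indicator (greenKernel d) z * M) + cG d * ∫ z, |v z|, fun x => ?_⟩
  rw [invLap_comp]
  refine (norm_integral_le_integral_norm (fun z => greenKernel d z * v (x - z))).trans ?_
  refine (integral_mono_of_nonneg (ae_of_all _ fun z => norm_nonneg _) (green_conv_dom_int hd hvi M x) (ae_of_all _ fun z => green_conv_bound hd hM x z)).trans ?_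
  rw [integral_add ((green_near_int hd).integrable_indicator measurableSet_ball |>.mul_const M) ((hvi.comp_sub_left x).abs.const_mul _),
    integral_const_mul, integral_sub_left_eq_self (fun y => |v y|) volume x]

lemma invLap_meas (hv : Measurable v) : StronglyMeasurable (invLap d v) := by
  have h : StronglyMeasurable (Function.uncurry fun x y : EuclideanSpace ℝ (Fin d) => greenKernel d (x - y) * v y) := by
    refine Measurable.stronglyMeasurable ?_
    exact (green_meas.comp (measurable_fst.sub measurable_snd)).mul (hv.comp measurable_snd)
  exact h.integral_prod_right

lemma ker_le (hd : 3 ≤ d) {a b : ℝ} (ha : 0 < a) (hab : a ≤ b) (z : EuclideanSpace ℝ (Fin d)) :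
    0 ≤ cG d * (kP a (((d:ℝ) - 2) / 2) z - kP b (((d:ℝ) - 2) / 2) z) ∧
    (z ≠ 0 → cG d * (kP a (((d:ℝ) - 2) / 2) z - kP b (((d:ℝ) - 2) / 2) z) ≤ greenKernel d z) := by
  have hd' : (3:ℝ) ≤ d := by exact_mod_cast hd
  have hc := cG_pos hd
  have hb : 0 < b := ha.trans_le hab
  constructor
  · have : kP b (((d:ℝ) - 2) / 2) z ≤ kP a (((d:ℝ) - 2) / 2) z := Real.rpow_le_rpow_of_nonpos (kP_base_pos ha z) (by linarith) (by linarith)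
    exact mul_nonneg hc.le (by linarith)
  · intro hz
    have hn : 0 < ‖z‖ := norm_pos_iff.2 hz
    rw [green_eq]
    refine mul_le_mul_of_nonneg_left ?_ hc.le
    have h1 := kP_pos hb (((d:ℝ) - 2) / 2) z
    have h2 : kP a (((d:ℝ) - 2) / 2) z ≤ (‖z‖ ^ 2) ^ (-(((d:ℝ) - 2) / 2)) := Real.rpow_le_rpow_of_nonpos (by positivity) (by linarith) (by linarith)
    rw [← Real.rpow_natCast ‖z‖ 2, ← Real.rpow_mul hn.le, show ((2:ℕ):ℝ) * (-(((d:ℝ) - 2) / 2)) = 2 - d by push_cast; ring] at h2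
    linarith

lemma dual_mid (hd : 3 ≤ d) {f : EuclideanSpace ℝ (Fin d) → ℝ} (hfd : Differentiable ℝ f) (hfi : Integrable f)
    (hN : Integrable (fun x => ‖gradient f x‖ ^ 2)) (hv : Continuous v) (hvs : HasCompactSupport v) (hv0 : ∀ x, 0 ≤ v x)
    {a : ℝ} (ha : 0 < a) (ha1 : a ≤ 1) :
    2 * ∫ x, f x * cv (eta d a) v x ≤ (∫ x, ‖gradient f x‖ ^ 2) + ∫ x, invLap d v x * cv (eta d a) v x := by
  have hd' : (3:ℝ) ≤ d := by exact_mod_cast hd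
  obtain ⟨M, hM⟩ := hv.bounded_above_of_compact_support hvs
  have hvi : Integrable v := hv.integrable_of_hasCompactSupport hvs
  obtain ⟨CW, hCW⟩ := invLap_bdd hd hvi hM
  have hW0 : ∀ x, 0 ≤ invLap d v x := fun x => integral_nonneg fun y => mul_nonneg (green_nonneg hd _) (hv0 y)
  have hcv0 : ∀ b, 0 < b → ∀ x, 0 ≤ cv (eta d b) v x := fun b hb x => integral_nonneg fun y => mul_nonneg (eta_nonneg hd hb _) (hv0 y)
  have hcc : ∀ b, 0 < b → Continuous (cv (eta d b) v) := fun b hb => cv_continuous (eta_cont hb) (eta_bd hd hb) hvi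
  have hcb : ∀ b, 0 < b → ∀ x, |cv (eta d b) v x| ≤ cE d * b ^ (-((d:ℝ) / 2)) * ∫ y, |v y| := fun b hb x => cv_bound (eta_bd hd hb) hvi x
  have hfb : ∀ b, 0 < b → Integrable (fun x => f x * cv (eta d b) v x) := fun b hb =>
    hfi.mul_bdd (hcc b hb).aestronglyMeasurable (ae_of_all _ (hcb b hb))
  have hWi : Integrable (fun x => invLap d v x * cv (eta d a) v x) :=
    (cv_integrable (eta_int ha) hvi).bdd_mul (c := CW) (invLap_meas hv.measurable).aestronglyMeasurable (ae_of_all _ hCW)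
  set V := ∫ y, |v y|
  have main : ∀ n : ℕ, 2 * ∫ x, f x * cv (eta d a) v x ≤ (∫ x, ‖gradient f x‖ ^ 2) + (∫ x, invLap d v x * cv (eta d a) v x) +
      2 * ((∫ x, |f x|) * (cE d * ((n:ℝ) + 1) ^ (-((d:ℝ) / 2)) * V)) := by
    intro n
    set b := (n:ℝ) + 1 with hbdef
    have hb : 0 < b := by positivity
    have hab : a ≤ b := by have : (0:ℝ) ≤ n := by positivity
                           linarith
    have h1 := dual_step hd ha hab hfd hfi hN hvi
    have e1 : ∫ x, f x * (cv (eta d a) v x - cv (eta d b) v x) = (∫ x, f x * cv (eta d a) v x) - ∫ x, f x * cv (eta d b) v x := by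
      rw [← integral_sub (hfb a ha) (hfb b hb)]
      congr 1; funext x; ring
    rw [e1] at h1
    have h2 : ∫ x, f x * cv (eta d b) v x ≤ (∫ x, |f x|) * (cE d * b ^ (-((d:ℝ) / 2)) * V) := by
      rw [← integral_mul_const]
      refine integral_mono (hfb b hb) (hfi.abs.mul_const _) fun x => ?_
      refine (le_abs_self _).trans ?_
      rw [abs_mul]
      exact mul_le_mul_of_nonneg_left (hcb b hb x) (abs_nonneg _)
    have h3 : ∫ x, cv (fun x => cG d * (kP a (((d:ℝ) - 2) / 2) x - kP b (((d:ℝ) - 2) / 2) x)) v x * (cv (eta d a) v x - cv (eta d b) v x)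
        ≤ ∫ x, invLap d v x * cv (eta d a) v x := by
      by_cases hI : Integrable (fun x => cv (fun x => cG d * (kP a (((d:ℝ) - 2) / 2) x - kP b (((d:ℝ) - 2) / 2) x)) v x * (cv (eta d a) v x - cv (eta d b) v x))
      · refine integral_mono hI hWi fun x => ?_
        have k0 : 0 ≤ cv (fun x => cG d * (kP a (((d:ℝ) - 2) / 2) x - kP b (((d:ℝ) - 2) / 2) x)) v x :=
          integral_nonneg fun y => mul_nonneg (ker_le hd ha hab _).1 (hv0 y)
        have k1 : cv (fun x => cG d * (kP a (((d:ℝ) - 2) / 2) x - kP b (((d:ℝ) - 2) / 2) x)) v x ≤ invLap d v x := by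
          unfold cv invLap
          refine integral_mono_of_nonneg (ae_of_all _ fun y => mul_nonneg (ker_le hd ha hab _).1 (hv0 y)) (green_conv_int hd hv hvi hM x) ?_
          have : Nonempty (Fin d) := ⟨⟨0, by omega⟩⟩
          filter_upwards [(Set.countable_singleton x).ae_notMem volume] with y hy
          refine mul_le_mul_of_nonneg_right ((ker_le hd ha hab _).2 ?_) (hv0 y)
          rw [sub_ne_zero]; exact fun h => hy (by simp [h])
        have := hcv0 a ha x
        have := hcv0 b hb x
        simp only
        nlinarith
      · rw [integral_undef hI]
        exact integral_nonneg fun x => mul_nonneg (hW0 x) (hcv0 a ha x)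
    linarith
  have ht : Tendsto (fun n : ℕ => (∫ x, ‖gradient f x‖ ^ 2) + (∫ x, invLap d v x * cv (eta d a) v x) +
      2 * ((∫ x, |f x|) * (cE d * ((n:ℝ) + 1) ^ (-((d:ℝ) / 2)) * V))) atTop
      (𝓝 ((∫ x, ‖gradient f x‖ ^ 2) + (∫ x, invLap d v x * cv (eta d a) v x) + 2 * ((∫ x, |f x|) * (cE d * 0 * V)))) := by
    have : Tendsto (fun n : ℕ => ((n:ℝ) + 1) ^ (-((d:ℝ) / 2))) atTop (𝓝 0) :=
      (tendsto_rpow_neg_atTop (show 0 < (d:ℝ)/2 by linarith)).comp (tendsto_atTop_add_const_right _ _ tendsto_natCast_atTop_atTop)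
    exact tendsto_const_nhds.add ((((this.const_mul _).mul_const _).const_mul _).const_mul _)
  have := ge_of_tendsto' ht main
  simpa using this

lemma dual_final (hd : 3 ≤ d) {f : EuclideanSpace ℝ (Fin d) → ℝ} (hfd : Differentiable ℝ f) (hfi : Integrable f)
    (hN : Integrable (fun x => ‖gradient f x‖ ^ 2)) (hv : Continuous v) (hvs : HasCompactSupport v) (hv0 : ∀ x, 0 ≤ v x) :
    2 * ∫ x, f x * v x ≤ (∫ x, ‖gradient f x‖ ^ 2) + ∫ x, invLap d v x * v x := by
  obtain ⟨M, hM⟩ := hv.bounded_above_of_compact_support hvs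
  have hvi : Integrable v := hv.integrable_of_hasCompactSupport hvs
  obtain ⟨CW, hCW⟩ := invLap_bdd hd hvi hM
  have hCW0 : 0 ≤ CW := (abs_nonneg _).trans (hCW 0)
  obtain ⟨D, hD⟩ := cv_eta_decay hd hv hvs
  set R : ℕ → ℝ := fun k => 1 / ((k:ℝ) + 1) with hR
  have hR0 : ∀ k, 0 < R k := fun k => by simp only [hR]; positivity
  have hR1 : ∀ k, R k ≤ 1 := fun k => by
    simp only [hR]; rw [div_le_one (by positivity)]; have : (0:ℝ) ≤ k := by positivity
    linarith
  have hRt : Tendsto R atTop (𝓝 0) := tendsto_one_div_add_atTop_nhds_zero_nat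
  have hcc : ∀ k, Continuous (cv (eta d (R k ^ 2)) v) := fun k => cv_continuous (eta_cont (pow_pos (hR0 k) 2)) (eta_bd hd (pow_pos (hR0 k) 2)) hvi
  have hpt := cv_eta_tendsto hd hv hM hR0 hRt
  have t1 : Tendsto (fun k => ∫ x, f x * cv (eta d (R k ^ 2)) v x) atTop (𝓝 (∫ x, f x * v x)) := by
    refine tendsto_integral_of_dominated_convergence (fun x => |f x| * M) (fun k => hfi.1.mul (hcc k).aestronglyMeasurable) (hfi.abs.mul_const M)
      (fun k => ae_of_all _ fun x => ?_) (ae_of_all _ fun x => (hpt x).const_mul _)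
    rw [norm_mul]
    exact mul_le_mul_of_nonneg_left (cv_eta_le hd hv hM (hR0 k) x) (abs_nonneg _)
  have t2 : Tendsto (fun k => ∫ x, invLap d v x * cv (eta d (R k ^ 2)) v x) atTop (𝓝 (∫ x, invLap d v x * v x)) := by
    refine tendsto_integral_of_dominated_convergence (fun x => CW * (D * kP 1 (((d:ℝ) + 2) / 2) x))
      (fun k => (invLap_meas hv.measurable).aestronglyMeasurable.mul (hcc k).aestronglyMeasurable)
      (((kP_integrable one_pos (by linarith)).const_mul _).const_mul _)
      (fun k => ae_of_all _ fun x => ?_) (ae_of_all _ fun x => (hpt x).const_mul _)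
    rw [norm_mul]
    exact mul_le_mul (hCW x) (hD _ (hR0 k) (hR1 k) x) (norm_nonneg _) hCW0
  refine le_of_tendsto_of_tendsto' (t1.const_mul 2) (t2.const_add _) fun k => ?_
  exact dual_mid hd hfd hfi hN hv hvs hv0 (pow_pos (hR0 k) 2) (pow_le_one₀ (hR0 k).le (hR1 k))
end dualF

section hlsfin
open Set Filter Topology
variable {d : ℕ} {v : EuclideanSpace ℝ (Fin d) → ℝ}

/-- inner Green potential in extended reals -/
def gpot (v : EuclideanSpace ℝ (Fin d) → ℝ) (x : EuclideanSpace ℝ (Fin d)) : ENNReal :=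
  ENNReal.ofReal (v x) * ∫⁻ y, ENNReal.ofReal (greenKernel d (x - y)) * ENNReal.ofReal (v y)

lemma gpot_meas (hv : Measurable v) : Measurable (gpot v) := by
  unfold gpot
  refine hv.ennreal_ofReal.mul ?_
  refine Measurable.lintegral_prod_right' (f := fun p : EuclideanSpace ℝ (Fin d) × EuclideanSpace ℝ (Fin d) => ENNReal.ofReal (greenKernel d (p.1 - p.2)) * ENNReal.ofReal (v p.2)) ?_
  exact (green_meas.comp (measurable_fst.sub measurable_snd)).ennreal_ofReal.mul (hv.comp measurable_snd).ennreal_ofReal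

lemma gpot_toReal (hd : 3 ≤ d) (hv : Measurable v) (hv0 : ∀ x, 0 ≤ v x) (x : EuclideanSpace ℝ (Fin d)) :
    (gpot v x).toReal = v x * invLap d v x := by
  unfold gpot invLap
  rw [ENNReal.toReal_mul, ENNReal.toReal_ofReal (hv0 x), integral_eq_lintegral_of_nonneg_ae (ae_of_all _ fun y => mul_nonneg (green_nonneg hd _) (hv0 y))]
  · congr 3; funext y
    rw [ENNReal.ofReal_mul (green_nonneg hd _)]
  · exact ((green_meas.comp (measurable_const.sub measurable_id)).mul hv).aestronglyMeasurable

lemma integral_gpot (hd : 3 ≤ d) (hv : Measurable v) (hv0 : ∀ x, 0 ≤ v x) (hf : ∫⁻ x, gpot v x < ⊤) :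
    ∫ x, v x * invLap d v x = (∫⁻ x, gpot v x).toReal := by
  simp_rw [← gpot_toReal hd hv hv0]
  exact integral_toReal (gpot_meas hv).aemeasurable (ae_lt_top (gpot_meas hv) hf.ne)

lemma gpot_mono {w : EuclideanSpace ℝ (Fin d) → ℝ} (h : ∀ x, w x ≤ v x) (x : EuclideanSpace ℝ (Fin d)) : gpot w x ≤ gpot v x := by
  unfold gpot
  gcongr with y
  · exact h x
  · exact h y

lemma inner_bound (hd : 3 ≤ d) (hv : Measurable v) (hv0 : ∀ x, 0 ≤ v x)
    (hX : Integrable (fun x => v x ^ (2 * (d:ℝ) / ((d:ℝ) + 2)))) :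
    ∃ C : ℝ, 0 ≤ C ∧ ∀ x, ENNReal.ofReal (v x) * ∫⁻ y, ENNReal.ofReal (greenKernel d (x - y)) * (if v y ≤ v x then ENNReal.ofReal (v y) else 0)
      ≤ ENNReal.ofReal (C * v x ^ (2 * (d:ℝ) / ((d:ℝ) + 2))) := by
  have hd' : (3:ℝ) ≤ d := by exact_mod_cast hd
  have hd2 : (0:ℝ) < d - 2 := by linarith
  obtain ⟨A, hA0, hA⟩ := green_near hd
  obtain ⟨B, hB0, hB⟩ := green_far hd
  set q := 2 * (d:ℝ) / ((d:ℝ) + 2) with hq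
  set p := 2 * (d:ℝ) / ((d:ℝ) - 2) with hp
  set X := ∫ x, v x ^ q with hXd
  have hX0 : 0 ≤ X := integral_nonneg fun x => Real.rpow_nonneg (hv0 x) _
  have hq0 : 0 < q := by positivity
  have hp0 : 0 < p := by positivity
  have hpq : p.HolderConjugate q := by
    rw [Real.holderConjugate_iff]
    constructor
    · rw [hp, lt_div_iff₀ hd2]; linarith
    · rw [hp, hq]; field_simp; ring
  refine ⟨A + B + X, by positivity, fun x => ?_⟩
  rcases (hv0 x).eq_or_lt with h0 | hb
  · rw [← h0]; simp
  set b := v x with hbd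
  set r := b ^ (-(2 / ((d:ℝ) + 2))) with hr
  set τ := b ^ (-(((d:ℝ) - 2) / (2 * d))) with hτ
  have hr0 : 0 < r := Real.rpow_pos_of_pos hb _
  have hτ0 : 0 < τ := Real.rpow_pos_of_pos hb _
  have hgm : Measurable (fun y => greenKernel d (x - y)) := green_meas.comp (measurable_const.sub measurable_id)
  have key : ∀ y, ENNReal.ofReal (greenKernel d (x - y)) * (if v y ≤ b then ENNReal.ofReal (v y) else 0) ≤
      ENNReal.ofReal b * (Metric.ball 0 r).indicator (fun z => ENNReal.ofReal (greenKernel d z)) (x - y)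
      + (ENNReal.ofReal (τ ^ p) * (Metric.ball 0 r)ᶜ.indicator (fun z => ENNReal.ofReal (greenKernel d z ^ p)) (x - y)
      + ENNReal.ofReal (τ⁻¹ ^ q) * ENNReal.ofReal (v y ^ q)) := by
    intro y
    have hg := green_nonneg hd (x - y)
    split_ifs with hy
    · by_cases hz : ‖x - y‖ < r
      · rw [indicator_of_mem (show x - y ∈ Metric.ball 0 r by simpa using hz)]
        refine le_trans ?_ le_self_add
        rw [mul_comm]
        gcongr
      · rw [indicator_of_mem (show x - y ∈ (Metric.ball 0 r)ᶜ by simpa using hz)]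
        refine le_trans ?_ le_add_self
        rw [← ENNReal.ofReal_mul hg, ← ENNReal.ofReal_mul (by positivity), ← ENNReal.ofReal_mul (by positivity),
          ← ENNReal.ofReal_add (by positivity) (mul_nonneg (by positivity) (Real.rpow_nonneg (hv0 y) _))]
        refine ENNReal.ofReal_le_ofReal ?_
        have hY := Real.young_inequality_of_nonneg (mul_nonneg hτ0.le hg) (mul_nonneg (inv_nonneg.2 hτ0.le) (hv0 y)) hpq
        rw [Real.mul_rpow hτ0.le hg, Real.mul_rpow (inv_nonneg.2 hτ0.le) (hv0 y)] at hY
        have e : τ * greenKernel d (x - y) * (τ⁻¹ * v y) = greenKernel d (x - y) * v y := by field_simp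
        rw [e] at hY
        refine hY.trans (add_le_add ?_ ?_)
        · exact div_le_self (by positivity) hpq.lt.le
        · exact div_le_self (mul_nonneg (by positivity) (Real.rpow_nonneg (hv0 y) _)) hpq.symm.lt.le
    · simp
  have hI : ∫⁻ y, ENNReal.ofReal (greenKernel d (x - y)) * (if v y ≤ b then ENNReal.ofReal (v y) else 0) ≤
      ENNReal.ofReal b * ENNReal.ofReal (A * r ^ 2) + (ENNReal.ofReal (τ ^ p) * ENNReal.ofReal (B * r ^ (-(d:ℝ))) + ENNReal.ofReal (τ⁻¹ ^ q) * ENNReal.ofReal X) := by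
    refine (lintegral_mono key).trans (le_of_eq ?_)
    have m1 : Measurable ((Metric.ball (0 : EuclideanSpace ℝ (Fin d)) r).indicator (fun z => ENNReal.ofReal (greenKernel d z))) :=
      green_meas.ennreal_ofReal.indicator measurableSet_ball
    have m2 : Measurable ((Metric.ball (0 : EuclideanSpace ℝ (Fin d)) r)ᶜ.indicator (fun z => ENNReal.ofReal (greenKernel d z ^ p))) :=
      (green_meas.pow_const p).ennreal_ofReal.indicator measurableSet_ball.compl
    have ms : Measurable (fun y => x - y) := measurable_const.sub measurable_id
    have c1 : Measurable (fun y => (Metric.ball (0 : EuclideanSpace ℝ (Fin d)) r).indicator (fun z => ENNReal.ofReal (greenKernel d z)) (x - y)) := m1.comp ms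
    have c2 : Measurable (fun y => (Metric.ball (0 : EuclideanSpace ℝ (Fin d)) r)ᶜ.indicator (fun z => ENNReal.ofReal (greenKernel d z ^ p)) (x - y)) := m2.comp ms
    rw [lintegral_add_left (c1.const_mul _), lintegral_add_left (c2.const_mul _),
      lintegral_const_mul _ c1, lintegral_const_mul _ c2, lintegral_const_mul _ (hv.pow_const q).ennreal_ofReal,
      lintegral_sub_left_eq_self (fun z => (Metric.ball (0 : EuclideanSpace ℝ (Fin d)) r).indicator (fun z => ENNReal.ofReal (greenKernel d z)) z) x,
      lintegral_sub_left_eq_self (fun z => (Metric.ball (0 : EuclideanSpace ℝ (Fin d)) r)ᶜ.indicator (fun z => ENNReal.ofReal (greenKernel d z ^ p)) z) x,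
      lintegral_indicator measurableSet_ball, lintegral_indicator measurableSet_ball.compl, hA r hr0, hB r hr0,
      ← ofReal_integral_eq_lintegral_ofReal hX (ae_of_all _ fun x => Real.rpow_nonneg (hv0 x) _)]
  refine (mul_le_mul_right hI _).trans (le_of_eq ?_)
  rw [← ENNReal.ofReal_mul hb.le, ← ENNReal.ofReal_mul (by positivity), ← ENNReal.ofReal_mul (by positivity),
    ← ENNReal.ofReal_add (by positivity) (by positivity), ← ENNReal.ofReal_add (by positivity) (by positivity), ← ENNReal.ofReal_mul hb.le]
  congr 1
  have e1 : b * (b * r ^ 2) = b ^ q := by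
    rw [hr, ← Real.rpow_natCast, ← Real.rpow_mul hb.le]
    conv_lhs => rw [← Real.rpow_one b]
    rw [Real.rpow_one b, ← Real.rpow_one_add' hb.le, ← Real.rpow_one_add' hb.le]
    · congr 1; rw [hq]; push_cast; field_simp; ring
    · have : q ≠ 0 := hq0.ne'
      intro h; apply this; rw [← h, hq]; push_cast; field_simp; ring
    · have : (1:ℝ) + -(2 / ((d:ℝ)+2)) * (2:ℕ) = (d - 2) / (d + 2) := by push_cast; field_simp; ring
      rw [this]; positivity
  have e2 : b * (τ ^ p * r ^ (-(d:ℝ))) = b ^ q := by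
    rw [hr, hτ, ← Real.rpow_mul hb.le, ← Real.rpow_mul hb.le, ← Real.rpow_add hb]
    have h1 : -(((d:ℝ) - 2) / (2 * d)) * p + -(2 / ((d:ℝ)+2)) * -(d:ℝ) = q - 1 := by rw [hp, hq]; field_simp; ring
    rw [h1, Real.rpow_sub_one hb.ne']; field_simp
  have e3 : b * τ⁻¹ ^ q = b ^ q := by
    rw [hτ, ← Real.rpow_neg hb.le, neg_neg, ← Real.rpow_mul hb.le]
    have h1 : ((d:ℝ) - 2) / (2 * d) * q = q - 1 := by rw [hq]; field_simp; ring
    rw [h1, Real.rpow_sub_one hb.ne']; field_simp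
  calc _ = A * (b * (b * r ^ 2)) + B * (b * (τ ^ p * r ^ (-(d:ℝ)))) + X * (b * τ⁻¹ ^ q) := by ring
    _ = _ := by rw [e1, e2, e3]; ring

lemma gpot_finite (hd : 3 ≤ d) (hv : Measurable v) (hv0 : ∀ x, 0 ≤ v x)
    (hX : Integrable (fun x => v x ^ (2 * (d:ℝ) / ((d:ℝ) + 2)))) : ∫⁻ x, gpot v x < ⊤ := by
  obtain ⟨C, hC0, hC⟩ := inner_bound hd hv hv0 hX
  set H : EuclideanSpace ℝ (Fin d) → EuclideanSpace ℝ (Fin d) → ENNReal := fun x y =>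
    ENNReal.ofReal (v x) * (ENNReal.ofReal (greenKernel d (x - y)) * (if v y ≤ v x then ENNReal.ofReal (v y) else 0)) with hH
  have hHm : Measurable (Function.uncurry H) := by
    have hx : Measurable (fun p : EuclideanSpace ℝ (Fin d) × EuclideanSpace ℝ (Fin d) => v p.1) := hv.comp measurable_fst
    have hy : Measurable (fun p : EuclideanSpace ℝ (Fin d) × EuclideanSpace ℝ (Fin d) => v p.2) := hv.comp measurable_snd
    exact hx.ennreal_ofReal.mul ((green_meas.comp (measurable_fst.sub measurable_snd)).ennreal_ofReal.mul
      (Measurable.ite (measurableSet_le hy hx) hy.ennreal_ofReal measurable_const))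
  have hHx : ∀ x, Measurable (H x) := fun x => hHm.comp measurable_prodMk_left
  have hHy : ∀ y, Measurable (fun x => H x y) := fun y => hHm.comp measurable_prodMk_right
  have h1 : ∫⁻ x, ∫⁻ y, H x y < ⊤ := by
    have : ∀ x, ∫⁻ y, H x y ≤ ENNReal.ofReal (C * v x ^ (2 * (d:ℝ) / ((d:ℝ) + 2))) := fun x => by
      refine le_trans (le_of_eq ?_) (hC x)
      simp only [hH]
      rw [lintegral_const_mul' _ _ ENNReal.ofReal_ne_top]
    refine (lintegral_mono this).trans_lt ?_
    rw [← ofReal_integral_eq_lintegral_ofReal (hX.const_mul C) (ae_of_all _ fun x => mul_nonneg hC0 (Real.rpow_nonneg (hv0 x) _))]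
    exact ENNReal.ofReal_lt_top
  have h2 : ∫⁻ x, ∫⁻ y, H y x = ∫⁻ x, ∫⁻ y, H x y := by
    rw [lintegral_lintegral_swap (f := fun x y => H y x)]
    exact (hHm.comp measurable_swap).aemeasurable
  have hsym : ∀ x y : EuclideanSpace ℝ (Fin d), greenKernel d (x - y) = greenKernel d (y - x) := fun x y => by
    rw [green_eq, green_eq, norm_sub_rev]
  have h3 : ∀ x, gpot v x ≤ (∫⁻ y, H x y) + ∫⁻ y, H y x := by
    intro x
    rw [← lintegral_add_left (hHx x)]
    unfold gpot
    rw [← lintegral_const_mul' _ _ ENNReal.ofReal_ne_top]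
    refine lintegral_mono fun y => ?_
    simp only [hH]
    rcases le_total (v y) (v x) with h | h
    · rw [if_pos h]; exact le_self_add
    · refine le_trans ?_ le_add_self
      rw [if_pos h, hsym y x]
      refine le_of_eq ?_
      ring
  refine (lintegral_mono h3).trans_lt ?_
  have hm : Measurable (fun x => ∫⁻ y, H x y) := hHm.lintegral_prod_right'
  rw [lintegral_add_left hm, h2]
  exact ENNReal.add_lt_top.2 ⟨h1, h1⟩
end hlsfin

section assemble
open Set Filter Topology
variable {d : ℕ}

lemma sobolevConst_nonneg (hd : 3 ≤ d) : 0 ≤ sobolevConst d := by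
  have hd' : (3:ℝ) ≤ d := by exact_mod_cast hd
  have hd2 : (0:ℝ) < d - 2 := by linarith
  unfold sobolevConst
  have := Real.Gamma_pos_of_pos (show 0 < (d:ℝ) by linarith)
  have := Real.Gamma_pos_of_pos (show 0 < (d:ℝ)/2 by linarith)
  positivity

lemma dual_u (hd : 3 ≤ d) {u : EuclideanSpace ℝ (Fin d) → ℝ} (hu0 : ∀ x, 0 ≤ u x) (hud : Differentiable ℝ u)
    (hN : Integrable (fun x => ‖gradient u x‖ ^ 2))
    (hX : Integrable (fun x => u x ^ (2 * (d:ℝ) / (d - 2)))) (l : ℝ) :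
    2 * (l * ∫ x, u x ^ (2 * (d:ℝ) / (d - 2))) ≤ l ^ 2 * (∫ x, ‖gradient u x‖ ^ 2) +
      ∫ x, u x ^ (((d : ℝ) + 2) / ((d : ℝ) - 2)) * invLap d (fun y => u y ^ (((d : ℝ) + 2) / ((d : ℝ) - 2))) x := by
  have hd' : (3:ℝ) ≤ d := by exact_mod_cast hd
  have hd2 : (0:ℝ) < d - 2 := by linarith
  set s := ((d : ℝ) + 2) / ((d : ℝ) - 2) with hs
  have hs0 : 0 < s := by positivity
  set v : EuclideanSpace ℝ (Fin d) → ℝ := fun y => u y ^ s with hv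
  have hvc : Continuous v := hud.continuous.rpow_const fun x => Or.inr hs0.le
  have hv0 : ∀ x, 0 ≤ v x := fun x => Real.rpow_nonneg (hu0 x) _
  have hvq : Integrable (fun x => v x ^ (2 * (d:ℝ) / ((d:ℝ) + 2))) := by
    refine hX.congr (ae_of_all _ fun x => ?_)
    simp only [hv]
    rw [← Real.rpow_mul (hu0 x)]; congr 1; rw [hs]; field_simp
  have huv : ∀ x, u x * v x = u x ^ (2 * (d:ℝ) / (d - 2)) := fun x => by
    simp only [hv]
    rw [← Real.rpow_one_add' (hu0 x) (by positivity)]; congr 1; rw [hs]; field_simp; ring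
  have hfin := gpot_finite hd hvc.measurable hv0 hvq
  obtain ⟨χ, a, hχc, hχ0, hχ1, hχe, hχs, hat, hai, hale⟩ := cutoff_seq hd hu0 hud hN hX
  have hχcc : ∀ k, Continuous (χ k) := fun k => (hχc k).continuous
  have main : ∀ k, 2 * (l * ∫ x, χ k x ^ (2:ℝ) * u x ^ (2 * (d:ℝ) / (d - 2))) ≤ l ^ 2 * a k + ∫ x, v x * invLap d v x := by
    intro k
    set g : EuclideanSpace ℝ (Fin d) → ℝ := fun y => χ k y * u y with hg
    set w : EuclideanSpace ℝ (Fin d) → ℝ := fun y => χ k y * v y with hw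
    have hgd : Differentiable ℝ g := ((hχc k).differentiable (by norm_num)).mul hud
    have hgi : Integrable g := hgd.continuous.integrable_of_hasCompactSupport ((hχs k).mul_right)
    have hwc : Continuous w := (hχcc k).mul hvc
    have hws : HasCompactSupport w := (hχs k).mul_right
    have hw0 : ∀ x, 0 ≤ w x := fun x => mul_nonneg (hχ0 k x) (hv0 x)
    have hgrad : ∀ x, ‖gradient (fun y => l * g y) x‖ ^ 2 = l ^ 2 * ‖gradient g x‖ ^ 2 := fun x => by
      rw [norm_gradient_eq, norm_gradient_eq, fderiv_const_mul (hgd x), norm_smul, mul_pow, Real.norm_eq_abs, sq_abs]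
    have h := dual_final hd (f := fun y => l * g y) (v := w) (hgd.const_mul l) (hgi.const_mul l)
      (by simp_rw [hgrad]; exact (hai k).const_mul _) hwc hws hw0
    simp_rw [hgrad] at h
    rw [integral_const_mul] at h
    have e1 : ∫ x, l * g x * w x = l * ∫ x, χ k x ^ (2:ℝ) * u x ^ (2 * (d:ℝ) / (d - 2)) := by
      rw [← integral_const_mul]; congr 1; funext x
      simp only [hg, hw]; rw [← huv, Real.rpow_two]; ring
    have hwle : ∀ x, w x ≤ v x := fun x => mul_le_of_le_one_left (hv0 x) (hχ1 k x)
    have hm : ∫⁻ x, gpot w x ≤ ∫⁻ x, gpot v x := lintegral_mono (gpot_mono hwle)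
    have e2 : ∫ x, invLap d w x * w x ≤ ∫ x, v x * invLap d v x := by
      simp_rw [mul_comm (invLap d w _)]
      rw [integral_gpot hd hwc.measurable hw0 (hm.trans_lt hfin), integral_gpot hd hvc.measurable hv0 hfin]
      exact ENNReal.toReal_mono hfin.ne hm
    rw [e1] at h
    have e3 := mul_le_mul_of_nonneg_left (hale k) (sq_nonneg l)
    linarith
  exact le_of_tendsto_of_tendsto' (((cutoff_tendsto hχcc hχ0 hχ1 hχe (by norm_num) hX).const_mul l).const_mul 2)
    ((hat.const_mul (l ^ 2)).add_const _) main

end assemble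

/-- the flow-based improvement of the Hardy-Littlewood-Sobolev inequality
with constant `C = ((d+2)/d)(1 − e^{−d/2})`, extended to all dimensions `d ≥ 3`. -/
theorem flow_improved_hls (d : ℕ) (hd : 3 ≤ d)
    (u : EuclideanSpace ℝ (Fin d) → ℝ) (hu0 : ∀ x, 0 ≤ u x) (hu : MemD12 d u) :
    sobolevConst d *
        lpNorm' (2 * (d : ℝ) / ((d : ℝ) + 2))
          (fun x => u x ^ (((d : ℝ) + 2) / ((d : ℝ) - 2))) ^ (2 : ℝ) -
      (∫ x, u x ^ (((d : ℝ) + 2) / ((d : ℝ) - 2)) *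
        invLap d (fun y => u y ^ (((d : ℝ) + 2) / ((d : ℝ) - 2))) x) ≤
    ((d : ℝ) + 2) / (d : ℝ) * (1 - Real.exp (-(d : ℝ) / 2)) * sobolevConst d *
      (∫ x, (u x ^ (((d : ℝ) + 2) / ((d : ℝ) - 2))) ^ (2 * (d : ℝ) / ((d : ℝ) + 2))) ^
        ((4 : ℝ) / (d : ℝ)) *
      (sobolevConst d * (∫ x, ‖gradient u x‖ ^ 2) -
        lpNorm' (2 * (d : ℝ) / ((d : ℝ) - 2)) u ^ (2 : ℝ)) := by
  obtain ⟨hud, hN, hX'⟩ := hu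
  have hX : Integrable (fun x => u x ^ (2 * (d:ℝ) / (d - 2))) :=
    hX'.congr (ae_of_all _ fun x => by simp only [abs_of_nonneg (hu0 x)])
  have hd' : (3:ℝ) ≤ d := by exact_mod_cast hd
  have hd2 : (0:ℝ) < d - 2 := by linarith
  have hS := sobolevConst_nonneg hd
  have hsob := sobolev_u hd hu0 hud hN hX
  have hdual := dual_u hd hu0 hud hN hX
  have evq : ∀ x, (u x ^ (((d : ℝ) + 2) / ((d : ℝ) - 2))) ^ (2 * (d : ℝ) / ((d : ℝ) + 2)) = u x ^ (2 * (d:ℝ) / (d - 2)) := fun x => by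
    rw [← Real.rpow_mul (hu0 x)]; congr 1; field_simp
  have en1 : lpNorm' (2 * (d : ℝ) / ((d : ℝ) + 2)) (fun x => u x ^ (((d : ℝ) + 2) / ((d : ℝ) - 2))) ^ (2 : ℝ)
      = (∫ x, u x ^ (2 * (d:ℝ) / (d - 2))) ^ (((d:ℝ) + 2) / d) := by
    unfold lpNorm'
    simp_rw [abs_of_nonneg (Real.rpow_nonneg (hu0 _) _), evq]
    rw [← Real.rpow_mul (integral_nonneg fun x => Real.rpow_nonneg (hu0 x) _)]
    congr 1; field_simp
  have en2 : lpNorm' (2 * (d : ℝ) / ((d : ℝ) - 2)) u ^ (2 : ℝ)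
      = (∫ x, u x ^ (2 * (d:ℝ) / (d - 2))) ^ (((d:ℝ) - 2) / d) := by
    unfold lpNorm'
    simp_rw [abs_of_nonneg (hu0 _)]
    rw [← Real.rpow_mul (integral_nonneg fun x => Real.rpow_nonneg (hu0 x) _)]
    congr 1; field_simp
  rw [en1, en2]
  simp_rw [evq]
  set X := ∫ x, u x ^ (2 * (d:ℝ) / (d - 2)) with hXd
  have hX0 : 0 ≤ X := integral_nonneg fun x => Real.rpow_nonneg (hu0 x) _
  set N := ∫ x, ‖gradient u x‖ ^ 2
  set S := sobolevConst d
  set I := ∫ x, u x ^ (((d : ℝ) + 2) / ((d : ℝ) - 2)) * invLap d (fun y => u y ^ (((d : ℝ) + 2) / ((d : ℝ) - 2))) x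
  have h1 := hdual (S * X ^ ((2:ℝ) / d))
  have e1 : X ^ ((2:ℝ) / d) * X = X ^ (((d:ℝ) + 2) / d) := by
    rw [← Real.rpow_add_one' hX0 (by positivity)]; congr 1; field_simp; ring
  have e2 : X ^ ((4:ℝ) / d) * X ^ (((d:ℝ) - 2) / d) = X ^ (((d:ℝ) + 2) / d) := by
    rw [← Real.rpow_add_of_nonneg hX0 (by positivity) (by positivity)]; congr 1; field_simp; ring
  have e3 : (X ^ ((2:ℝ) / d)) ^ 2 = X ^ ((4:ℝ) / d) := by
    rw [← Real.rpow_natCast, ← Real.rpow_mul hX0]; congr 1; push_cast; ring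
  have hP : 0 ≤ S * X ^ ((4:ℝ) / d) * (S * N - X ^ (((d:ℝ) - 2) / d)) :=
    mul_nonneg (mul_nonneg hS (Real.rpow_nonneg hX0 _)) (by linarith)
  have h2 : S * X ^ (((d:ℝ) + 2) / d) - I ≤ S * X ^ ((4:ℝ) / d) * (S * N - X ^ (((d:ℝ) - 2) / d)) := by
    rw [mul_pow, e3, mul_assoc S, e1] at h1
    have : S * X ^ ((4:ℝ) / d) * (S * N - X ^ (((d:ℝ) - 2) / d)) = S ^ 2 * X ^ ((4:ℝ) / d) * N - S * (X ^ ((4:ℝ) / d) * X ^ (((d:ℝ) - 2) / d)) := by ring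
    rw [this, e2]
    linarith
  have hC : 1 ≤ ((d : ℝ) + 2) / (d : ℝ) * (1 - Real.exp (-(d : ℝ) / 2)) := by
    have h3 := Real.add_one_le_exp ((d:ℝ) / 2)
    have h4 : Real.exp (-(d:ℝ) / 2) * Real.exp ((d:ℝ) / 2) = 1 := by rw [← Real.exp_add]; simp [neg_div]
    have h5 := Real.exp_pos (-(d:ℝ) / 2)
    rw [div_mul_eq_mul_div, le_div_iff₀ (by linarith)]
    nlinarith [mul_le_mul_of_nonneg_left h3 h5.le]
  calc _ ≤ _ := h2
    _ ≤ (((d : ℝ) + 2) / (d : ℝ) * (1 - Real.exp (-(d : ℝ) / 2))) * (S * X ^ ((4:ℝ) / d) * (S * N - X ^ (((d:ℝ) - 2) / d))) := le_mul_of_one_le_left hP hC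
    _ = _ := by ring
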